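/- arXiv:math/9207210 — 6 statements merged into one kernel-verified Lean document; each statement's English description precedes it below -/
import Mathlib

section
/- Let k be an algebraically closed field of characteristic 2, let a be a nonzero element of k, and let n, s, t be positive integers with gcd(n,t) = 1, 2 dividing n, t dividing s, and 1 < t < n - 3. Then the polynomial f = Y^n - a·Y^t + X^s over the rational function field k(X) has n distinct roots in a splitting field, and the image of its Galois group in the group of permutations of this set of roots is either the alternating group or the full symmetric group on those n roots. -/
open Polynomial

open scoped Classical

/-! Let `Ω` be an algebraic closure of `k(X)` and let `y` be a root of `Y ^ n - a Y ^ t + T`, where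
`T = X ^ s`. The quotients `r = z / y` by the other roots `z` are the solutions of
`(r ^ n - 1) / (r ^ t - 1) = a / y ^ (n - t)`, so they form a fibre of a rational function of degree
`n - 1` over a transcendental value. Over the value `1` the only ramified point of this function is
`r = 0`, of index `t`, which is prime to the characteristic; so the automorphism `f(X) ↦ f(ζX)` of
the power series in a local parameter permutes a fibre near `1` as a `t`-cycle. The substitution
`r ↦ 1 / r` exchanges `t` and `n - t`, and gives an `(n - t)`-cycle in the same way. A transitive
group on `n - 1` points containing cycles of coprime lengths `t` and `n - t` contains the
alternating group.

Any two elements of `Ω` transcendental over `k` are conjugate under `Gal(Ω/k)`, because `Ω` has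
transcendence degree one; this gives transitivity, and lets every monodromy computation take place
over `k((X))`. Fixing `y` rather than `y ^ (n - t)`, or `X` rather than `X ^ s`, only costs an
abelian quotient, which does not matter because the alternating group on at least five points is
perfect. -/

section PermutationGroups

open MulAction
open scoped Pointwise commutatorElement

variable {G H α β : Type*} [Group G] [Group H] [MulAction G α] [MulAction H β]

/-- The element `c` acts on `α` as a cycle with support `S`. When `S` has at most one element this
says that `c` acts trivially. -/
structure ActsAsCycleOn (c : G) (S : Set α) : Prop where
  smul_eq_of_notMem : ∀ x ∉ S, c • x = x
  exists_zpow_smul_eq : ∀ x ∈ S, ∀ y ∈ S, ∃ i : ℤ, c ^ i • x = y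

namespace ActsAsCycleOn

variable {c : G} {S : Set α}

theorem mem_stabilizer (hc : ActsAsCycleOn c S) : c ∈ stabilizer G S := by
  have fixes_compl (x : α) (hx : x ∈ Sᶜ) : c • x = x := hc.smul_eq_of_notMem x hx
  rw [← stabilizer_compl, mem_stabilizer_iff]
  exact (Set.image_congr fixes_compl).trans (Set.image_id' _)

theorem smul_ne_self (hc : ActsAsCycleOn c S) (hS : S.Nontrivial) {x : α} (hx : x ∈ S) :
    c • x ≠ x := by
  intro hfix
  obtain ⟨y, hy, hyx⟩ := hS.exists_ne x
  obtain ⟨i, rfl⟩ := hc.exists_zpow_smul_eq x hx y hy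
  exact hyx (zpow_mem (K := stabilizer G x) hfix i)

theorem exists_preimage {e : β → α} (he : Function.Injective e) (hSe : S ⊆ Set.range e) {d : H}
    (hde : ∀ x, e (d • x) = c • e x) (hc : ActsAsCycleOn c S) :
    ∃ S' : Set β, ActsAsCycleOn d S' ∧ S'.ncard = S.ncard := by
  have hzpow (i : ℤ) (x : β) : e (d ^ i • x) = c ^ i • e x := by
    induction i with
    | zero => rw [zpow_zero, zpow_zero, one_smul, one_smul]
    | succ i ih =>
      rw [add_comm, zpow_add, zpow_add, zpow_one, zpow_one, mul_smul, mul_smul, hde, ih]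
    | pred i ih =>
      rw [sub_eq_neg_add, zpow_add, zpow_add, zpow_neg_one, zpow_neg_one, mul_smul, mul_smul,
        ← ih, eq_inv_smul_iff, ← hde, smul_inv_smul]
  refine ⟨e ⁻¹' S, ⟨fun x hx => he ?_, fun x hx y hy => ?_⟩,
    Set.ncard_preimage_of_injective_subset_range he hSe⟩
  · rw [hde, hc.smul_eq_of_notMem _ hx]
  · obtain ⟨i, hi⟩ := hc.exists_zpow_smul_eq _ hx _ hy
    exact ⟨i, he ((hzpow i x).trans hi)⟩

theorem conj (hc : ActsAsCycleOn c S) (g : G) : ActsAsCycleOn (g * c * g⁻¹) (g • S) where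
  smul_eq_of_notMem x hx := by
    rw [Set.mem_smul_set_iff_inv_smul_mem] at hx
    rw [mul_smul, mul_smul, hc.smul_eq_of_notMem _ hx, smul_inv_smul]
  exists_zpow_smul_eq x hx y hy := by
    rw [Set.mem_smul_set_iff_inv_smul_mem] at hx hy
    obtain ⟨i, hi⟩ := hc.exists_zpow_smul_eq _ hx _ hy
    exact ⟨i, by rw [conj_zpow, mul_smul, mul_smul, hi, smul_inv_smul]⟩

/-- The support of a cycle, on which the powers of the cycle act. -/
def support (hc : ActsAsCycleOn c S) : SubMulAction (Subgroup.zpowers c) α where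
  carrier := S
  smul_mem' := fun g _ hx =>
    (mem_stabilizer_set.mp (Subgroup.zpowers_le.mpr hc.mem_stabilizer g.2) _).mpr hx

instance (hc : ActsAsCycleOn c S) : IsPretransitive (Subgroup.zpowers c) hc.support where
  exists_smul_eq x y := by
    obtain ⟨i, hi⟩ := hc.exists_zpow_smul_eq x x.2 y y.2
    exact ⟨⟨c ^ i, i, rfl⟩, Subtype.ext hi⟩

variable {B : Set α}

theorem subset_of_mem_block (hc : ActsAsCycleOn c S) {x : α} (hx : x ∈ S) (hxB : x ∈ B)
    (hcB : c • B = B) : S ⊆ B := by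
  intro y hy
  obtain ⟨i, rfl⟩ := hc.exists_zpow_smul_eq x hx y hy
  exact (mem_stabilizer_set.mp (zpow_mem (K := stabilizer G B) hcB i) x).mpr hxB

theorem ncard_dvd_of_disjoint (hc : ActsAsCycleOn c S) (hB : IsBlock G B)
    (hBne : B.Nonempty) (hcB : Disjoint (c • B) B) : B.ncard ∣ S.ncard := by
  have hBS : B ⊆ S := by
    intro y hy
    by_contra hyS
    exact hcB.notMem_of_mem_right hy ⟨y, hy, hc.smul_eq_of_notMem y hyS⟩
  have hblock : IsBlock (Subgroup.zpowers c) (Subtype.val ⁻¹' B : Set hc.support) :=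
    hB.subgroup.subtype_val_preimage
  have hcard : (Subtype.val ⁻¹' B : Set hc.support).ncard = B.ncard :=
    Set.ncard_preimage_of_injective_subset_range Subtype.val_injective
      (by rw [Subtype.range_coe]; exact hBS)
  obtain ⟨b, hb⟩ := hBne
  exact hcard ▸ hblock.ncard_dvd_card ⟨⟨b, hBS hb⟩, hb⟩

theorem ncard_le_or_dvd [Finite α] [IsPretransitive G α] (hc : ActsAsCycleOn c S)
    (hS : S.Nonempty) (hB : IsBlock G B) (hBne : B.Nonempty) :
    S.ncard ≤ B.ncard ∨ B.ncard ∣ S.ncard := by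
  obtain ⟨x, hx⟩ := hS
  obtain ⟨b, hb⟩ := hBne
  obtain ⟨g, rfl⟩ := exists_smul_eq G b x
  have hgb : g • b ∈ g • B := Set.smul_mem_smul_set hb
  rw [← Set.ncard_smul_set g B]
  refine ((hB.translate g).smul_eq_or_disjoint c).imp (fun h => ?_) fun h => ?_
  · exact Set.ncard_le_ncard (hc.subset_of_mem_block hx hgb h)
  · exact hc.ncard_dvd_of_disjoint (hB.translate g) ⟨_, hgb⟩ h

end ActsAsCycleOn

variable {c d : G} {S T : Set α}

theorem isPreprimitive_of_coprime_cycles [Finite α] [IsPretransitive G α]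
    (hc : ActsAsCycleOn c S) (hd : ActsAsCycleOn d T) (hco : S.ncard.Coprime T.ncard)
    (hS : 1 < S.ncard) (hST : S.ncard < T.ncard) (hT : T.ncard < Nat.card α)
    (hcover : Nat.card α < S.ncard + T.ncard) : IsPreprimitive G α where
  isTrivialBlock_of_isBlock {B} hB := by
    rcases B.eq_empty_or_nonempty with rfl | hBne
    · exact .inl Set.subsingleton_empty
    have hBdvd := hB.ncard_dvd_card hBne
    rcases hc.ncard_le_or_dvd (Set.nonempty_of_ncard_ne_zero (by omega)) hB hBne with hSB | hBS <;>
    rcases hd.ncard_le_or_dvd (Set.nonempty_of_ncard_ne_zero (by omega)) hB hBne with hTB | hBT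
    · right
      rw [Set.eq_univ_iff_ncard]
      obtain ⟨m, hm⟩ := hBdvd
      have : m < 2 := by by_contra! hm2; nlinarith
      interval_cases m <;> omega
    · have := Nat.le_of_dvd (by omega) (Nat.dvd_sub hBdvd hBT)
      omega
    · have := Nat.le_of_dvd (by omega) hBS
      omega
    · left
      rw [← Set.ncard_le_one_iff_subsingleton, Nat.eq_one_of_dvd_coprimes hco hBS hBT]

theorem ActsAsCycleOn.isPretransitive_ofFixingSubgroup (hd : ActsAsCycleOn d T) :
    IsPretransitive (fixingSubgroup G Tᶜ) (SubMulAction.ofFixingSubgroup G Tᶜ) where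
  exists_smul_eq := by
    rintro ⟨x, hx⟩ ⟨y, hy⟩
    rw [SubMulAction.mem_ofFixingSubgroup_iff, Set.notMem_compl_iff] at hx hy
    obtain ⟨j, hj⟩ := hd.exists_zpow_smul_eq x hx y hy
    have hd_mem : d ∈ fixingSubgroup G Tᶜ := (mem_fixingSubgroup_iff G).mpr hd.smul_eq_of_notMem
    exact ⟨⟨d ^ j, zpow_mem hd_mem j⟩, Subtype.ext hj⟩

theorem ActsAsCycleOn.exists_ofStabilizer (hc : ActsAsCycleOn c S) {a : α} (ha : a ∉ S) :
    ∃ (c' : stabilizer G a) (S' : Set (SubMulAction.ofStabilizer G a)),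
      ActsAsCycleOn c' S' ∧ S'.ncard = S.ncard := by
  refine ⟨⟨c, hc.smul_eq_of_notMem a ha⟩,
    exists_preimage (c := c) Subtype.val_injective (fun x hx => ⟨⟨x, ?_⟩, rfl⟩) (fun _ => rfl) hc⟩
  exact fun h => ha (Set.mem_singleton_iff.mp h ▸ hx)

theorem isMultiplyPretransitive_of_coprime_cycles {m : ℕ} [Finite α] [IsPretransitive G α]
    (hc : ActsAsCycleOn c S) (hd : ActsAsCycleOn d T) (hco : S.ncard.Coprime T.ncard)
    (hS : 1 < S.ncard) (hST : S.ncard < T.ncard) (hT : T.ncard + m ≤ Nat.card α)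
    (hcover : Nat.card α < S.ncard + T.ncard) : IsMultiplyPretransitive G α (m + 1) := by
  induction m generalizing G α with
  | zero => rwa [zero_add, is_one_pretransitive_iff]
  | succ m ih =>
    have hprim := isPreprimitive_of_coprime_cycles hc hd hco hS hST (by omega) hcover
    have hTcompl := Set.ncard_add_ncard_compl T
    have htwo : IsMultiplyPretransitive G α 2 :=
      hprim.is_two_pretransitive (s := Tᶜ) (n := Tᶜ.ncard - 1) (by omega) (by omega)
        hd.isPretransitive_ofFixingSubgroup
    obtain ⟨a, ha⟩ : Tᶜ.Nonempty := Set.nonempty_of_ncard_ne_zero (by omega)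
    obtain ⟨b, hb⟩ : Sᶜ.Nonempty :=
      Set.nonempty_of_ncard_ne_zero (by have := Set.ncard_add_ncard_compl S; omega)
    obtain ⟨g, rfl⟩ := exists_smul_eq G b a
    obtain ⟨c', S', hc', hS'⟩ := (hc.conj g).exists_ofStabilizer
      (mt Set.smul_mem_smul_set_iff.mp hb)
    obtain ⟨d', T', hd', hT'⟩ := hd.exists_ofStabilizer ha
    rw [Set.ncard_smul_set] at hS'
    have hcard := SubMulAction.nat_card_ofStabilizer_add_one_eq G (g • b)
    have : IsPretransitive (stabilizer G (g • b)) (SubMulAction.ofStabilizer G (g • b)) :=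
      is_one_pretransitive_iff.mp <|
        (SubMulAction.ofStabilizer.isMultiplyPretransitive (n := 1)).mp htwo
    exact (SubMulAction.ofStabilizer.isMultiplyPretransitive (n := m + 1)).mpr
      (ih hc' hd' (by rwa [hS', hT']) (by omega) (by omega) (by omega) (by omega))

theorem exists_smul_set_eq [Finite α] (hG : IsMultiplyPretransitive G α S.ncard)
    (hST : S.ncard = T.ncard) : ∃ g : G, g • S = T := by
  have := Set.powersetCard.isPretransitive_of_isMultiplyPretransitive G hG
  let S' : Set.powersetCard α S.ncard :=
    ⟨S.toFinite.toFinset, (Set.ncard_eq_toFinset_card S).symm⟩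
  let T' : Set.powersetCard α S.ncard :=
    ⟨T.toFinite.toFinset, (Set.ncard_eq_toFinset_card T).symm.trans hST.symm⟩
  obtain ⟨g, hg⟩ := exists_smul_eq G S' T'
  refine ⟨g, ?_⟩
  have hg' : g • S.toFinite.toFinset = T.toFinite.toFinset := congrArg Subtype.val hg
  simpa using congrArg (SetLike.coe : Finset α → Set α) hg'

theorem isThreeCycle_commutator {α : Type*} [Fintype α] [DecidableEq α] {σ τ : Equiv.Perm α} {x : α}
    (hσ : σ x ≠ x) (hτ : τ x ≠ x) (hx : ∀ y ≠ x, σ y = y ∨ τ y = y) : ⁅σ, τ⁆.IsThreeCycle := by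
  have hσ_inj (u v : α) : σ u = σ v → u = v := fun h => σ.injective h
  have hτ_inj (u v : α) : τ u = τ v → u = v := fun h => τ.injective h
  have hσx : τ (σ x) = σ x := by grind
  have hτx : σ (τ x) = τ x := by grind
  have hστ : τ x ≠ σ x := by grind
  have h_mul : σ * τ = Equiv.swap x (τ x) * Equiv.swap x (σ x) * (τ * σ) := by
    ext z
    simp only [Equiv.Perm.mul_apply]
    rcases eq_or_ne z x with rfl | hz
    · rw [hσx, hτx, Equiv.swap_apply_right, Equiv.swap_apply_left]
    by_cases hσz : σ z = x
    · rw [hσz, Equiv.swap_apply_of_ne_of_ne hτ hστ, Equiv.swap_apply_right]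
      grind
    by_cases hτz : τ z = x
    · rw [show σ z = z by grind, hτz, Equiv.swap_apply_left,
        Equiv.swap_apply_of_ne_of_ne hσ hστ.symm]
    · rw [show τ (σ z) = σ (τ z) by grind, Equiv.swap_apply_of_ne_of_ne (b := σ x),
        Equiv.swap_apply_of_ne_of_ne]
      all_goals grind
  rw [← mul_inv_eq_iff_eq_mul, mul_inv_rev, ← mul_assoc, ← commutatorElement_def] at h_mul
  rw [h_mul]
  exact Equiv.Perm.isThreeCycle_swap_mul_swap_same hτ.symm hσ.symm hστ

theorem isMultiplyPretransitive_of_equiv {m : ℕ} (e : α ≃ β)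
    (he : ∀ g : G, ∃ h : H, ∀ x, e (g • x) = h • e x) (hG : IsMultiplyPretransitive G α m) :
    IsMultiplyPretransitive H β m := by
  refine isMultiplyPretransitive_iff.mpr fun {x y} => ?_
  obtain ⟨g, hg⟩ := isMultiplyPretransitive_iff.mp hG
    (x.trans e.symm.toEmbedding) (y.trans e.symm.toEmbedding)
  obtain ⟨h, hh⟩ := he g
  refine ⟨h, DFunLike.ext _ _ fun i => ?_⟩
  have := DFunLike.congr_fun hg i
  calc h • x i = h • e (e.symm (x i)) := by rw [e.apply_symm_apply]
    _ = e (g • e.symm (x i)) := (hh _).symm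
    _ = y i := e.symm_apply_eq.mp this.symm ▸ by rfl

theorem isMultiplyPretransitive_iff_alternatingGroup_le [Fintype α] [DecidableEq α] :
    IsMultiplyPretransitive G α (Nat.card α - 2) ↔ alternatingGroup α ≤ (toPermHom G α).range := by
  constructor
  · intro hG
    refine IsMultiplyPretransitive.alternatingGroup_le (α := α) _ ?_
    exact isMultiplyPretransitive_of_equiv (.refl α) (fun g => ⟨⟨_, g, rfl⟩, fun _ => rfl⟩) hG
  · intro hle
    refine isMultiplyPretransitive_of_equiv (.refl α) (fun g => ?_)
      (alternatingGroup.isMultiplyPretransitive α)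
    obtain ⟨h, hh⟩ := hle g.2
    exact ⟨h, fun x => (DFunLike.congr_fun hh x).symm⟩

theorem isMultiplyPretransitive_of_commutator_le [Finite α] (hα : 5 ≤ Nat.card α) {N : Subgroup G}
    (hN : commutator G ≤ N) (hG : IsMultiplyPretransitive G α (Nat.card α - 2)) :
    IsMultiplyPretransitive N α (Nat.card α - 2) := by
  have := Fintype.ofFinite α
  rw [isMultiplyPretransitive_iff_alternatingGroup_le] at hG ⊢
  calc alternatingGroup α = ⁅alternatingGroup α, alternatingGroup α⁆ :=
        (commutator_alternatingGroup_eq_self hα).symm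
    _ ≤ ⁅(toPermHom G α).range, (toPermHom G α).range⁆ := Subgroup.commutator_mono hG hG
    _ = (commutator G).map (toPermHom G α) := by
        rw [MonoidHom.range_eq_map, ← Subgroup.map_commutator, commutator_def]
    _ ≤ N.map (toPermHom G α) := Subgroup.map_mono hN
    _ = (toPermHom N α).range := by
        change _ = ((toPermHom G α).comp N.subtype).range
        rw [MonoidHom.range_comp, N.range_subtype]

/-- Move `S` so that it meets `T` in a single point; then the commutator of the two cycles is a
three-cycle. -/
theorem exists_isThreeCycle_of_coprime_cycles [Fintype α] [DecidableEq α]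
    (hc : ActsAsCycleOn c S) (hd : ActsAsCycleOn d T)
    (hS : 1 < S.ncard) (hT : 1 < T.ncard) (hcover : S.ncard + T.ncard = Nat.card α + 1)
    (hG : IsMultiplyPretransitive G α S.ncard) :
    ∃ σ ∈ (toPermHom G α).range, σ.IsThreeCycle := by
  obtain ⟨x, hx⟩ : T.Nonempty := Set.nonempty_of_ncard_ne_zero (by omega)
  have hcard : S.ncard = (insert x Tᶜ).ncard := by
    rw [Set.ncard_insert_of_notMem (by simpa using hx)]
    have := Set.ncard_add_ncard_compl T
    omega
  obtain ⟨g, hg⟩ := exists_smul_set_eq hG hcard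
  have hc' : ActsAsCycleOn (g * c * g⁻¹) (insert x Tᶜ) := hg ▸ hc.conj g
  rw [hcard] at hS
  refine ⟨⁅toPermHom G α (g * c * g⁻¹), toPermHom G α d⁆,
    ⟨⁅g * c * g⁻¹, d⁆, map_commutatorElement _ _ _⟩,
    isThreeCycle_commutator (x := x) ?_ ?_ fun y hy => ?_⟩
  · exact hc'.smul_ne_self (Set.one_lt_ncard_iff_nontrivial.mp hS) (Set.mem_insert _ _)
  · exact hd.smul_ne_self (Set.one_lt_ncard_iff_nontrivial.mp hT) hx
  · by_cases hyT : y ∈ T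
    · exact .inl (hc'.smul_eq_of_notMem y (by simp [hy, hyT]))
    · exact .inr (hd.smul_eq_of_notMem y hyT)

theorem isMultiplyPretransitive_card_sub_two_of_coprime_cycles [Finite α] [IsPretransitive G α]
    (hc : ActsAsCycleOn c S) (hd : ActsAsCycleOn d T) (hco : S.ncard.Coprime T.ncard)
    (hS : 1 < S.ncard) (hT : 1 < T.ncard) (hcover : S.ncard + T.ncard = Nat.card α + 1) :
    IsMultiplyPretransitive G α (Nat.card α - 2) := by
  wlog hST : S.ncard < T.ncard generalizing c d S T
  · refine this hd hc hco.symm hT hS (by omega) (lt_of_le_of_ne (not_lt.mp hST) fun h => ?_)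
    rw [h, Nat.coprime_self] at hco
    omega
  have := Fintype.ofFinite α
  have hprim := isPreprimitive_of_coprime_cycles hc hd hco hS hST (by omega) (by omega)
  have htrans := isMultiplyPretransitive_of_coprime_cycles (m := S.ncard - 1) hc hd hco hS hST
    (by omega) (by omega)
  rw [Nat.sub_add_cancel hS.le] at htrans
  obtain ⟨σ, hσ, hσ3⟩ := exists_isThreeCycle_of_coprime_cycles hc hd hS hT hcover htrans
  rw [isMultiplyPretransitive_iff_alternatingGroup_le]
  have : IsPreprimitive (toPermHom G α).range α :=
    .of_surjective (φ := (toPermHom G α).rangeRestrict) (f := ⟨id, fun _ _ => rfl⟩)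
      Function.surjective_id
  exact Equiv.Perm.alternatingGroup_le_of_isPreprimitive_of_isThreeCycle_mem this hσ3 hσ

theorem eq_alternatingGroup_or_eq_top [Fintype α] [DecidableEq α] {K : Subgroup (Equiv.Perm α)}
    (hK : alternatingGroup α ≤ K) : K = alternatingGroup α ∨ K = ⊤ := by
  have hdvd := Subgroup.index_dvd_of_le hK
  cases subsingleton_or_nontrivial α
  · right
    exact Subgroup.index_eq_one.mp (Nat.dvd_one.mp (alternatingGroup.index_eq_one (α := α) ▸ hdvd))
  · rw [alternatingGroup.index_eq_two, Nat.dvd_prime Nat.prime_two] at hdvd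
    exact hdvd.symm.imp Equiv.Perm.eq_alternatingGroup_of_index_eq_two Subgroup.index_eq_one.mp

end PermutationGroups

section Orbits

open MulAction

variable {G α β : Type*} [Group G] [MulAction G α] [MulAction G β]

theorem disjoint_orbit_zpowers_fixedBy {c : G} {x : α} (hx : c • x ≠ x) :
    Disjoint (orbit (Subgroup.zpowers c) x) (fixedBy α c) := by
  refine Set.disjoint_left.mpr ?_
  rintro _ ⟨⟨_, i, rfl⟩, rfl⟩ hfix
  refine hx (smul_left_cancel (c ^ i) ?_)
  rw [← mul_smul, (Commute.refl c).zpow_left i, mul_smul]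
  exact hfix

theorem ncard_orbit_zpowers [Finite α] (c : G) (x : α) :
    (orbit (Subgroup.zpowers c) x).ncard = Function.minimalPeriod (c • ·) x := by
  have := Fintype.ofFinite α
  rw [minimalPeriod_eq_card, ← Nat.card_eq_fintype_card, Nat.card_coe_set_eq]

theorem minimalPeriod_add_ncard_fixedBy_le [Finite α] {c : G} {x : α} (hx : c • x ≠ x) :
    Function.minimalPeriod (c • ·) x + (fixedBy α c).ncard ≤ Nat.card α := by
  rw [← ncard_orbit_zpowers, ← Set.ncard_union_eq (disjoint_orbit_zpowers_fixedBy hx)]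
  exact Set.ncard_le_card _

theorem actsAsCycleOn_orbit_zpowers [Finite α] {c : G} {x : α} (hx : c • x ≠ x)
    (hcard : Nat.card α ≤ Function.minimalPeriod (c • ·) x + (fixedBy α c).ncard) :
    ActsAsCycleOn c (orbit (Subgroup.zpowers c) x) where
  smul_eq_of_notMem y hy := by
    have hunion : orbit (Subgroup.zpowers c) x ∪ fixedBy α c = Set.univ := by
      rw [Set.eq_univ_iff_ncard, Set.ncard_union_eq (disjoint_orbit_zpowers_fixedBy hx),
        ncard_orbit_zpowers]
      exact (minimalPeriod_add_ncard_fixedBy_le hx).antisymm hcard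
    exact (hunion.ge (Set.mem_univ y)).resolve_left hy
  exists_zpow_smul_eq := by
    rintro _ ⟨⟨_, i, rfl⟩, rfl⟩ _ ⟨⟨_, j, rfl⟩, rfl⟩
    refine ⟨j - i, ?_⟩
    calc c ^ (j - i) • c ^ i • x = c ^ j • x := by rw [← mul_smul, ← zpow_add, sub_add_cancel]

/-- The fibre of an equivariant map over a point, acted on by the stabilizer of that point. -/
def equivariantFiber (φ : α →[G] β) (b : β) : SubMulAction (stabilizer G b) α where
  carrier := φ ⁻¹' {b}
  smul_mem' g x hx := by
    rw [Set.mem_preimage, Set.mem_singleton_iff] at hx ⊢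
    rw [Subgroup.smul_def, map_smul, hx]
    exact g.2

theorem mem_equivariantFiber {φ : α →[G] β} {b : β} {x : α} :
    x ∈ equivariantFiber φ b ↔ φ x = b := Iff.rfl

theorem isPretransitive_equivariantFiber (φ : α →[G] β) (b : β)
    (h : ∀ x y, φ x = b → φ y = b → y ∈ orbit G x) :
    IsPretransitive (stabilizer G b) (equivariantFiber φ b) where
  exists_smul_eq x y := by
    obtain ⟨g, hg⟩ := h x y x.2 y.2
    have hx : φ x = b := x.2
    have hy : φ y = b := y.2
    have hgb : g • b = b := by
      rw [← hx, ← map_smul]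
      exact (congrArg φ hg).trans (hy.trans hx.symm)
    exact ⟨⟨g, hgb⟩, Subtype.ext hg⟩

end Orbits

section PowSubOneRatio

open MulAction

variable {K : Type*} [Field K]

/-- The trinomial `Y ^ n - w * Y ^ t + (w - 1)`, which has the root `1`. -/
noncomputable def unitRootTrinomial (n t : ℕ) (w : K) : K[X] :=
  trinomial 0 t n (w - 1) (-w) 1

theorem aeval_unitRootTrinomial {L : Type*} [Field L] [Algebra K L] (n t : ℕ) (w : K) (r : L) :
    aeval r (unitRootTrinomial n t w) =
      r ^ n - algebraMap K L w * r ^ t + (algebraMap K L w - 1) := by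
  simp only [unitRootTrinomial, trinomial_def, map_add, map_mul, map_pow, aeval_X, aeval_C, map_sub,
    map_neg, map_one]
  ring

theorem monic_unitRootTrinomial {n t : ℕ} (ht : 0 < t) (htn : t < n) (w : K) :
    (unitRootTrinomial n t w).Monic :=
  trinomial_monic ht htn

theorem natDegree_unitRootTrinomial {n t : ℕ} (ht : 0 < t) (htn : t < n) (w : K) :
    (unitRootTrinomial n t w).natDegree = n :=
  trinomial_natDegree ht htn one_ne_zero

/-- The rational function `r ↦ (r ^ n - 1) / (r ^ t - 1)`, as an equivariant map for the
automorphisms of a field. Division by zero makes it vanish at the `t`-th roots of unity. -/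
def powSubOneRatio (G : Type*) [Group G] [MulSemiringAction G K] (n t : ℕ) : K →[G] K where
  toFun r := (r ^ n - 1) / (r ^ t - 1)
  map_smul' g r := by simp only [smul_div₀', smul_sub, smul_pow', smul_one, id_eq]

variable {G : Type*} [Group G] [MulSemiringAction G K] {n t : ℕ} {w : K}

theorem powSubOneRatio_apply (r : K) : powSubOneRatio G n t r = (r ^ n - 1) / (r ^ t - 1) := rfl

variable (G n t w) in
/-- The fibre over `w` of the rational function `r ↦ (r ^ n - 1) / (r ^ t - 1)`. -/
abbrev ratioFiber : SubMulAction (stabilizer G w) K := equivariantFiber (powSubOneRatio G n t) w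

theorem mem_ratioFiber (hco : n.Coprime t) (hw : w ≠ 0) {r : K} :
    r ∈ ratioFiber G n t w ↔ r ≠ 1 ∧ r ^ n - w * r ^ t + (w - 1) = 0 := by
  rw [mem_equivariantFiber, powSubOneRatio_apply]
  constructor
  · intro h
    have hden : r ^ t - 1 ≠ 0 := by
      intro h0
      rw [h0, div_zero] at h
      exact hw h.symm
    refine ⟨fun h1 => hden (by rw [h1, one_pow, sub_self]), ?_⟩
    rw [div_eq_iff hden] at h
    linear_combination h
  · rintro ⟨h1, h⟩
    have hden : r ^ t - 1 ≠ 0 := by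
      intro h0
      have hrt : r ^ t = 1 := sub_eq_zero.mp h0
      have hrn : r ^ n = 1 := by linear_combination h + w * hrt
      have horder := Nat.dvd_gcd (orderOf_dvd_of_pow_eq_one hrn) (orderOf_dvd_of_pow_eq_one hrt)
      rw [hco.gcd_eq_one, Nat.dvd_one, orderOf_eq_one_iff] at horder
      exact h1 horder
    rw [div_eq_iff hden]
    linear_combination h

theorem ratioFiber_eq (hco : n.Coprime t) (ht : 0 < t) (htn : t < n) (hw : w ≠ 0) :
    (ratioFiber G n t w : Set K) = (unitRootTrinomial n t w).rootSet K \ {1} := by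
  ext r
  rw [SetLike.mem_coe, mem_ratioFiber hco hw, Set.mem_sdiff, Set.mem_singleton_iff,
    mem_rootSet_of_ne (monic_unitRootTrinomial ht htn w).ne_zero, aeval_unitRootTrinomial, and_comm]
  rfl

theorem finite_ratioFiber (hco : n.Coprime t) (ht : 0 < t) (htn : t < n) (hw : w ≠ 0) :
    Finite (ratioFiber G n t w) := by
  change Finite (ratioFiber G n t w : Set K)
  rw [ratioFiber_eq hco ht htn hw]
  exact ((rootSet_finite _ K).subset Set.sdiff_subset).to_subtype

theorem card_ratioFiber_lt (hco : n.Coprime t) (ht : 0 < t) (htn : t < n) (hw : w ≠ 0) :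
    Nat.card (ratioFiber G n t w) < n := by
  have hone : (1 : K) ∈ (unitRootTrinomial n t w).rootSet K := by
    rw [mem_rootSet_of_ne (monic_unitRootTrinomial ht htn w).ne_zero, aeval_unitRootTrinomial]
    simp
  calc Nat.card (ratioFiber G n t w)
      = ((unitRootTrinomial n t w).rootSet K \ {1}).ncard := by
        rw [← ratioFiber_eq (G := G) hco ht htn hw]; rfl
    _ < ((unitRootTrinomial n t w).rootSet K).ncard :=
        Set.ncard_sdiff_singleton_lt_of_mem hone (rootSet_finite _ K)
    _ ≤ (unitRootTrinomial n t w).natDegree := ncard_rootSet_le _ K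
    _ = n := natDegree_unitRootTrinomial ht htn w

theorem inv_mem_ratioFiber (ht : 0 < t) (htn : t ≤ n) (hw : w ≠ 0) (hw1 : w ≠ 1) {r : K}
    (hr : r ∈ ratioFiber G n t w) : r⁻¹ ∈ ratioFiber G n (n - t) (w / (w - 1)) := by
  rw [mem_equivariantFiber, powSubOneRatio_apply] at hr ⊢
  have hr0 : r ≠ 0 := by
    rintro rfl
    rw [zero_pow ht.ne', zero_pow (ht.trans_le htn).ne', zero_sub, neg_div_neg_eq, div_one] at hr
    exact hw1 hr.symm
  have hden : r ^ t - 1 ≠ 0 := fun h => hw (by rw [← hr, h, div_zero])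
  have hw' : w - 1 = (r ^ n - r ^ t) / (r ^ t - 1) := by
    rw [← hr, div_sub_one hden, sub_sub_sub_cancel_right]
  have hinv : r⁻¹ ^ (n - t) = r ^ t / r ^ n := by
    rw [inv_pow, pow_sub₀ r hr0 htn, mul_inv, inv_inv, mul_comm, div_eq_mul_inv]
  rw [hw', ← hr, hinv, div_div_div_cancel_right₀ hden, inv_pow, div_sub_one (pow_ne_zero n hr0),
    inv_eq_one_div, div_sub_one (pow_ne_zero n hr0), div_div_div_cancel_right₀ (pow_ne_zero n hr0),
    ← neg_div_neg_eq, neg_sub, neg_sub]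

end PowSubOneRatio

section LocalMonodromy

open MulAction
open scoped PowerSeries

variable {k : Type*} [Field k]

theorem exists_powerSeries_root {p : k⟦X⟧[X]} (hp : p.Monic) {v : k}
    (hroot : (p.map PowerSeries.constantCoeff).eval v = 0)
    (hsimple : (p.map PowerSeries.constantCoeff).derivative.eval v ≠ 0) :
    ∃ U : k⟦X⟧, p.eval U = 0 ∧ U.constantCoeff = v := by
  have hcoeff (q : k⟦X⟧[X]) :
      (q.eval (PowerSeries.C v)).constantCoeff = (q.map PowerSeries.constantCoeff).eval v := by
    conv_rhs => rw [← PowerSeries.constantCoeff_C v]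
    rw [eval_map_apply]
  obtain ⟨U, hU, hUv⟩ := HenselianRing.is_henselian (I := Ideal.span {(PowerSeries.X : k⟦X⟧)})
    p hp (PowerSeries.C v)
    (by rw [Ideal.mem_span_singleton, PowerSeries.X_dvd_iff, hcoeff, hroot])
    (IsUnit.map _ <| by
      rwa [PowerSeries.isUnit_iff_constantCoeff, isUnit_iff_ne_zero, hcoeff, ← derivative_map])
  rw [Ideal.mem_span_singleton, PowerSeries.X_dvd_iff, map_sub, PowerSeries.constantCoeff_C,
    sub_eq_zero] at hUv
  exact ⟨U, hU, hUv⟩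

theorem exists_powerSeries_root_trinomial {n t : ℕ} (ht : 0 < t) (htn : t < n) (hnt : (n : k) ≠ t)
    {b c : k⟦X⟧} (hb : b.constantCoeff = 1) (hc : c.constantCoeff = 0) {v : k}
    (hv : v ^ (n - t) = 1) : ∃ U : k⟦X⟧, U ^ n - b * U ^ t + c = 0 ∧ U.constantCoeff = v := by
  have hv0 : v ≠ 0 := by
    rintro rfl
    exact zero_ne_one (hv ▸ (zero_pow (Nat.sub_pos_of_lt htn).ne').symm)
  have hvn : v ^ n = v ^ t := by rw [← Nat.sub_add_cancel htn.le, pow_add, hv, one_mul]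
  have hvn' : v ^ (n - 1) = v ^ (t - 1) := by
    rw [← Nat.sub_add_cancel (Nat.sub_le_sub_right htn.le 1), pow_add,
      Nat.sub_sub_sub_cancel_right ht, hv, one_mul]
  have hmap : (trinomial 0 t n c (-b) 1).map PowerSeries.constantCoeff = X ^ n - X ^ t := by
    simp only [trinomial_def, Polynomial.map_add, Polynomial.map_mul, Polynomial.map_pow, map_C,
      map_X, _root_.map_neg, Polynomial.map_neg, Polynomial.map_one, hb, hc, C_0, C_1]
    ring
  obtain ⟨U, hU, hUv⟩ := exists_powerSeries_root (p := trinomial 0 t n c (-b) 1) (v := v)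
    (trinomial_monic ht htn) (by simp [hmap, hvn]) (by
      rw [hmap]
      simp only [derivative_sub, derivative_X_pow, eval_sub, eval_mul, eval_C, eval_pow, eval_X,
        hvn', ← sub_mul]
      exact mul_ne_zero (sub_ne_zero.mpr hnt) (pow_ne_zero _ hv0))
  refine ⟨U, ?_, hUv⟩
  simp only [trinomial_def, eval_add, eval_mul, eval_C, eval_pow, eval_X] at hU
  linear_combination hU

theorem rescale_C (z c : k) : PowerSeries.rescale z (PowerSeries.C c) = PowerSeries.C c := by
  ext m
  rw [PowerSeries.coeff_rescale, PowerSeries.coeff_C]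
  split_ifs with hm
  · rw [hm, pow_zero, one_mul]
  · rw [mul_zero]

/-- The automorphism `f(X) ↦ f(zX)` of the fraction field of `k⟦X⟧`. -/
noncomputable def rescaleFractionRing (z : kˣ) :
    FractionRing k⟦X⟧ ≃ₐ[k] FractionRing k⟦X⟧ :=
  IsFractionRing.algEquivOfAlgEquiv (A := k⟦X⟧) (B := k⟦X⟧)
    { __ := PowerSeries.rescale (z : k)
      invFun := PowerSeries.rescale ↑z⁻¹
      left_inv := fun f => by
        change PowerSeries.rescale _ (PowerSeries.rescale _ f) = f
        rw [PowerSeries.rescale_rescale, Units.mul_inv, PowerSeries.rescale_one, RingHom.id_apply]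
      right_inv := fun f => by
        change PowerSeries.rescale _ (PowerSeries.rescale _ f) = f
        rw [PowerSeries.rescale_rescale, Units.inv_mul, PowerSeries.rescale_one, RingHom.id_apply]
      commutes' := rescale_C (z : k) }

theorem rescaleFractionRing_algebraMap (z : kˣ) (f : k⟦X⟧) :
    rescaleFractionRing z (algebraMap k⟦X⟧ (FractionRing k⟦X⟧) f) =
      algebraMap k⟦X⟧ (FractionRing k⟦X⟧) (PowerSeries.rescale (z : k) f) :=
  IsFractionRing.algEquivOfAlgEquiv_algebraMap _ f

theorem rescaleFractionRing_pow_algebraMap (z : kˣ) (m : ℕ) (f : k⟦X⟧) :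
    (rescaleFractionRing z ^ m) (algebraMap k⟦X⟧ (FractionRing k⟦X⟧) f) =
      algebraMap k⟦X⟧ (FractionRing k⟦X⟧) (PowerSeries.rescale ((z : k) ^ m) f) := by
  induction m with
  | zero => rw [pow_zero, pow_zero, PowerSeries.rescale_one]; rfl
  | succ m ih =>
    rw [pow_succ', AlgEquiv.mul_apply, ih, rescaleFractionRing_algebraMap,
      PowerSeries.rescale_rescale, pow_succ]

theorem rescale_expand {z : k} {t : ℕ} (ht : t ≠ 0) (hz : z ^ t = 1) (f : k⟦X⟧) :
    PowerSeries.rescale z (PowerSeries.expand t ht f) = PowerSeries.expand t ht f := by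
  ext m
  rw [PowerSeries.coeff_rescale, PowerSeries.coeff_expand]
  split_ifs with hm
  · obtain ⟨l, rfl⟩ := hm
    rw [pow_mul, hz, one_pow, one_mul]
  · rw [mul_zero]

theorem rescale_mul_X_eq_self_iff {z : k} {u : k⟦X⟧} (hu : u.constantCoeff ≠ 0) :
    PowerSeries.rescale z (u * PowerSeries.X) = u * PowerSeries.X ↔ z = 1 := by
  refine ⟨fun h => ?_, ?_⟩
  · have h1 := congrArg (PowerSeries.coeff (0 + 1)) h
    rw [PowerSeries.coeff_rescale, PowerSeries.coeff_succ_mul_X, zero_add, pow_one,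
      PowerSeries.coeff_zero_eq_constantCoeff_apply] at h1
    exact (mul_eq_right₀ hu).mp h1
  · rintro rfl
    rw [PowerSeries.rescale_one, RingHom.id_apply]

/-- The value `1 + X ^ t`. Of the points lying over `1` under `r ↦ (r ^ n - 1) / (r ^ t - 1)`, only
`r = 0` is ramified, with index `t`, and `X` is a local parameter there. -/
noncomputable def branchValue (k : Type*) [Field k] (t : ℕ) : FractionRing k⟦X⟧ :=
  algebraMap k⟦X⟧ (FractionRing k⟦X⟧) (1 + PowerSeries.X ^ t)

theorem transcendental_branchValue [IsAlgClosed k] {t : ℕ} (ht : 0 < t) :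
    Transcendental k (branchValue k t) := by
  intro halg
  obtain ⟨c, hc⟩ := halg.isIntegral.mem_range_algebraMap_of_minpoly_splits (K := k) (R := k)
    (IsAlgClosed.splits _)
  rw [branchValue, IsScalarTower.algebraMap_apply k k⟦X⟧, PowerSeries.algebraMap_apply,
    Algebra.algebraMap_self, RingHom.id_apply] at hc
  have ht_coeff := congrArg (PowerSeries.coeff t) (IsFractionRing.injective k⟦X⟧ _ hc)
  simp [PowerSeries.coeff_C, PowerSeries.coeff_one, ht.ne'] at ht_coeff

theorem branchValue_ne_zero {t : ℕ} (ht : 0 < t) : branchValue k t ≠ 0 := by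
  rw [branchValue, Ne, IsFractionRing.to_map_eq_zero_iff]
  intro h
  simpa [ht.ne'] using congrArg PowerSeries.constantCoeff h

theorem rescaleFractionRing_branchValue {z : kˣ} {t : ℕ} (hz : z ^ t = 1) :
    rescaleFractionRing z (branchValue k t) = branchValue k t := by
  rw [branchValue, rescaleFractionRing_algebraMap, map_add, map_one, map_pow,
    PowerSeries.rescale_X, mul_pow, ← map_pow, ← Units.val_pow_eq_pow_val, hz, Units.val_one,
    map_one, one_mul]

theorem exists_rescale_invariant_root {n t : ℕ} (ht : 0 < t) (htn : t < n) (hnt : (n : k) ≠ t)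
    {v : k} (hv : v ^ (n - t) = 1) :
    ∃ U : k⟦X⟧, U ^ n - (1 + PowerSeries.X ^ t) * U ^ t + PowerSeries.X ^ t = 0 ∧
      U.constantCoeff = v ∧ ∀ z : k, z ^ t = 1 → PowerSeries.rescale z U = U := by
  obtain ⟨U, hU, hUv⟩ := exists_powerSeries_root_trinomial ht htn hnt
    (b := 1 + PowerSeries.X) (c := PowerSeries.X) (by simp) (by simp) hv
  refine ⟨PowerSeries.expand t ht.ne' U, ?_, ?_, fun z hz => rescale_expand ht.ne' hz U⟩
  · simpa only [map_add, map_sub, map_mul, map_pow, map_one, map_zero, PowerSeries.expand_X] using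
      congrArg (PowerSeries.expand t ht.ne') hU
  · rw [PowerSeries.constantCoeff_expand, hUv]

/-- The substitution `Y = X / V` turns the trinomial into one whose reduction has the simple
root `1`. -/
theorem exists_root_mul_X {n t : ℕ} (ht : 0 < t) (htn : t < n) (htk : (t : k) ≠ 0) :
    ∃ u : k⟦X⟧, u.constantCoeff ≠ 0 ∧
      (u * PowerSeries.X) ^ n - (1 + PowerSeries.X ^ t) * (u * PowerSeries.X) ^ t +
        PowerSeries.X ^ t = 0 := by
  have hntk : (n : k) ≠ (n - t : ℕ) := by
    rwa [Nat.cast_sub htn.le, ne_eq, eq_comm, sub_eq_self]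
  obtain ⟨V, hV, hV1⟩ := exists_powerSeries_root_trinomial (n := n) (Nat.sub_pos_of_lt htn)
    (Nat.sub_lt (ht.trans htn) ht) hntk
    (b := 1 + PowerSeries.X ^ t) (c := PowerSeries.X ^ (n - t)) (by simp [ht.ne'])
    (by simp [(Nat.sub_pos_of_lt htn).ne']) (one_pow _)
  have hV0 : V.constantCoeff ≠ 0 := hV1 ▸ one_ne_zero
  refine ⟨V⁻¹, by simp [hV1], ?_⟩
  have hinv : V⁻¹ * V = 1 := PowerSeries.inv_mul_cancel V hV0
  have hinv_pow (m : ℕ) : V⁻¹ ^ m * V ^ m = 1 := by rw [← mul_pow, hinv, one_pow]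
  obtain ⟨j, rfl⟩ := Nat.exists_eq_add_of_le htn.le
  rw [Nat.add_sub_cancel_left] at hV
  linear_combination PowerSeries.X ^ t * V⁻¹ ^ (t + j) * hV - PowerSeries.X ^ t * hinv_pow (t + j) +
    (1 + PowerSeries.X ^ t) * PowerSeries.X ^ t * V⁻¹ ^ t * hinv_pow j

/-- The fibre of `r ↦ (r ^ n - 1) / (r ^ t - 1)` over `branchValue k t`. -/
noncomputable abbrev branchFiber (k : Type*) [Field k] (n t : ℕ) :
    SubMulAction (stabilizer Gal(FractionRing k⟦X⟧/k) (branchValue k t)) (FractionRing k⟦X⟧) :=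
  ratioFiber Gal(FractionRing k⟦X⟧/k) n t (branchValue k t)

theorem algebraMap_mem_branchFiber {n t : ℕ} (hco : n.Coprime t) (hw : branchValue k t ≠ 0)
    {U : k⟦X⟧} (hU : U ^ n - (1 + PowerSeries.X ^ t) * U ^ t + PowerSeries.X ^ t = 0)
    (hU1 : U.constantCoeff ≠ 1) :
    algebraMap k⟦X⟧ (FractionRing k⟦X⟧) U ∈ branchFiber k n t := by
  refine (mem_ratioFiber hco hw).mpr ⟨fun h => hU1 ?_, ?_⟩
  · rw [IsFractionRing.injective k⟦X⟧ (FractionRing k⟦X⟧) (h.trans (map_one _).symm), map_one]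
  · simpa [branchValue] using congrArg (algebraMap k⟦X⟧ (FractionRing k⟦X⟧)) hU

theorem sub_le_ncard_fixedBy_branchFiber [IsAlgClosed k] {n t : ℕ} (hco : n.Coprime t) (ht : 0 < t)
    (htn : t < n) (hnt : (n : k) ≠ t) {z : kˣ} (hz : z ^ t = 1)
    {d : stabilizer Gal(FractionRing k⟦X⟧/k) (branchValue k t)}
    (hd : d.1 = rescaleFractionRing z) :
    n - t ≤ (fixedBy (branchFiber k n t) d).ncard + 1 := by
  have hw : branchValue k t ≠ 0 := branchValue_ne_zero ht
  have : Finite (branchFiber k n t) := finite_ratioFiber hco ht htn hw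
  have : NeZero ((n - t : ℕ) : k) := ⟨by rwa [Nat.cast_sub htn.le, sub_ne_zero]⟩
  obtain ⟨ω, hω⟩ := HasEnoughRootsOfUnity.exists_primitiveRoot k (n - t)
  let R := (nthRootsFinset (n - t) (1 : k)).erase 1
  have hR (v : R) : (v : k) ^ (n - t) = 1 :=
    (mem_nthRootsFinset (Nat.sub_pos_of_lt htn) 1).mp (Finset.mem_of_mem_erase v.2)
  choose U hU hUv hUz using fun v : R => exists_rescale_invariant_root ht htn hnt (hR v)
  have hmem (v : R) : algebraMap k⟦X⟧ (FractionRing k⟦X⟧) (U v) ∈ branchFiber k n t :=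
    algebraMap_mem_branchFiber hco hw (hU v) (hUv v ▸ Finset.ne_of_mem_erase v.2)
  have hfixed (v : R) : (⟨_, hmem v⟩ : branchFiber k n t) ∈ fixedBy (branchFiber k n t) d := by
    refine Subtype.ext ((DFunLike.congr_fun hd _).trans ?_)
    have hz' : (z : k) ^ t = 1 := by rw [← Units.val_pow_eq_pow_val, hz, Units.val_one]
    rw [rescaleFractionRing_algebraMap, hUz v z hz']
  have hinj : Function.Injective fun v : R =>
      (⟨_, hfixed v⟩ : fixedBy (branchFiber k n t) d) := by
    intro v v' h
    have hUvv' : U v = U v' := IsFractionRing.injective k⟦X⟧ (FractionRing k⟦X⟧)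
      (congrArg (fun x => (x.1 : FractionRing k⟦X⟧)) h)
    exact Subtype.ext (by rw [← hUv v, ← hUv v', hUvv'])
  calc n - t = R.card + 1 := by
        rw [Finset.card_erase_add_one, hω.card_nthRootsFinset]
        exact one_mem_nthRootsFinset (Nat.sub_pos_of_lt htn)
    _ ≤ (fixedBy (branchFiber k n t) d).ncard + 1 := by
        rw [← Nat.card_coe_set_eq, ← Nat.card_eq_finsetCard]
        gcongr
        exact Nat.card_le_card_of_injective _ hinj

theorem exists_minimalPeriod_branchFiber_eq {n t : ℕ} (hco : n.Coprime t)
    (ht : 0 < t) (htn : t < n) (htk : (t : k) ≠ 0) {z : kˣ}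
    {d : stabilizer Gal(FractionRing k⟦X⟧/k) (branchValue k t)}
    (hd : d.1 = rescaleFractionRing z) :
    ∃ x : branchFiber k n t, Function.minimalPeriod (d • ·) x = orderOf z := by
  obtain ⟨u, hu, hroot⟩ := exists_root_mul_X (k := k) ht htn htk
  have hmem := algebraMap_mem_branchFiber hco (branchValue_ne_zero ht) hroot (by simp)
  refine ⟨⟨_, hmem⟩, Function.minimalPeriod_eq_minimalPeriod_iff.mpr fun m => ?_⟩
  rw [isPeriodicPt_mul_iff_pow_eq_one, Function.IsPeriodicPt, smul_iterate, Function.IsFixedPt,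
    ← Units.val_inj, Units.val_pow_eq_pow_val, Units.val_one, ← rescale_mul_X_eq_self_iff hu,
    ← (IsFractionRing.injective k⟦X⟧ (FractionRing k⟦X⟧)).eq_iff,
    ← rescaleFractionRing_pow_algebraMap, ← hd]
  exact Subtype.ext_iff

theorem card_branchFiber_and_exists_actsAsCycleOn [IsAlgClosed k] {n t : ℕ} (hco : n.Coprime t)
    (ht : 1 < t) (htn : t < n) (htk : (t : k) ≠ 0) (hnt : (n : k) ≠ t) :
    Nat.card (branchFiber k n t) + 1 = n ∧
      ∃ (d : stabilizer Gal(FractionRing k⟦X⟧/k) (branchValue k t))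
        (S : Set (branchFiber k n t)), ActsAsCycleOn d S ∧ S.ncard = t := by
  have ht0 : 0 < t := one_pos.trans ht
  have : NeZero (t : k) := ⟨htk⟩
  have hw : branchValue k t ≠ 0 := branchValue_ne_zero ht0
  have : Finite (branchFiber k n t) := finite_ratioFiber hco ht0 htn hw
  obtain ⟨ζ, hζ⟩ := HasEnoughRootsOfUnity.exists_primitiveRoot k t
  lift ζ to kˣ using hζ.isUnit ht0.ne'
  rw [IsPrimitiveRoot.coe_units_iff] at hζ
  let d : stabilizer Gal(FractionRing k⟦X⟧/k) (branchValue k t) :=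
    ⟨rescaleFractionRing ζ, rescaleFractionRing_branchValue hζ.pow_eq_one⟩
  obtain ⟨x, hx⟩ := exists_minimalPeriod_branchFiber_eq hco ht0 htn htk (d := d) rfl
  rw [← hζ.eq_orderOf] at hx
  have hmoves : d • x ≠ x := fun h =>
    ht.ne' (hx.symm.trans (Function.minimalPeriod_eq_one_iff_isFixedPt.mpr h))
  have hfixed := sub_le_ncard_fixedBy_branchFiber hco ht0 htn hnt hζ.pow_eq_one (d := d) rfl
  have hlt : Nat.card (branchFiber k n t) < n :=
    card_ratioFiber_lt hco ht0 htn hw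
  have hle := minimalPeriod_add_ncard_fixedBy_le hmoves
  exact ⟨by omega, d, _, actsAsCycleOn_orbit_zpowers hmoves (by omega),
    (ncard_orbit_zpowers d x).trans hx⟩

end LocalMonodromy

section TransferToClosure

open MulAction

theorem trdeg_ratFunc (k : Type*) [Field k] : Algebra.trdeg k (RatFunc k) = 1 := by
  have : Algebra.IsAlgebraic k[X] (RatFunc k) := IsLocalization.isAlgebraic _ (nonZeroDivisors k[X])
  rw [← trdeg_add_eq k (S := k[X]), Polynomial.trdeg_of_isDomain,
    trdeg_eq_zero, add_zero]

section RatFuncAlgebra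

variable {k L : Type*} [Field k] [Field L] [Algebra k L]

theorem exists_ratFunc_algebra {x : L} (hx : Transcendental k x) :
    ∃ (_ : Algebra (RatFunc k) L) (_ : IsScalarTower k (RatFunc k) L),
      algebraMap (RatFunc k) L RatFunc.X = x := by
  let φ : RatFunc k →ₐ[k] L := RatFunc.liftAlgHom (aeval x)
    (nonZeroDivisors_le_comap_nonZeroDivisors_of_injective _ (transcendental_iff_injective.mp hx))
  let : Algebra (RatFunc k) L := φ.toRingHom.toAlgebra
  refine ⟨this, .of_algebraMap_eq fun r => (φ.commutes r).symm, ?_⟩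
  change RatFunc.liftAlgHom _ _ _ = x
  rw [RatFunc.liftAlgHom_apply]
  simp

variable [Algebra (RatFunc k) L] [IsScalarTower k (RatFunc k) L]

theorem isAlgebraic_ratFunc (hL : Algebra.trdeg k L ≤ 1) : Algebra.IsAlgebraic (RatFunc k) L := by
  have hadd := lift_trdeg_add_eq k (RatFunc k) L
  have hL' := Cardinal.lift_le.mpr hL
  rw [← hadd, trdeg_ratFunc, Cardinal.lift_one, Cardinal.lift_one, add_comm] at hL'
  have hzero := Cardinal.add_one_le_add_one_iff.mp (hL'.trans_eq (zero_add 1).symm)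
  rwa [nonpos_iff_eq_zero, Cardinal.lift_eq_zero, trdeg_eq_zero_iff] at hzero

theorem map_algebraMap_ratFunc (τ : L →ₐ[k] L)
    (hτ : τ (algebraMap (RatFunc k) L RatFunc.X) = algebraMap (RatFunc k) L RatFunc.X)
    (r : RatFunc k) : τ (algebraMap (RatFunc k) L r) = algebraMap (RatFunc k) L r := by
  have hcomp : (τ : L →+* L).comp (algebraMap (RatFunc k) L) = algebraMap (RatFunc k) L := by
    refine IsFractionRing.injective_comp_algebraMap (A := k[X]) (Polynomial.ringHom_ext ?_ ?_)
    · intro c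
      have hc : algebraMap k[X] (RatFunc k) (C c) = algebraMap k (RatFunc k) c := rfl
      simp only [RingHom.comp_apply, RingHom.coe_coe, hc,
        ← IsScalarTower.algebraMap_apply k (RatFunc k) L, AlgHom.commutes]
    · simpa using hτ
  exact DFunLike.congr_fun hcomp r

end RatFuncAlgebra

theorem exists_algEquiv_apply_eq {k Ω Ω' : Type*} [Field k] [Field Ω] [Algebra k Ω] [IsAlgClosed Ω]
    [Field Ω'] [Algebra k Ω'] [IsAlgClosed Ω'] (hΩ : Algebra.trdeg k Ω ≤ 1)
    (hΩ' : Algebra.trdeg k Ω' ≤ 1) {x : Ω} {x' : Ω'} (hx : Transcendental k x)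
    (hx' : Transcendental k x') : ∃ σ : Ω ≃ₐ[k] Ω', σ x = x' := by
  obtain ⟨_, _, rfl⟩ := exists_ratFunc_algebra hx
  obtain ⟨_, _, rfl⟩ := exists_ratFunc_algebra hx'
  have : IsAlgClosure (RatFunc k) Ω := ⟨inferInstance, isAlgebraic_ratFunc hΩ⟩
  have : IsAlgClosure (RatFunc k) Ω' := ⟨inferInstance, isAlgebraic_ratFunc hΩ'⟩
  exact ⟨(IsAlgClosure.equiv (RatFunc k) Ω Ω').restrictScalars k,
    (IsAlgClosure.equiv (RatFunc k) Ω Ω').commutes RatFunc.X⟩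

theorem exists_algEquiv_extending {F M Ω : Type*} [Field F] [Field M] [Field Ω] [Algebra F M]
    [Algebra F Ω] [IsAlgClosed Ω] [Algebra.IsAlgebraic F Ω] (τ : M ≃ₐ[F] M) :
    ∃ (ι : algebraicClosure F M →ₐ[F] Ω) (σ : Ω ≃ₐ[F] Ω),
      ∀ x, σ (ι x) = ι (algebraicClosure.algEquivOfAlgEquiv τ x) := by
  let ι : algebraicClosure F M →ₐ[F] Ω := IsAlgClosed.lift
  let : Algebra (algebraicClosure F M) Ω := ι.toRingHom.toAlgebra
  have : IsScalarTower F (algebraicClosure F M) Ω := .of_algebraMap_eq fun r => (ι.commutes r).symm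
  have : IsAlgClosure F Ω := ⟨inferInstance, inferInstance⟩
  have : Normal F Ω := IsAlgClosure.normal F Ω
  exact ⟨ι, _, (algebraicClosure.algEquivOfAlgEquiv τ).liftNormal_commutes Ω⟩

variable {k Ω : Type*} [Field k] [Field Ω] [Algebra k Ω] [IsAlgClosed Ω] {n t : ℕ}

theorem exists_semiconj_ratioFiber {M : Type*} [Field M] [Algebra k M]
    (hΩ : Algebra.trdeg k Ω ≤ 1) (hco : n.Coprime t) (ht : 0 < t) (htn : t < n) {w : M} {W : Ω}
    (hw : Transcendental k w) (hW : Transcendental k W) (d : stabilizer Gal(M/k) w) :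
    ∃ (c : stabilizer Gal(Ω/k) W)
      (e : ratioFiber Gal(M/k) n t w → ratioFiber Gal(Ω/k) n t W),
      Function.Injective e ∧ ∀ r, e (d • r) = c • e r := by
  have hw0 : w ≠ 0 := fun h => hw (h ▸ isAlgebraic_zero)
  obtain ⟨_, _, rfl⟩ := exists_ratFunc_algebra hw
  obtain ⟨_, _, rfl⟩ := exists_ratFunc_algebra hW
  have := isAlgebraic_ratFunc (k := k) hΩ
  let τ : M ≃ₐ[RatFunc k] M :=
    .ofRingEquiv (f := d.1.toRingEquiv) (map_algebraMap_ratFunc d.1.toAlgHom d.2)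
  obtain ⟨ι, σ, hισ⟩ := exists_algEquiv_extending (Ω := Ω) τ
  have halg (r : ratioFiber Gal(M/k) n t (algebraMap (RatFunc k) M RatFunc.X)) :
      (r : M) ∈ algebraicClosure (RatFunc k) M := by
    refine mem_algebraicClosure_iff.mpr ⟨unitRootTrinomial n t RatFunc.X,
      (monic_unitRootTrinomial ht htn _).ne_zero, ?_⟩
    rw [aeval_unitRootTrinomial]
    exact ((mem_ratioFiber hco hw0).mp r.2).2
  refine ⟨⟨σ.restrictScalars k, σ.commutes _⟩, fun r => ⟨ι ⟨r, halg r⟩, ?_⟩, fun r r' h => ?_,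
    fun r => Subtype.ext (hισ ⟨r, halg r⟩).symm⟩
  · have hr : ((r : M) ^ n - 1) / ((r : M) ^ t - 1) = algebraMap (RatFunc k) M RatFunc.X := r.2
    have hr' : ((⟨r, halg r⟩ : algebraicClosure (RatFunc k) M) ^ n - 1) / (⟨r, halg r⟩ ^ t - 1) =
        algebraMap (RatFunc k) (algebraicClosure (RatFunc k) M) RatFunc.X := Subtype.ext hr
    rw [mem_equivariantFiber, powSubOneRatio_apply, ← ι.commutes, ← hr', map_div₀, map_sub, map_sub,
      map_pow, map_pow, map_one]
  · have hrr' := ι.injective (congrArg Subtype.val h)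
    exact Subtype.ext (congrArg (fun x : algebraicClosure (RatFunc k) M => (x : M)) hrr')

theorem card_ratioFiber_and_exists_actsAsCycleOn [IsAlgClosed k] (hΩ : Algebra.trdeg k Ω ≤ 1)
    (hco : n.Coprime t) (ht : 1 < t) (htn : t < n) (htk : (t : k) ≠ 0) (hnt : (n : k) ≠ t) {W : Ω}
    (hW : Transcendental k W) :
    Nat.card (ratioFiber Gal(Ω/k) n t W) + 1 = n ∧
      ∃ (c : stabilizer Gal(Ω/k) W) (S : Set (ratioFiber Gal(Ω/k) n t W)),
        ActsAsCycleOn c S ∧ S.ncard = t := by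
  have ht0 : 0 < t := one_pos.trans ht
  have hW0 : W ≠ 0 := fun h => hW (h ▸ isAlgebraic_zero)
  obtain ⟨hcard, d, S, hdS, hS⟩ := card_branchFiber_and_exists_actsAsCycleOn hco ht htn htk hnt
  obtain ⟨c, e, he_inj, he⟩ := exists_semiconj_ratioFiber hΩ hco ht0 htn
    (transcendental_branchValue ht0) hW d
  have : Finite (ratioFiber Gal(Ω/k) n t W) := finite_ratioFiber hco ht0 htn hW0
  have hlt : Nat.card (ratioFiber Gal(Ω/k) n t W) < n := card_ratioFiber_lt hco ht0 htn hW0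
  have hle : Nat.card (branchFiber k n t) ≤ _ := Nat.card_le_card_of_injective e he_inj
  have he_bij : Function.Bijective e := he_inj.bijective_of_nat_card_le
    (show _ ≤ Nat.card (branchFiber k n t) by omega)
  let e' := Equiv.ofBijective e he_bij
  obtain ⟨S', hS', hS'card⟩ := hdS.exists_preimage (e := e'.symm) e'.symm.injective
    (e'.symm.surjective.range_eq ▸ Set.subset_univ S) (d := c) fun x => by
      rw [Equiv.symm_apply_eq]
      exact ((he _).trans (congrArg (c • ·) (e'.apply_symm_apply x))).symm
  exact ⟨by omega, c, S', hS', hS'card.trans hS⟩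

theorem exists_actsAsCycleOn_ratioFiber_sub [IsAlgClosed k] (hΩ : Algebra.trdeg k Ω ≤ 1)
    (hco : n.Coprime t) (ht : 1 < t) (htn : t + 1 < n) (htk : (t : k) ≠ 0) (hnt : (n : k) ≠ t)
    {W : Ω} (hW : Transcendental k W) :
    ∃ (c : stabilizer Gal(Ω/k) W) (S : Set (ratioFiber Gal(Ω/k) n t W)),
      ActsAsCycleOn c S ∧ S.ncard = n - t := by
  have hW0 : W ≠ 0 := fun h => hW (h ▸ isAlgebraic_zero)
  have hW1 : W - 1 ≠ 0 := sub_ne_zero.mpr fun h => hW (h ▸ isAlgebraic_one)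
  have hWdiv : W = W / (W - 1) / (W / (W - 1) - 1) := by
    rw [div_sub_one hW1, sub_sub_cancel, div_div_div_cancel_right₀ hW1, div_one]
  have hW' : Transcendental k (W / (W - 1)) := fun h =>
    hW (hWdiv ▸ div_eq_mul_inv (W / (W - 1)) _ ▸ h.mul (h.sub isAlgebraic_one).inv)
  have hcast : ((n - t : ℕ) : k) = n - t := Nat.cast_sub (by omega)
  have hco' : n.Coprime (n - t) := (Nat.coprime_self_sub_right (by omega)).mpr hco
  obtain ⟨hcard, -⟩ := card_ratioFiber_and_exists_actsAsCycleOn hΩ hco ht (by omega) htk hnt hW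
  obtain ⟨hcard', c, S, hcS, hS⟩ := card_ratioFiber_and_exists_actsAsCycleOn hΩ hco'
    (by omega) (by omega) (by rwa [hcast, sub_ne_zero])
    (by rwa [hcast, Ne, eq_comm, sub_eq_self]) hW'
  let inv : ratioFiber Gal(Ω/k) n t W → ratioFiber Gal(Ω/k) n (n - t) (W / (W - 1)) := fun r =>
    ⟨_, inv_mem_ratioFiber (by omega) (by omega) hW0 (sub_ne_zero.mp hW1) r.2⟩
  have inv_inj : Function.Injective inv := fun r r' h =>
    Subtype.ext (inv_injective (congrArg Subtype.val h))
  have := finite_ratioFiber (G := Gal(Ω/k)) hco' (by omega) (by omega) (div_ne_zero hW0 hW1)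
  have inv_bij := inv_inj.bijective_of_nat_card_le (by omega)
  have hcW : c.1 W = W := by
    have hc : c.1 (W / (W - 1)) = W / (W - 1) := c.2
    exact (congrArg c.1 hWdiv).trans (by rw [map_div₀, map_sub, map_one, hc, ← hWdiv])
  obtain ⟨S', hS', hS'card⟩ := hcS.exists_preimage inv_inj
    (inv_bij.surjective.range_eq ▸ Set.subset_univ S) (d := (⟨c.1, hcW⟩ : stabilizer Gal(Ω/k) W))
    fun r => Subtype.ext (map_inv₀ c.1 (r : Ω)).symm
  exact ⟨_, S', hS', hS'card.trans hS⟩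

end TransferToClosure

section TrinomialMonodromy

open MulAction
open scoped commutatorElement

variable {k Ω : Type*} [Field k] [Field Ω] [Algebra k Ω]

/-- Since `e ^ m` is fixed, every element of `H` multiplies `e` by a root of unity, which lies
in `k`. -/
theorem commutator_le_stabilizer_of_pow [IsAlgClosed k] {m : ℕ} (hm : 0 < m) {e : Ω}
    {H : Subgroup Gal(Ω/k)} (hH : H ≤ stabilizer Gal(Ω/k) (e ^ m)) :
    commutator H ≤ (stabilizer Gal(Ω/k) e).subgroupOf H := by
  have exists_smul_eq (g : H) : ∃ c : k, g • e = c • e := by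
    rcases eq_or_ne e 0 with rfl | he
    · exact ⟨0, by rw [smul_zero, smul_zero]⟩
    have hroot : (g • e / e) ^ m = 1 := by
      rw [div_pow, ← smul_pow', Subgroup.smul_def, hH g.2, div_self (pow_ne_zero _ he)]
    have hint : IsIntegral k (g • e / e) := .of_pow hm (hroot ▸ isIntegral_one)
    obtain ⟨c, hc⟩ := hint.mem_range_algebraMap_of_minpoly_splits (K := k) (R := k)
      (IsAlgClosed.splits _)
    exact ⟨c, by rw [Algebra.smul_def, hc, div_mul_cancel₀ _ he]⟩
  rw [commutator_def, Subgroup.commutator_le]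
  intro g _ h _
  obtain ⟨c, hc⟩ := exists_smul_eq g⁻¹
  obtain ⟨d, hd⟩ := exists_smul_eq h⁻¹
  have hcomm : (g * h)⁻¹ • e = (h * g)⁻¹ • e := by
    rw [mul_inv_rev, mul_inv_rev, mul_smul, mul_smul, hc, hd, smul_comm h⁻¹ c,
      smul_comm g⁻¹ d, hc, hd, smul_comm c d]
  change ⁅g, h⁆ • e = e
  rw [commutatorElement_def, mul_assoc, ← mul_inv_rev, mul_smul, ← hcomm, smul_inv_smul]

theorem stabilizer_div_le {a : k} (ha : a ≠ 0) (e : Ω) :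
    stabilizer Gal(Ω/k) (algebraMap k Ω a / e) ≤ stabilizer Gal(Ω/k) e := by
  intro g hg
  have hg' : g (algebraMap k Ω a / e) = algebraMap k Ω a / e := hg
  change g e = e
  rw [← div_div_cancel₀ ((_root_.map_ne_zero (algebraMap k Ω)).mpr ha) (b := e), map_div₀, hg',
    AlgEquiv.commutes]

variable {n t : ℕ}

/-- The map `z ↦ a z ^ t - z ^ n`, whose fibre over `T` consists of the roots of
`Y ^ n - a Y ^ t + T`. -/
def trinomialParameter (Ω : Type*) [Field Ω] [Algebra k Ω] (n t : ℕ) (a : k) :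
    Ω →[Gal(Ω/k)] Ω where
  toFun z := a • z ^ t - z ^ n
  map_smul' g z := by simp only [smul_sub, smul_comm g a, smul_pow', id_eq]

theorem trinomialParameter_apply (a : k) (z : Ω) :
    trinomialParameter Ω n t a z = a • z ^ t - z ^ n := rfl

variable {a : k} {T : Ω}

/-- The roots of `Y ^ n - a Y ^ t + T`. -/
abbrev trinomialRoots (n t : ℕ) (a : k) (T : Ω) : SubMulAction (stabilizer Gal(Ω/k) T) Ω :=
  equivariantFiber (trinomialParameter Ω n t a) T

theorem transcendental_of_mem_trinomialRoots (hT : Transcendental k T) {y : Ω}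
    (hy : y ∈ trinomialRoots n t a T) : Transcendental k y := by
  intro h
  rw [mem_equivariantFiber, trinomialParameter_apply, Algebra.smul_def] at hy
  exact hT (hy ▸ ((isAlgebraic_algebraMap a).mul (h.pow t)).sub (h.pow n))

theorem transcendental_div_pow (ha : a ≠ 0) {y : Ω} (hy : Transcendental k y) {m : ℕ}
    (hm : 0 < m) : Transcendental k (algebraMap k Ω a / y ^ m) := by
  have haΩ : algebraMap k Ω a ≠ 0 := (_root_.map_ne_zero _).mpr ha
  intro h
  have hpow : IsAlgebraic k (y ^ m) := by
    rw [← div_div_cancel₀ haΩ (b := y ^ m), div_eq_mul_inv]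
    exact (isAlgebraic_algebraMap a).mul h.inv
  exact hy (hpow.of_pow hm)

theorem mul_mem_trinomialRoots_iff (hco : n.Coprime t) (htn : t ≤ n) (ha : a ≠ 0) {y : Ω}
    (hy0 : y ≠ 0) (hy : y ∈ trinomialRoots n t a T) {r : Ω} :
    r * y ∈ trinomialRoots n t a T ∧ r * y ≠ y ↔
      r ∈ ratioFiber Gal(Ω/k) n t (algebraMap k Ω a / y ^ (n - t)) := by
  have haΩ : algebraMap k Ω a ≠ 0 := (_root_.map_ne_zero _).mpr ha
  have hyn : y ^ n = y ^ (n - t) * y ^ t := by rw [← pow_add, Nat.sub_add_cancel htn]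
  rw [mem_ratioFiber hco (div_ne_zero haΩ (pow_ne_zero _ hy0)), and_comm, Ne, mul_eq_right₀ hy0]
  refine and_congr_right fun _ => ?_
  rw [mem_equivariantFiber, trinomialParameter_apply, Algebra.smul_def] at hy ⊢
  have hscale : r ^ n - algebraMap k Ω a / y ^ (n - t) * r ^ t +
      (algebraMap k Ω a / y ^ (n - t) - 1) =
        (T - (algebraMap k Ω a * (r * y) ^ t - (r * y) ^ n)) / y ^ n := by
    rw [← hy, mul_pow, mul_pow, hyn]
    field_simp
    ring
  rw [hscale, div_eq_zero_iff, or_iff_left (pow_ne_zero n hy0), sub_eq_zero, eq_comm]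

/-- Dividing by a root `y` of `Y ^ n - a Y ^ t + T` carries the other roots to a fibre of
`powSubOneRatio`. -/
def ratioFiberEquiv (hco : n.Coprime t) (htn : t ≤ n) (ha : a ≠ 0) (y : trinomialRoots n t a T)
    (hy0 : (y : Ω) ≠ 0) :
    ratioFiber Gal(Ω/k) n t (algebraMap k Ω a / (y : Ω) ^ (n - t)) ≃
      SubMulAction.ofStabilizer (stabilizer Gal(Ω/k) T) y where
  toFun r :=
    have hr := (mul_mem_trinomialRoots_iff hco htn ha hy0 y.2).mpr r.2
    ⟨⟨r * y, hr.1⟩, fun h => hr.2 (congrArg Subtype.val h)⟩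
  invFun z := ⟨z / y, (mul_mem_trinomialRoots_iff hco htn ha hy0 y.2).mp <| by
    rw [div_mul_cancel₀ _ hy0]
    exact ⟨z.1.2, fun h => z.2 (Subtype.ext h)⟩⟩
  left_inv r := Subtype.ext (mul_div_cancel_right₀ (r : Ω) hy0)
  right_inv z := Subtype.ext (Subtype.ext (div_mul_cancel₀ (z : Ω) hy0))

variable [IsAlgClosed Ω]

theorem isPretransitive_equivariantFiber_of_transcendental (hΩ : Algebra.trdeg k Ω ≤ 1)
    {φ : Ω →[Gal(Ω/k)] Ω} (hφ : ∀ z, IsAlgebraic k z → IsAlgebraic k (φ z)) {w : Ω}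
    (hw : Transcendental k w) :
    IsPretransitive (stabilizer Gal(Ω/k) w) (equivariantFiber φ w) := by
  refine isPretransitive_equivariantFiber φ w ?_
  rintro x y rfl hy
  exact exists_algEquiv_apply_eq hΩ hΩ (fun hx => hw (hφ x hx)) fun hy' => hw (hy ▸ hφ y hy')

theorem isMultiplyPretransitive_ratioFiber [IsAlgClosed k] (hΩ : Algebra.trdeg k Ω ≤ 1)
    (hco : n.Coprime t) (ht : 1 < t) (htn : t + 1 < n) (htk : (t : k) ≠ 0) (hnt : (n : k) ≠ t)
    {W : Ω} (hW : Transcendental k W) :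
    IsMultiplyPretransitive (stabilizer Gal(Ω/k) W) (ratioFiber Gal(Ω/k) n t W)
      (Nat.card (ratioFiber Gal(Ω/k) n t W) - 2) := by
  obtain ⟨hcard, c, S, hc, hS⟩ :=
    card_ratioFiber_and_exists_actsAsCycleOn hΩ hco ht (by omega) htk hnt hW
  obtain ⟨d, T, hd, hT⟩ := exists_actsAsCycleOn_ratioFiber_sub hΩ hco ht htn htk hnt hW
  have : Finite (ratioFiber Gal(Ω/k) n t W) := Nat.finite_of_card_ne_zero (by omega)
  have : IsPretransitive (stabilizer Gal(Ω/k) W) (ratioFiber Gal(Ω/k) n t W) :=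
    isPretransitive_equivariantFiber_of_transcendental hΩ (fun r hr => by
      rw [powSubOneRatio_apply, div_eq_mul_inv]
      exact ((hr.pow n).sub isAlgebraic_one).mul ((hr.pow t).sub isAlgebraic_one).inv) hW
  refine isMultiplyPretransitive_card_sub_two_of_coprime_cycles hc hd ?_ ?_ ?_ ?_
  · rw [hS, hT]
    exact (Nat.coprime_sub_self_right (by omega)).mpr hco.symm
  all_goals omega

theorem isPretransitive_trinomialRoots (hΩ : Algebra.trdeg k Ω ≤ 1) (n t : ℕ) (a : k)
    (hT : Transcendental k T) :
    IsPretransitive (stabilizer Gal(Ω/k) T) (trinomialRoots n t a T) :=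
  isPretransitive_equivariantFiber_of_transcendental hΩ (fun z hz => by
    rw [trinomialParameter_apply, Algebra.smul_def]
    exact ((isAlgebraic_algebraMap a).mul (hz.pow t)).sub (hz.pow n)) hT

theorem exists_mem_trinomialRoots (ht : 0 < t) (htn : t < n) (a : k) (T : Ω) :
    ∃ y, y ∈ trinomialRoots n t a T := by
  have hdeg : (trinomial 0 t n T (-algebraMap k Ω a) 1).natDegree = n :=
    trinomial_natDegree ht htn one_ne_zero
  obtain ⟨y, hy⟩ := IsAlgClosed.exists_root (trinomial 0 t n T (-algebraMap k Ω a) 1) <|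
    fun h => (ht.trans htn).ne' (hdeg.symm.trans (natDegree_eq_of_degree_eq_some h))
  refine ⟨y, ?_⟩
  rw [mem_equivariantFiber, trinomialParameter_apply, Algebra.smul_def]
  simp only [IsRoot, trinomial_def, eval_add, eval_mul, eval_C, eval_pow, eval_X] at hy
  linear_combination -hy

theorem card_trinomialRoots [IsAlgClosed k] (hΩ : Algebra.trdeg k Ω ≤ 1) (hco : n.Coprime t)
    (ht : 1 < t) (htn : t < n) (htk : (t : k) ≠ 0) (hnt : (n : k) ≠ t) (ha : a ≠ 0)
    (hT : Transcendental k T) : Nat.card (trinomialRoots n t a T) = n := by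
  obtain ⟨y, hy⟩ := exists_mem_trinomialRoots (one_pos.trans ht) htn a T
  have hy_tr := transcendental_of_mem_trinomialRoots hT hy
  let y' : trinomialRoots n t a T := ⟨y, hy⟩
  have hcard := (card_ratioFiber_and_exists_actsAsCycleOn hΩ hco ht htn htk hnt
    (transcendental_div_pow ha hy_tr (Nat.sub_pos_of_lt htn))).1
  rw [Nat.card_congr (ratioFiberEquiv hco htn.le ha y' fun h : y = 0 =>
    hy_tr (h ▸ isAlgebraic_zero))] at hcard
  have hfin : Finite (SubMulAction.ofStabilizer (stabilizer Gal(Ω/k) T) y') :=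
    Nat.finite_of_card_ne_zero (by omega)
  have : Finite (trinomialRoots n t a T) := not_infinite_iff_finite.mp fun _ =>
    (Set.finite_singleton y').infinite_compl hfin
  have := isPretransitive_trinomialRoots hΩ n t a hT
  exact (SubMulAction.nat_card_ofStabilizer_add_one_eq _ y').symm.trans hcard

theorem isMultiplyPretransitive_trinomialRoots [IsAlgClosed k] (hΩ : Algebra.trdeg k Ω ≤ 1)
    (hco : n.Coprime t) (ht : 1 < t) (htn : t + 1 < n) (hn : 6 ≤ n) (htk : (t : k) ≠ 0)
    (hnt : (n : k) ≠ t) (ha : a ≠ 0) (hT : Transcendental k T) :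
    IsMultiplyPretransitive (stabilizer Gal(Ω/k) T) (trinomialRoots n t a T)
      (Nat.card (trinomialRoots n t a T) - 2) := by
  obtain ⟨y, hy⟩ := exists_mem_trinomialRoots (by omega : 0 < t) (by omega : t < n) a T
  have hy_tr := transcendental_of_mem_trinomialRoots hT hy
  let y' : trinomialRoots n t a T := ⟨y, hy⟩
  let W := algebraMap k Ω a / y ^ (n - t)
  have hW : Transcendental k W := transcendental_div_pow ha hy_tr (by omega)
  let e := ratioFiberEquiv hco (by omega) ha y' fun h : y = 0 => hy_tr (h ▸ isAlgebraic_zero)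
  have hcard := (card_ratioFiber_and_exists_actsAsCycleOn hΩ hco ht (by omega) htk hnt hW).1
  have : Finite (ratioFiber Gal(Ω/k) n t W) := Nat.finite_of_card_ne_zero (by omega)
  have htrans := isMultiplyPretransitive_of_commutator_le
    (α := ratioFiber Gal(Ω/k) n t W) (by omega)
    (commutator_le_stabilizer_of_pow (by omega) (stabilizer_div_le ha (y ^ (n - t))))
    (isMultiplyPretransitive_ratioFiber hΩ hco ht htn htk hnt hW)
  have := isPretransitive_trinomialRoots hΩ n t a hT
  rw [card_trinomialRoots hΩ hco ht (by omega) htk hnt ha hT,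
    show n - 2 = (n - 3).succ by omega,
    SubMulAction.ofStabilizer.isMultiplyPretransitive (a := y')]
  rw [show Nat.card (ratioFiber Gal(Ω/k) n t W) - 2 = n - 3 by omega] at htrans
  refine isMultiplyPretransitive_of_equiv e (fun g => ?_) htrans
  have hgy : g.1.1 y = y := g.2
  have hgT : g.1.1 T = T := by
    have hy' : trinomialParameter Ω n t a y = T := hy
    have := map_smul (trinomialParameter Ω n t a) g.1.1 y
    rw [← hy', ← AlgEquiv.smul_def, ← map_smul, AlgEquiv.smul_def, hgy]
  refine ⟨⟨⟨g.1.1, hgT⟩, Subtype.ext hgy⟩, fun r => Subtype.ext (Subtype.ext ?_)⟩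
  change g.1.1 (r : Ω) * y = g.1.1 (r * y)
  rw [map_mul, hgy]

end TrinomialMonodromy

section GaloisGroup

open MulAction

theorem isMultiplyPretransitive_rootSet_of_splits {F E E' : Type*} [Field F] [Field E] [Field E']
    [Algebra F E] [Algebra F E'] {p : F[X]} [Fact (p.map (algebraMap F E)).Splits]
    [Fact (p.map (algebraMap F E')).Splits] {m : ℕ}
    (h : IsMultiplyPretransitive p.Gal (p.rootSet E) m) :
    IsMultiplyPretransitive (Gal.galActionHom p E').range (p.rootSet E') m := by
  refine isMultiplyPretransitive_of_equiv
    ((Gal.rootsEquivRoots p E).symm.trans (Gal.rootsEquivRoots p E'))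
    (fun g => ⟨⟨Gal.galActionHom p E' g, g, rfl⟩, fun x => ?_⟩) h
  change _ = g • (Gal.rootsEquivRoots p E' ((Gal.rootsEquivRoots p E).symm x) : p.rootSet E')
  simp only [Gal.smul_def, Equiv.trans_apply, Equiv.symm_apply_apply]

variable {k Ω : Type*} [Field k] [Field Ω] [Algebra k Ω] [Algebra (RatFunc k) Ω]
  [IsScalarTower k (RatFunc k) Ω] {n s t : ℕ} {a : k}

theorem coe_trinomialRoots_eq_rootSet (htn : t < n) {f : (RatFunc k)[X]}
    (hf : f = X ^ n - C (algebraMap k (RatFunc k) a) * X ^ t + C (RatFunc.X ^ s)) :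
    (trinomialRoots n t a (algebraMap (RatFunc k) Ω RatFunc.X ^ s) : Set Ω) = f.rootSet Ω := by
  have hcoeff : f.coeff n = 1 := by
    rw [hf, coeff_add, coeff_sub, coeff_X_pow_self, coeff_C_mul_X_pow, if_neg htn.ne',
      coeff_C_of_ne_zero (Nat.ne_zero_of_lt htn), sub_zero, add_zero]
  have hf0 : f ≠ 0 := fun h => one_ne_zero (hcoeff.symm.trans (h ▸ coeff_zero n))
  ext z
  rw [SetLike.mem_coe, mem_equivariantFiber, trinomialParameter_apply, mem_rootSet_of_ne hf0, hf,
    Algebra.smul_def]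
  simp only [map_add, map_sub, map_mul, map_pow, aeval_X, aeval_C,
    ← IsScalarTower.algebraMap_apply k (RatFunc k) Ω]
  constructor <;> intro h <;> linear_combination -h

theorem transcendental_algebraMap_ratFunc_X_pow (hs : 0 < s) :
    Transcendental k (algebraMap (RatFunc k) Ω RatFunc.X ^ s) :=
  ((transcendental_algebraMap_iff (algebraMap (RatFunc k) Ω).injective).mpr
    RatFunc.transcendental_X).pow hs

theorem card_rootSet_eq [IsAlgClosed k] [IsAlgClosed Ω] (hΩ : Algebra.trdeg k Ω ≤ 1)
    (hs : 0 < s) (hco : n.Coprime t) (ht : 1 < t) (htn : t < n) (htk : (t : k) ≠ 0)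
    (hnt : (n : k) ≠ t) (ha : a ≠ 0) {f : (RatFunc k)[X]}
    (hf : f = X ^ n - C (algebraMap k (RatFunc k) a) * X ^ t + C (RatFunc.X ^ s)) :
    Nat.card (f.rootSet Ω) = n := by
  rw [← coe_trinomialRoots_eq_rootSet htn hf]
  exact card_trinomialRoots hΩ hco ht htn htk hnt ha (transcendental_algebraMap_ratFunc_X_pow hs)

theorem isMultiplyPretransitive_gal [IsAlgClosed k] [IsAlgClosed Ω] (hΩ : Algebra.trdeg k Ω ≤ 1)
    (hs : 0 < s) (hco : n.Coprime t) (ht : 1 < t) (htn : t + 1 < n) (hn : 6 ≤ n)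
    (htk : (t : k) ≠ 0) (hnt : (n : k) ≠ t) (ha : a ≠ 0) {f : (RatFunc k)[X]}
    (hf : f = X ^ n - C (algebraMap k (RatFunc k) a) * X ^ t + C (RatFunc.X ^ s))
    [Fact (f.map (algebraMap (RatFunc k) Ω)).Splits] :
    IsMultiplyPretransitive f.Gal (f.rootSet Ω) (n - 2) := by
  set x := algebraMap (RatFunc k) Ω RatFunc.X
  have hT : Transcendental k (x ^ s) := transcendental_algebraMap_ratFunc_X_pow hs
  let e : trinomialRoots n t a (x ^ s) ≃ f.rootSet Ω :=
    Equiv.setCongr (coe_trinomialRoots_eq_rootSet (by omega) hf)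
  have hcard := card_trinomialRoots hΩ hco ht (by omega) htk hnt ha hT
  have : Finite (trinomialRoots n t a (x ^ s)) := Nat.finite_of_card_ne_zero (by omega)
  have htrans := isMultiplyPretransitive_of_commutator_le (by omega)
    (commutator_le_stabilizer_of_pow hs le_rfl)
    (isMultiplyPretransitive_trinomialRoots hΩ hco ht htn hn htk hnt ha hT)
  rw [hcard] at htrans
  refine isMultiplyPretransitive_of_equiv e (fun g => ?_) htrans
  let σ : Ω ≃ₐ[RatFunc k] Ω :=
    .ofRingEquiv (f := g.1.1.toRingEquiv) (map_algebraMap_ratFunc g.1.1.toAlgHom g.2)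
  exact ⟨Gal.restrict f Ω σ, fun z => Subtype.ext (Gal.restrict_smul σ (e z)).symm⟩

theorem trdeg_algebraicClosure_ratFunc (k : Type*) [Field k] :
    Algebra.trdeg k (AlgebraicClosure (RatFunc k)) = 1 := by
  rw [← _root_.trdeg_add_eq k (S := RatFunc k), trdeg_ratFunc, trdeg_eq_zero, add_zero]

theorem stmt_8_general (k : Type*) [Field k] [IsAlgClosed k]
    (n s t : ℕ) (hs : 0 < s) (ht : 1 < t) (hco : Nat.gcd n t = 1) (htn : t + 1 < n) (hn : 6 ≤ n)
    (htk : (t : k) ≠ 0) (hnt : (n : k) ≠ t) (a : k) (ha : a ≠ 0) (f : Polynomial (RatFunc k))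
    (hf : f = X ^ n - C (algebraMap k (RatFunc k) a) * X ^ t + C (RatFunc.X ^ s)) :
    haveI : Fact ((f.map (algebraMap (RatFunc k) f.SplittingField)).Splits) :=
      ⟨SplittingField.splits f⟩
    Fintype.card (f.rootSet f.SplittingField) = n ∧
      ((Polynomial.Gal.galActionHom f f.SplittingField).range =
          alternatingGroup (f.rootSet f.SplittingField) ∨
        (Polynomial.Gal.galActionHom f f.SplittingField).range = ⊤) := by
  let Ω := AlgebraicClosure (RatFunc k)
  have : Fact (f.map (algebraMap (RatFunc k) f.SplittingField)).Splits :=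
    ⟨SplittingField.splits f⟩
  have : Fact (f.map (algebraMap (RatFunc k) Ω)).Splits := ⟨IsAlgClosed.splits _⟩
  have hΩ : Algebra.trdeg k Ω ≤ 1 := (trdeg_algebraicClosure_ratFunc k).le
  have hcard : Nat.card (f.rootSet f.SplittingField) = n :=
    (Nat.card_congr (Gal.rootsEquivRoots f Ω)).trans
      (card_rootSet_eq hΩ hs hco ht (by omega) htk hnt ha hf)
  refine ⟨Nat.card_eq_fintype_card.symm.trans hcard, eq_alternatingGroup_or_eq_top ?_⟩
  refine IsMultiplyPretransitive.alternatingGroup_le (α := f.rootSet f.SplittingField) _ ?_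
  rw [hcard]
  exact isMultiplyPretransitive_rootSet_of_splits
    (isMultiplyPretransitive_gal hΩ hs hco ht htn hn htk hnt ha hf)

end GaloisGroup

/-- Abhyankar: over an algebraically closed field `k` of characteristic `2`,
for positive integers `n, s, t` with `gcd(n,t) = 1`, `2 ∣ n`, `t ∣ s` and
`1 < t < n - 3`, the polynomial `Y^n - a·Y^t + X^s` over `k(X)` has `n`
distinct roots in its splitting field, and the image of its Galois group in
the permutation group of the set of roots is either the alternating group or
the full symmetric group on those roots. -/
theorem stmt_8 (k : Type*) [Field k] [IsAlgClosed k] [CharP k 2]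
    (n s t : ℕ) (hn : 0 < n) (hs : 0 < s) (ht1 : 1 < t)
    (hco : Nat.gcd n t = 1) (h2n : 2 ∣ n) (hts : t ∣ s) (htn : t + 3 < n)
    (a : k) (ha : a ≠ 0)
    (f : Polynomial (RatFunc k))
    (hf : f = X ^ n - C (algebraMap k (RatFunc k) a) * X ^ t + C (RatFunc.X ^ s)) :
    haveI : Fact ((f.map (algebraMap (RatFunc k) f.SplittingField)).Splits) :=
      ⟨SplittingField.splits f⟩
    Fintype.card (f.rootSet f.SplittingField) = n ∧
      ((Polynomial.Gal.galActionHom f f.SplittingField).range =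
          alternatingGroup (f.rootSet f.SplittingField) ∨
        (Polynomial.Gal.galActionHom f f.SplittingField).range = ⊤) := by
  have hnk : (n : k) = 0 := (CharP.cast_eq_zero_iff k 2 n).mpr h2n
  have htk : (t : k) ≠ 0 := fun h => by
    have := Nat.dvd_gcd h2n ((CharP.cast_eq_zero_iff k 2 t).mp h)
    omega
  exact stmt_8_general k n s t hs ht1 hco (by omega) (by omega) htk (hnk ▸ htk.symm) a ha f hf
end

section
/- Let k be a field, let a be a nonzero element of k, let n, s, t be positive integers with t < n and gcd(n,t) = 1, and let f = Y^n - a·Y^t + X^s, a monic polynomial of degree n in Y over the rational function field k(X). Let α_1, …, α_n be the roots of f (with multiplicity) in a splitting field of f over k(X), and let f_Y = n·Y^{n-1} - t·a·Y^{t-1} be the ordinary Y-derivative of f. Then the product f_Y(α_1)···f_Y(α_n) equals n^n·X^{s(n-1)} - (n-t)^{n-t}·t^t·a^n·X^{s(t-1)}, which is a nonzero element of k(X); in particular f has no multiple roots in any overfield of k(X). -/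
open Polynomial

/-!
The product of `f'` over the roots of a monic polynomial `f` is the resultant of `f` and `f'`.
For `f = w X ^ n + b X ^ t + c` the polynomial `X f'` is congruent modulo `f` to a binomial in
`X ^ t`, and `f` modulo that binomial is again a binomial, so everything comes down to the
resultant of `a X ^ m - b` and `c X ^ n - d` with `m` and `n` coprime. Euclid's algorithm on the
exponents computes it: modulo `a X ^ m - b`, the binomial `a (c X ^ (n + m) - d)` becomes
`c b X ^ n - a d`. No root of unity enters, so the characteristic does not matter.
-/

section Resultant

theorem isCoprime_of_isUnit_resultant {R : Type*} [CommRing R] {f g : R[X]} {m n : ℕ}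
    (hf : f.natDegree ≤ m) (hg : g.natDegree ≤ n) (hmn : m ≠ 0 ∨ n ≠ 0)
    (h : IsUnit (f.resultant g m n)) : IsCoprime f g := by
  obtain ⟨p, q, -, -, hpq⟩ := exists_mul_add_mul_eq_C_resultant f g hf hg hmn
  obtain ⟨u, hu⟩ := h.exists_left_inv
  refine ⟨C u * p, C u * q, ?_⟩
  calc C u * p * f + C u * q * g = C u * (f * p + g * q) := by ring
    _ = 1 := by rw [hpq, ← C_mul, hu, C_1]

theorem prod_map_aeval_aroots_eq_resultant {K L : Type*} [Field K] [Field L] [Algebra K L]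
    {f g : K[X]} {n : ℕ} (hf : f.Monic) (hsplit : (f.map (algebraMap K L)).Splits)
    (hg : g.natDegree ≤ n) :
    ((f.aroots L).map fun α ↦ aeval α g).prod =
      algebraMap K L (f.resultant g f.natDegree n) := by
  have h := resultant_eq_prod_eval _ (g.map (algebraMap K L)) n (natDegree_map_le.trans hg) hsplit
  simpa [hf.map _ |>.leadingCoeff, eval_map_algebraMap, aroots] using h.symm

theorem resultant_mul_right_of_natDegree_le {R : Type*} [CommRing R] {f g h : R[X]} {m n k : ℕ}
    (hf : f.natDegree ≤ m) (hg : g.natDegree ≤ n) (hh : h.natDegree ≤ k) :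
    f.resultant (g * h) m (n + k) = f.resultant g m n * f.resultant h m k := by
  obtain ⟨i, rfl⟩ := Nat.exists_eq_add_of_le hg
  obtain ⟨j, rfl⟩ := Nat.exists_eq_add_of_le hh
  rw [add_add_add_comm, resultant_add_right_deg _ _ _ _ _ natDegree_mul_le,
    resultant_mul_right _ _ _ _ hf, resultant_add_right_deg _ _ _ _ _ le_rfl,
    resultant_add_right_deg _ _ _ _ _ le_rfl]
  ring

end Resultant

theorem neg_one_pow_mul_add_of_coprime {R : Type*} [Ring R] {m n : ℕ} (h : m.Coprime n) :
    (-1 : R) ^ (m * n + n) = (-1) ^ (m + 1) := by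
  have hodd : ¬(Even m ∧ Even n) := fun ⟨hm, hn⟩ ↦
    Nat.not_coprime_of_dvd_of_dvd one_lt_two hm.two_dvd hn.two_dvd h
  apply neg_one_pow_congr
  simp only [Nat.even_add, Nat.even_mul, Nat.not_even_one]
  tauto

section Binomial

variable {R : Type*} [CommRing R]

theorem natDegree_C_mul_X_pow_sub_C_le (a b : R) (n : ℕ) : (C a * X ^ n - C b).natDegree ≤ n :=
  natDegree_sub_C.trans_le (natDegree_C_mul_X_pow_le a n)

variable [IsDomain R]

theorem resultant_binomial_add_right {a : R} {m : ℕ} (ha : a ≠ 0) (hm : m ≠ 0) (b c d : R)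
    (n : ℕ) :
    resultant (C a * X ^ m - C b) (C c * X ^ (n + m) - C d) m (n + m) =
      resultant (C a * X ^ m - C b) (C (c * b) * X ^ n - C (a * d)) m n := by
  have hf := natDegree_C_mul_X_pow_sub_C_le a b m
  have hcoeff : (C a * X ^ m - C b).coeff m = a := by simp [coeff_C, hm]
  have hmod : C a * (C c * X ^ (n + m) - C d) =
      C (c * b) * X ^ n - C (a * d) + (C a * X ^ m - C b) * (C c * X ^ n) := by
    simp only [C_mul]
    ring
  apply mul_left_cancel₀ (pow_ne_zero m ha)
  rw [← resultant_C_mul_right, hmod, resultant_add_mul_right _ _ _ _ _ _ hf,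
    resultant_add_right_deg _ _ _ _ _ (natDegree_C_mul_X_pow_sub_C_le _ _ _), hcoeff]
  exact Nat.add_le_add_right (natDegree_C_mul_X_pow_le c n) m

theorem resultant_binomial (a b c d : R) {m n : ℕ} (h : m.Coprime n) :
    resultant (C a * X ^ m - C b) (C c * X ^ n - C d) m n =
      (-1) ^ m * (a ^ n * d ^ m - b ^ n * c ^ m) := by
  induction hN : m + n using Nat.strong_induction_on generalizing m n a b c d with
  | h N ih =>
  wlog hmn : m ≤ n generalizing m n a b c d
  · have hsign := neg_one_pow_mul_add_of_coprime (R := R) h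
    rw [resultant_comm, this c d a b h.symm (by lia) (by lia)]
    linear_combination (c ^ m * b ^ n - d ^ m * a ^ n) * hsign
  obtain ⟨k, rfl⟩ := Nat.exists_eq_add_of_le' hmn
  rcases eq_or_ne m 0 with rfl | hm
  · obtain rfl : k = 1 := by simpa using h
    simp
  rcases eq_or_ne a 0 with rfl | ha
  · have hconst : (C 0 * X ^ m - C b : R[X]) = C (-b) := by simp
    have hsign := neg_one_pow_mul_add_of_coprime (R := R) h
    have hcoeff : (C c * X ^ (k + m) - C d).coeff (k + m) = c := by simp [coeff_C, hm]
    rw [hconst, resultant_C_left, hcoeff, neg_pow b, zero_pow (by lia)]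
    linear_combination b ^ (k + m) * c ^ m * hsign
  · rw [resultant_binomial_add_right ha hm, ih (m + k) (by lia) _ _ _ _ (by simpa using h) rfl]
    ring

end Binomial

section Trinomial

variable {R : Type*} [CommRing R] {n t : ℕ}

theorem natDegree_trinomial_le (htn : t ≤ n) (c b w : R) :
    (trinomial 0 t n c b w).natDegree ≤ n := by
  rw [trinomial_def]
  compute_degree
  lia

theorem derivative_trinomial (t n : ℕ) (c b w : R) :
    derivative (trinomial 0 t n c b w) =
      C (n * w) * X ^ (n - 1) + C (t * b) * X ^ (t - 1) := by
  simp only [trinomial_def, derivative_add, derivative_C_mul_X_pow]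
  simp [mul_comm, add_comm]

theorem X_mul_derivative_trinomial (ht : 0 < t) (htn : t ≤ n) (c b w : R) :
    X * derivative (trinomial 0 t n c b w) =
      C ((n - t : ℕ) * -b) * X ^ t - C (n * c) + trinomial 0 t n c b w * C (n : R) := by
  have hn : n ≠ 0 := (ht.trans_le htn).ne'
  rw [derivative_trinomial, trinomial_def, mul_add, mul_left_comm, mul_pow_sub_one hn,
    mul_left_comm, mul_pow_sub_one ht.ne', Nat.cast_sub htn]
  simp only [C_mul, C_sub, C_neg, pow_zero]
  ring

theorem resultant_trinomial_X_mul_derivative (ht : 0 < t) (htn : t < n) (c b w : R) :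
    resultant (trinomial 0 t n c b w) (X * derivative (trinomial 0 t n c b w)) n n =
      w ^ (n - t) * resultant (trinomial 0 t n c b w)
        (C ((n - t : ℕ) * -b) * X ^ t - C (n * c)) n t := by
  have hcoeff : (trinomial 0 t n c b w).coeff n = w := trinomial_leading_coeff' ht htn
  have hadd := resultant_add_right_deg (trinomial 0 t n c b w) _ n t (n - t)
    (natDegree_C_mul_X_pow_sub_C_le ((n - t : ℕ) * -b) (n * c) t)
  rw [Nat.add_sub_cancel' htn.le, hcoeff] at hadd
  rw [X_mul_derivative_trinomial ht htn.le,
    resultant_add_mul_right _ _ _ _ _ (by simp) (natDegree_trinomial_le htn.le c b w), hadd]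

variable [IsDomain R]

theorem resultant_trinomial_binomial (ht : 0 < t) (htn : t < n) (hco : n.Coprime t)
    (c b w u v : R) :
    resultant (trinomial 0 t n c b w) (C u * X ^ t - C v) n t =
      (-1) ^ n * (w ^ t * v ^ n - u ^ (n - t) * (-(b * v + c * u)) ^ t) := by
  have hcoeff : (trinomial 0 t n c b w).coeff n = w := trinomial_leading_coeff' ht htn
  rcases eq_or_ne u 0 with rfl | hu
  · have hconst : (C 0 * X ^ t - C v : R[X]) = C (-v) := by simp
    rw [hconst, resultant_C_right, hcoeff, neg_pow v, zero_pow (by lia)]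
    ring
  have hmod : C u * trinomial 0 t n c b w =
      C (u * w) * X ^ n - C (-(b * v + c * u)) + (C u * X ^ t - C v) * C b := by
    simp only [trinomial_def, C_mul, C_add, C_neg, pow_zero]
    ring
  have hdeg : (C b).natDegree + t ≤ n := by simpa using htn.le
  apply mul_left_cancel₀ (pow_ne_zero t hu)
  rw [← resultant_C_mul_left, hmod, resultant_add_mul_left _ _ _ _ _ hdeg
    (natDegree_C_mul_X_pow_sub_C_le u v t), resultant_binomial _ _ _ _ hco,
    ← Nat.sub_add_cancel htn.le, Nat.add_sub_cancel, pow_add u, mul_pow u w]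
  ring

theorem resultant_trinomial_derivative (ht : 0 < t) (htn : t < n) (hco : n.Coprime t)
    {c : R} (hc : c ≠ 0) (b w : R) :
    resultant (trinomial 0 t n c b w) (derivative (trinomial 0 t n c b w)) n (n - 1) =
      w ^ (n - t) * (n ^ n * w ^ t * c ^ (n - 1) -
        (n - t : ℕ) ^ (n - t) * t ^ t * (-b) ^ n * c ^ (t - 1)) := by
  set f := trinomial 0 t n c b w
  have hdeg : f.natDegree ≤ n := natDegree_trinomial_le htn.le c b w
  have hX : resultant f X n 1 = (-1) ^ n * c := by
    have h := resultant_X_pow_right f n 1 hdeg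
    rwa [pow_one, mul_one, pow_one, trinomial_trailing_coeff' ht htn] at h
  have hmul : resultant f (X * derivative f) n n =
      (-1) ^ n * c * resultant f (derivative f) n (n - 1) := by
    have h := resultant_mul_right_of_natDegree_le hdeg natDegree_X_le
      ((natDegree_derivative_le f).trans (Nat.sub_le_sub_right hdeg 1))
    rwa [Nat.add_sub_cancel' (by lia), hX] at h
  have hred := resultant_trinomial_X_mul_derivative ht htn c b w
  have hsub : -(b * (n * c) + c * ((n - t : ℕ) * -b)) = t * -b * c := by
    push_cast [htn.le]
    ring
  rw [hmul, resultant_trinomial_binomial ht htn hco, hsub] at hred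
  apply mul_left_cancel₀ (mul_ne_zero (pow_ne_zero n (neg_ne_zero.2 one_ne_zero)) hc)
  rw [hred, ← pow_sub_mul_pow (-b) htn.le]
  simp only [mul_pow]
  rw [← pow_sub_one_mul (ht.trans htn).ne' c, ← pow_sub_one_mul ht.ne' c]
  ring

end Trinomial

theorem C_mul_X_pow_sub_C_mul_X_pow_ne_zero {R : Type*} [Ring R] {a b : R} {i j : ℕ} (hij : i ≠ j)
    (h : a ≠ 0 ∨ b ≠ 0) : C a * X ^ i - C b * X ^ j ≠ 0 := by
  intro h0
  have hi : a = 0 := by simpa [coeff_X_pow, hij] using congrArg (coeff · i) h0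
  have hj : b = 0 := by simpa [coeff_X_pow, hij.symm] using congrArg (coeff · j) h0
  exact h.elim (· hi) (· hj)

theorem trinomial_discriminant_ne_zero {R : Type*} [CommRing R] [IsDomain R] {a : R} (ha : a ≠ 0)
    {n s t : ℕ} (hs : 0 < s) (ht : 0 < t) (htn : t < n) (hco : n.Coprime t) :
    C ((n : R) ^ n) * X ^ (s * (n - 1)) -
      C (((n - t : ℕ) : R) ^ (n - t) * t ^ t * a ^ n) * X ^ (s * (t - 1)) ≠ 0 := by
  have hexp : s * (n - 1) ≠ s * (t - 1) := (Nat.mul_lt_mul_of_pos_left (by lia) hs).ne'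
  apply C_mul_X_pow_sub_C_mul_X_pow_ne_zero hexp
  rcases eq_or_ne (n : R) 0 with hn | hn
  · have ht0 : (t : R) ≠ 0 := hco.cast.ne_zero_or_ne_zero.resolve_left (· hn)
    right
    simp [Nat.cast_sub htn.le, hn, ht0, ha]
  · exact .inl (pow_ne_zero n hn)

/-- The `Y`-discriminant of `f = Y^n - a·Y^t + X^s`: the product of the values
of the `Y`-derivative `f_Y = n·Y^{n-1} - t·a·Y^{t-1}` at the roots of `f` (with
multiplicity, in a splitting field) equals
`n^n·X^{s(n-1)} - (n-t)^{n-t}·t^t·a^n·X^{s(t-1)}`, a nonzero element of `k(X)`;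
in particular `f` has no multiple roots in any overfield of `k(X)`. -/
theorem stmt_9 (k : Type*) [Field k] (a : k) (ha : a ≠ 0)
    (n s t : ℕ) (hn : 0 < n) (hs : 0 < s) (ht : 0 < t)
    (htn : t < n) (hco : Nat.gcd n t = 1)
    (f fY : Polynomial (RatFunc k))
    (hf : f = X ^ n - C (algebraMap k (RatFunc k) a) * X ^ t + C (RatFunc.X ^ s))
    (hfY : fY = C (n : RatFunc k) * X ^ (n - 1) -
      C ((t : RatFunc k) * algebraMap k (RatFunc k) a) * X ^ (t - 1))
    (D : RatFunc k)
    (hD : D = (n : RatFunc k) ^ n * RatFunc.X ^ (s * (n - 1)) -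
      ((n - t : ℕ) : RatFunc k) ^ (n - t) * (t : RatFunc k) ^ t *
        (algebraMap k (RatFunc k) a) ^ n * RatFunc.X ^ (s * (t - 1))) :
    ((f.aroots f.SplittingField).map (fun α => aeval α fY)).prod =
        algebraMap (RatFunc k) f.SplittingField D ∧
      D ≠ 0 ∧ f.Separable := by
  have hf' : f = trinomial 0 t n (RatFunc.X ^ s) (-algebraMap k (RatFunc k) a) 1 := by
    rw [hf, trinomial_def, C_neg, C_1, pow_zero]
    ring
  have hmonic : f.Monic := hf' ▸ trinomial_monic ht htn
  have hdeg : f.natDegree = n := hf' ▸ trinomial_natDegree ht htn one_ne_zero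
  have hder : derivative f = fY := by
    rw [hf', derivative_trinomial, hfY]
    simp [sub_eq_add_neg]
  have hdeg' : fY.natDegree ≤ n - 1 := hder ▸ hdeg ▸ natDegree_derivative_le f
  have hX : (RatFunc.X ^ s : RatFunc k) ≠ 0 := pow_ne_zero s RatFunc.X_ne_zero
  have hres : f.resultant fY n (n - 1) = D := by
    rw [← hder, hf', resultant_trinomial_derivative ht htn hco hX, hD]
    simp only [neg_neg, one_pow, one_mul, mul_one, pow_mul]
  have hD0 : D ≠ 0 := by
    have := (map_ne_zero_iff _ (RatFunc.algebraMap_injective k)).2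
      (trinomial_discriminant_ne_zero ha hs ht htn hco)
    simpa [hD] using this
  refine ⟨?_, hD0, ?_⟩
  · rw [prod_map_aeval_aroots_eq_resultant hmonic (SplittingField.splits f) hdeg', hdeg, hres]
  · rw [Separable, hder]
    exact isCoprime_of_isUnit_resultant hdeg.le hdeg' (.inl hn.ne') (hres ▸ hD0.isUnit)
end

section
/- Let k be a field of characteristic p > 0, let q = p^e for a positive integer e, let t be a positive integer not divisible by p, and let n = q + t. Then the polynomial f = Y^n - X·Y^t + 1 over the rational function field k(X) is irreducible in k(X)[Y], has n distinct roots in a splitting field, and its Galois group acts 2-transitively on the set of these n roots. -/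
open Polynomial

/-!
Let `y` be a root of `f = Y ^ n - X * Y ^ t + 1`, where `n = q + t` with `q` and `t` coprime. Then
`X = (y ^ n + 1) / y ^ t`, so `k(X)(y) = k(y)` with `y` transcendental over `k`, and the roots
`z ≠ y` are the `s * y` with `s ^ t * [q](s) * y ^ n = [t](s)`, where
`[m](s) = 1 + s + ⋯ + s ^ (m - 1)`.

The idea is to read this last equation backwards, as a pure equation for `w = y` over `k(s)`: it
is `w ^ n = a` with `a = [t](s) / (s ^ t * [q](s))`, whose degree `-q` is coprime to `n`. If
`x ^ n = a` in an extension `L` of `K = k(s)`, taking norms gives `n * deg (N x) = [L : K] * deg a`,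
so `n` divides `[L : K]`; hence the equation is irreducible in `w` over `k(s)`. By Gauss's lemma it
is irreducible in `k[s, w]`, hence also in `s` over `k(w)`. So the ratios `z / y` are conjugate over
`k(y)`, and the stabilizer of `y` is transitive on the other roots. That `f` is itself irreducible
is the same exchange of variables in `Y ^ n + 1 = Y ^ t * w`, with `w = X`.
-/

namespace Abhyankar

open IntermediateField WithZero

section PurePolynomial

variable {K : Type*} [Field K] {n : ℕ} {a : K}

theorem dvd_finrank_of_pow_eq_algebraMap {L : Type*} [Field L] [Algebra K L] {x : L}
    (v : K →*₀ ℤᵐ⁰) (hv : IsCoprime (log (v a)) n) (hx : x ^ n = algebraMap K L a) :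
    n ∣ Module.finrank K L := by
  have hnorm : Algebra.norm K x ^ n = a ^ Module.finrank K L := by
    rw [← map_pow, hx, Algebra.norm_algebraMap]
  have hlog := congrArg (fun b ↦ log (v b)) hnorm
  simp only [map_pow, log_pow, nsmul_eq_mul] at hlog
  exact Int.natCast_dvd_natCast.1 (hv.symm.dvd_of_dvd_mul_right ⟨_, hlog.symm⟩)

theorem irreducible_X_pow_sub_C_of_isCoprime_log (v : K →*₀ ℤᵐ⁰) (hn : n ≠ 0)
    (hv : IsCoprime (log (v a)) n) : Irreducible (X ^ n - C a : K[X]) := by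
  have hmonic := monic_X_pow_sub_C a hn
  have hdeg : (X ^ n - C a : K[X]).natDegree = n := natDegree_X_pow_sub_C
  obtain ⟨g, hg, hdvd⟩ := exists_irreducible_of_natDegree_ne_zero (hdeg.trans_ne hn)
  have := Fact.mk hg
  have hroot : AdjoinRoot.root g ^ n = algebraMap K (AdjoinRoot g) a := by
    have := AdjoinRoot.mk_eq_zero.2 hdvd
    simpa [sub_eq_zero] using this
  have hn_dvd : n ∣ g.natDegree := by
    rw [← AdjoinRoot.powerBasis_dim hg.ne_zero, ← PowerBasis.finrank]
    exact dvd_finrank_of_pow_eq_algebraMap v hv hroot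
  have hle : (X ^ n - C a : K[X]).natDegree ≤ g.natDegree :=
    hdeg.trans_le (Nat.le_of_dvd hg.natDegree_pos hn_dvd)
  exact (associated_of_dvd_of_natDegree_le hdvd hmonic.ne_zero hle).irreducible hg

end PurePolynomial

section FunctionField

variable {k : Type*} [Field k]

theorem isPrimitive_C_mul_X_pow_sub_C {R : Type*} [CommRing R] {a b : R} {n : ℕ} (hn : n ≠ 0)
    (hab : IsCoprime a b) : (C a * X ^ n - C b).IsPrimitive := by
  refine isPrimitive_iff_isUnit_of_C_dvd.2 fun r hr ↦ ?_
  rw [C_dvd_iff_dvd_coeff] at hr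
  have ha : r ∣ a := by simpa [hn, coeff_C] using hr n
  have hb : r ∣ b := by simpa [hn.symm] using hr 0
  exact hab.isUnit_of_dvd' ha hb

theorem irreducible_C_mul_X_pow_sub_C {A B : k[X]} {n : ℕ} (hn : n ≠ 0) (hA : A ≠ 0) (hB : B ≠ 0)
    (hAB : IsCoprime A B) (hdeg : IsCoprime (B.natDegree - A.natDegree : ℤ) n) :
    Irreducible (C A * X ^ n - C B) := by
  classical
  let φ := algebraMap k[X] (RatFunc k)
  have hφA : φ A ≠ 0 := RatFunc.algebraMap_ne_zero hA
  have hφB : φ B ≠ 0 := RatFunc.algebraMap_ne_zero hB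
  have hlog : log (RatFunc.inftyValuation k (φ B / φ A)) = B.natDegree - A.natDegree := by
    rw [RatFunc.inftyValuation_apply, RatFunc.inftyValuation_of_nonzero _ (div_ne_zero hφB hφA),
      log_exp, RatFunc.intDegree_div hφB hφA, RatFunc.intDegree_polynomial,
      RatFunc.intDegree_polynomial]
  have hirr : Irreducible (X ^ n - C (φ B / φ A)) :=
    irreducible_X_pow_sub_C_of_isCoprime_log
      (RatFunc.inftyValuation k).toMonoidWithZeroHom hn (hlog ▸ hdeg)
  rw [(isPrimitive_C_mul_X_pow_sub_C hn hAB).irreducible_iff_irreducible_map_fraction_map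
    (K := RatFunc k)]
  have hmap : (C A * X ^ n - C B).map φ = C (φ A) * (X ^ n - C (φ B / φ A)) := by
    rw [mul_sub, ← C_mul, mul_div_cancel₀ _ hφA]
    simp
  rw [hmap]
  exact (irreducible_isUnit_mul (isUnit_C.2 hφA.isUnit)).2 hirr

theorem natDegree_map_mul_C_sub_map {R S : Type*} [Semiring R] [Ring S] [NoZeroDivisors S]
    {A B : R[X]} {φ : R →+* S} (hφ : Function.Injective φ) {c : S} (hc : c ≠ 0)
    (hAB : A.natDegree ≠ B.natDegree) :
    (A.map φ * C c - B.map φ).natDegree = max A.natDegree B.natDegree := by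
  have hA : (A.map φ * C c).natDegree = A.natDegree := by
    rw [natDegree_mul_C hc, natDegree_map_eq_of_injective hφ]
  have hB : (B.map φ).natDegree = B.natDegree := natDegree_map_eq_of_injective hφ B
  rcases hAB.lt_or_gt with h | h
  · rw [natDegree_sub_eq_right_of_natDegree_lt (by omega), hB, max_eq_right h.le]
  · rw [natDegree_sub_eq_left_of_natDegree_lt (by omega), hA, max_eq_left h.le]

variable {K : Type*} [Field K] [Algebra k K] {y : K}

theorem irreducible_map_aeval (hy : Transcendental k y) (htop : k⟮y⟯ = ⊤)
    {P : k[X][X]} (hP : Irreducible P) (hdeg : P.natDegree ≠ 0) :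
    Irreducible (P.map (aeval y : k[X] →ₐ[k] K).toRingHom) := by
  let _ : Algebra k[X] K := (aeval y : k[X] →ₐ[k] K).toRingHom.toAlgebra
  have : FaithfulSMul k[X] K :=
    (faithfulSMul_iff_algebraMap_injective _ _).2 (transcendental_iff_injective.1 hy)
  have : IsFractionRing k[X] K := IsFractionRing.of_field k[X] K fun z ↦
    (mem_adjoin_simple_iff k z).1 (htop ▸ mem_top)
  exact ((hP.isPrimitive hdeg).irreducible_iff_irreducible_map_fraction_map (K := K)).1 hP

theorem irreducible_map_mul_C_pow_sub_map (hy : Transcendental k y) (htop : k⟮y⟯ = ⊤) {A B : k[X]}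
    {n : ℕ} (hn : n ≠ 0) (hAB : IsCoprime A B) (hne : A.natDegree ≠ B.natDegree)
    (hdeg : IsCoprime (B.natDegree - A.natDegree : ℤ) n) :
    Irreducible (A.map (algebraMap k K) * C (y ^ n) - B.map (algebraMap k K)) := by
  have hA : A ≠ 0 := by
    rintro rfl
    exact hne (by simp [natDegree_eq_zero_of_isUnit (isCoprime_zero_left.1 hAB)])
  have hB : B ≠ 0 := by
    rintro rfl
    exact hne (by simp [natDegree_eq_zero_of_isUnit (isCoprime_zero_right.1 hAB)])
  have hswap : A.map C * C (X ^ n) - B.map C = Bivariate.swap (C A * X ^ n - C B) := by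
    simp only [map_sub, map_mul, map_pow, Bivariate.swap_C, Bivariate.swap_Y]
  have hirr : Irreducible (A.map C * C (X ^ n) - B.map C) := by
    rw [hswap, MulEquiv.irreducible_iff]
    exact irreducible_C_mul_X_pow_sub_C hn hA hB hAB hdeg
  have hpos : (A.map C * C (X ^ n) - B.map C).natDegree ≠ 0 := by
    rw [natDegree_map_mul_C_sub_map C_injective (pow_ne_zero n X_ne_zero) hne]
    omega
  have hcomp : ((aeval y : k[X] →ₐ[k] K) : k[X] →+* K).comp C = algebraMap k K := by
    ext; simp
  simpa [Polynomial.map_map, hcomp] using irreducible_map_aeval hy htop hirr hpos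

end FunctionField

section GeomSum

theorem isCoprime_self_geom_sum {R : Type*} [CommRing R] (x : R) {n : ℕ} (hn : n ≠ 0) :
    IsCoprime x (∑ i ∈ Finset.range n, x ^ i) := by
  obtain ⟨m, rfl⟩ := Nat.exists_eq_succ_of_ne_zero hn
  rw [geom_sum_succ]
  exact ⟨-∑ i ∈ Finset.range m, x ^ i, 1, by ring⟩

theorem isCoprime_geom_sum {R : Type*} [CommRing R] (x : R) {m n : ℕ} (h : m.Coprime n) :
    IsCoprime (∑ i ∈ Finset.range m, x ^ i) (∑ i ∈ Finset.range n, x ^ i) := by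
  induction m, n using Nat.gcd.induction with
  | H0 n =>
    obtain rfl : n = 1 := by simpa using h
    simpa using isCoprime_one_right
  | H1 m n hm ih =>
    have hstep (d : ℕ) :
        IsCoprime (∑ i ∈ Finset.range m, x ^ i) (∑ i ∈ Finset.range (n % m + m * d), x ^ i) := by
      induction d with
      | zero => exact (ih (by rwa [Nat.Coprime, ← Nat.gcd_rec])).symm
      | succ d ihd =>
        have hshift : ∑ i ∈ Finset.range (n % m + m * (d + 1)), x ^ i =
            x ^ m * ∑ i ∈ Finset.range (n % m + m * d), x ^ i +
              ∑ i ∈ Finset.range m, x ^ i := by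
          rw [show n % m + m * (d + 1) = m + (n % m + m * d) by ring, Finset.sum_range_add,
            Finset.mul_sum, add_comm]
          simp only [pow_add]
        rw [hshift]
        have hcop := (isCoprime_self_geom_sum x hm.ne').symm.pow_right (n := m) |>.mul_right ihd
        simpa using hcop.add_mul_left_right 1
    simpa only [Nat.mod_add_div] using hstep (n / m)

theorem isCoprime_X_pow_mul_geom_sum_X {R : Type*} [CommRing R] {q t : ℕ} (ht : t ≠ 0)
    (hqt : q.Coprime t) :
    IsCoprime (X ^ t * ∑ i ∈ Finset.range q, X ^ i : R[X]) (∑ i ∈ Finset.range t, X ^ i) :=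
  (isCoprime_self_geom_sum X ht).pow_left.mul_left (isCoprime_geom_sum X hqt)

theorem natDegree_geom_sum_X (R : Type*) [CommRing R] [Nontrivial R] (n : ℕ) :
    (∑ i ∈ Finset.range n, X ^ i : R[X]).natDegree = n - 1 := by
  rcases eq_or_ne n 0 with rfl | hn
  · simp
  have h := congrArg natDegree (geom_sum_mul (X : R[X]) n)
  rw [← C_1, (monic_geom_sum_X hn).natDegree_mul (monic_X_sub_C 1), natDegree_X_sub_C,
    natDegree_X_pow_sub_C] at h
  omega

theorem natDegree_X_pow_mul_geom_sum_X (R : Type*) [CommRing R] [Nontrivial R] {q t : ℕ}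
    (hq : q ≠ 0) :
    (X ^ t * ∑ i ∈ Finset.range q, X ^ i : R[X]).natDegree = t + q - 1 := by
  rw [(monic_X_pow t).natDegree_mul (monic_geom_sum_X hq), natDegree_X_pow, natDegree_geom_sum_X]
  omega

end GeomSum

section Automorphisms

theorem adjoin_simple_gen_eq_top (F : Type*) {E : Type*} [Field F] [Field E] [Algebra F E]
    (α : E) : F⟮AdjoinSimple.gen F α⟯ = ⊤ :=
  lift_injective _ (by rw [lift_adjoin_simple, lift_top, AdjoinSimple.coe_gen])

variable {F L : Type*} [Field F] [Field L] [Algebra F L] [Normal F L] {f : F[X]} {α β γ δ : L}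

theorem exists_algEquiv_of_irreducible (hf : Irreducible f) (hα : aeval α f = 0)
    (hβ : aeval β f = 0) : ∃ σ : L ≃ₐ[F] L, σ α = β := by
  have hmin : IsConjRoot F β α := by
    rw [IsConjRoot, ← minpoly.eq_of_irreducible hf hα, ← minpoly.eq_of_irreducible hf hβ]
  exact hmin.exists_algEquiv

theorem exists_algEquiv_pair_of_stabilizer (hf : Irreducible f)
    (hstab : ∀ {γ x z : L}, aeval γ f = 0 → aeval x f = 0 → aeval z f = 0 → x ≠ γ → z ≠ γ →
      ∃ σ : L ≃ₐ[F] L, σ γ = γ ∧ σ x = z)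
    (hα : aeval α f = 0) (hβ : aeval β f = 0) (hγ : aeval γ f = 0) (hδ : aeval δ f = 0)
    (hαβ : α ≠ β) (hγδ : γ ≠ δ) : ∃ σ : L ≃ₐ[F] L, σ α = γ ∧ σ β = δ := by
  obtain ⟨τ, rfl⟩ := exists_algEquiv_of_irreducible hf hα hγ
  have hτβ : aeval (τ β) f = 0 := by rw [aeval_algHom_apply τ, hβ, map_zero]
  obtain ⟨σ, hσα, hσβ⟩ := hstab hγ hτβ hδ (τ.injective.ne hαβ.symm) hγδ.symm
  exact ⟨τ.trans σ, hσα, hσβ⟩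

end Automorphisms

section Root

/-- Abhyankar's polynomial `Y ^ (q + t) - X * Y ^ t + 1` in the variable `Y` over `k(X)`. -/
noncomputable def abhyankarTrinomial (k : Type*) [Field k] (q t : ℕ) : (RatFunc k)[X] :=
  X ^ (q + t) - C RatFunc.X * X ^ t + 1

variable {k : Type*} [Field k] {q t : ℕ}

theorem natDegree_abhyankarTrinomial (hq : q ≠ 0) :
    (abhyankarTrinomial k q t).natDegree = q + t := by
  have hlt : (C RatFunc.X * X ^ t : (RatFunc k)[X]).natDegree <
      (X ^ (q + t) : (RatFunc k)[X]).natDegree := by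
    rw [natDegree_X_pow]
    exact (natDegree_C_mul_X_pow_le _ _).trans_lt (by omega)
  rw [abhyankarTrinomial, ← C_1, natDegree_add_C, natDegree_sub_eq_left_of_natDegree_lt hlt,
    natDegree_X_pow]

theorem irreducible_abhyankarTrinomial (hq : q ≠ 0) : Irreducible (abhyankarTrinomial k q t) := by
  have hcop : IsCoprime (X ^ t : k[X]) (X ^ (q + t) + 1) := ⟨-X ^ q, 1, by ring⟩
  have hne : (X ^ t : k[X]).natDegree ≠ (X ^ (q + t) + 1 : k[X]).natDegree := by
    rw [← C_1, natDegree_X_pow_add_C, natDegree_X_pow]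
    omega
  have hirr := irreducible_map_mul_C_pow_sub_map RatFunc.transcendental_X RatFunc.adjoin_X
    one_ne_zero hcop hne (mod_cast isCoprime_one_right)
  rw [← (Associated.refl _).neg_left.irreducible_iff] at hirr
  convert hirr using 1
  simp only [abhyankarTrinomial, RatFunc.algebraMap_eq_C, Polynomial.map_pow, map_X, pow_one,
    X_pow_mul_C, Polynomial.map_add, Polynomial.map_one, neg_sub]
  ring

theorem separable_abhyankarTrinomial (hq : q ≠ 0) (ht : t ≠ 0) (hqt : q.Coprime t) :
    (abhyankarTrinomial k q t).Separable := by
  rw [separable_iff_derivative_ne_zero (irreducible_abhyankarTrinomial hq)]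
  intro hder
  have hcoeff {m : ℕ} (hm : m ≠ 0) : (abhyankarTrinomial k q t).coeff m * m = 0 := by
    obtain ⟨i, rfl⟩ := Nat.exists_eq_succ_of_ne_zero hm
    simpa [coeff_derivative] using congrArg (coeff · i) hder
  have hlead : ((q + t : ℕ) : RatFunc k) = 0 := by
    simpa [abhyankarTrinomial, coeff_X_pow, coeff_one, coeff_C, hq, ht] using
      hcoeff (m := q + t) (by omega)
  have htail : (t : RatFunc k) = 0 := by
    simpa [abhyankarTrinomial, coeff_X_pow, coeff_one, hq, ht, RatFunc.X_ne_zero] using hcoeff ht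
  have hcop := Nat.Coprime.cast (R := RatFunc k) ((Nat.coprime_add_self_left).2 hqt)
  rw [hlead, htail] at hcop
  exact not_isCoprime_zero_zero hcop

theorem aeval_abhyankarTrinomial_eq_zero_iff {R : Type*} [CommRing R] [Algebra (RatFunc k) R]
    {y : R} : aeval y (abhyankarTrinomial k q t) = 0 ↔
      y ^ (q + t) + 1 = algebraMap (RatFunc k) R RatFunc.X * y ^ t := by
  rw [← sub_eq_zero (a := _ + _)]
  simp only [abhyankarTrinomial, map_add, map_sub, map_mul, map_pow, aeval_X, aeval_C, map_one]
  rw [sub_add_eq_add_sub]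

theorem ne_zero_of_aeval_abhyankarTrinomial {R : Type*} [CommRing R] [Nontrivial R]
    [Algebra (RatFunc k) R] {y : R} (ht : t ≠ 0) (hy : aeval y (abhyankarTrinomial k q t) = 0) :
    y ≠ 0 := by
  rintro rfl
  simp [aeval_abhyankarTrinomial_eq_zero_iff, ht] at hy

variable {K : Type*} [Field K] [Algebra k K] [Algebra (RatFunc k) K] {y : K}

theorem algebraMap_X_mem_adjoin (ht : t ≠ 0) (hy : aeval y (abhyankarTrinomial k q t) = 0) :
    algebraMap (RatFunc k) K RatFunc.X ∈ k⟮y⟯ := by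
  have hy0 := ne_zero_of_aeval_abhyankarTrinomial ht hy
  rw [eq_div_of_mul_eq (pow_ne_zero t hy0) (aeval_abhyankarTrinomial_eq_zero_iff.1 hy).symm]
  have hmem := mem_adjoin_simple_self k y
  exact div_mem (add_mem (pow_mem hmem _) (one_mem _)) (pow_mem hmem _)

variable [IsScalarTower k (RatFunc k) K]

theorem algebraMap_mem_of_algebraMap_X_mem {F : IntermediateField k K}
    (hX : algebraMap (RatFunc k) K RatFunc.X ∈ F) (r : RatFunc k) :
    algebraMap (RatFunc k) K r ∈ F := by
  have hle : k⟮(RatFunc.X : RatFunc k)⟯ ≤ F.comap (IsScalarTower.toAlgHom k (RatFunc k) K) :=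
    adjoin_simple_le_iff.2 hX
  exact hle (RatFunc.adjoin_X (K := k) ▸ mem_top)

theorem transcendental_of_aeval_abhyankarTrinomial (ht : t ≠ 0)
    (hy : aeval y (abhyankarTrinomial k q t) = 0) : Transcendental k y := by
  intro halg
  have := isAlgebraic_adjoin_simple halg.isIntegral
  have hX : IsAlgebraic k (algebraMap (RatFunc k) K RatFunc.X) :=
    IntermediateField.isAlgebraic_iff.1 (Algebra.IsAlgebraic.isAlgebraic
      (⟨_, algebraMap_X_mem_adjoin ht hy⟩ : k⟮y⟯))
  exact RatFunc.transcendental_X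
    ((isAlgebraic_algebraMap_iff (algebraMap (RatFunc k) K).injective).1 hX)

theorem adjoin_eq_top_of_aeval_abhyankarTrinomial (ht : t ≠ 0)
    (hy : aeval y (abhyankarTrinomial k q t) = 0) (htop : (RatFunc k)⟮y⟯ = ⊤) : k⟮y⟯ = ⊤ := by
  let F := k⟮y⟯.toSubfield.toIntermediateField (K := RatFunc k)
    (algebraMap_mem_of_algebraMap_X_mem (algebraMap_X_mem_adjoin ht hy))
  have hle : (RatFunc k)⟮y⟯ ≤ F := adjoin_simple_le_iff.2 (mem_adjoin_simple_self k y)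
  exact eq_top_iff.2 fun z _ ↦ hle (htop ▸ mem_top)

end Root

section Ratio

/-- The polynomial `S ^ t * [q](S) * y ^ (q + t) - [t](S)` in `S`, where
`[m](S) = 1 + S + ⋯ + S ^ (m - 1)`. It vanishes at the ratio `z / y` whenever `y ≠ 0` and
`z ≠ y` are roots of `Y ^ (q + t) - c * Y ^ t + 1` for some `c`. -/
noncomputable def ratioPolynomial {K : Type*} [CommRing K] (q t : ℕ) (y : K) : K[X] :=
  X ^ t * (∑ i ∈ Finset.range q, X ^ i) * C (y ^ (q + t)) - ∑ i ∈ Finset.range t, X ^ i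

variable {q t : ℕ}

theorem irreducible_ratioPolynomial {k K : Type*} [Field k] [Field K] [Algebra k K] {y : K}
    (hq : q ≠ 0) (ht : t ≠ 0) (hqt : q.Coprime t) (hy : Transcendental k y) (htop : k⟮y⟯ = ⊤) :
    Irreducible (ratioPolynomial q t y) := by
  have hA := natDegree_X_pow_mul_geom_sum_X (t := t) k hq
  have hB := natDegree_geom_sum_X k t
  have hdeg : ((∑ i ∈ Finset.range t, X ^ i : k[X]).natDegree -
      (X ^ t * ∑ i ∈ Finset.range q, X ^ i : k[X]).natDegree : ℤ) = -q := by
    rw [hA, hB]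
    omega
  have hcop : IsCoprime (-q : ℤ) (q + t : ℕ) := by
    rw [IsCoprime.neg_left_iff, Nat.isCoprime_iff_coprime]
    simpa using hqt
  have hirr := irreducible_map_mul_C_pow_sub_map hy htop (n := q + t) (by omega)
    (isCoprime_X_pow_mul_geom_sum_X (R := k) ht hqt) (by omega) (hdeg ▸ hcop)
  simpa [ratioPolynomial, Polynomial.map_sum] using hirr

theorem eval_div_ratioPolynomial_eq_zero {E : Type*} [Field E] {y z c : E} (hy : y ≠ 0)
    (hyz : z ≠ y) (hroot : y ^ (q + t) + 1 = c * y ^ t)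
    (hz : z ^ (q + t) + 1 = c * z ^ t) : (ratioPolynomial q t y).eval (z / y) = 0 := by
  obtain ⟨s, rfl⟩ : ∃ s, z = s * y := ⟨z / y, (div_mul_cancel₀ z hy).symm⟩
  have hs : s - 1 ≠ 0 := sub_ne_zero.2 fun h ↦ hyz (by rw [h, one_mul])
  rw [mul_div_cancel_right₀ s hy]
  have hgeom := geom_sum_mul s
  refine (mul_eq_zero.1 ?_).resolve_right hs
  simp only [ratioPolynomial, eval_sub, eval_mul, eval_C, eval_pow, eval_X, eval_finsetSum]
  rw [sub_mul, mul_right_comm, mul_assoc (s ^ t), hgeom, hgeom]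
  linear_combination hz - s ^ t * hroot

end Ratio

section Galois

variable {k L : Type*} [Field k] [Field L] [Algebra k L] [Algebra (RatFunc k) L]
  [IsScalarTower k (RatFunc k) L] {q t : ℕ}

theorem irreducible_ratioPolynomial_adjoinSimple_gen (hq : q ≠ 0) (ht : t ≠ 0) (hqt : q.Coprime t)
    {γ : L} (hγ : aeval γ (abhyankarTrinomial k q t) = 0) :
    Irreducible (ratioPolynomial q t (AdjoinSimple.gen (RatFunc k) γ)) := by
  have hgen : aeval (AdjoinSimple.gen (RatFunc k) γ) (abhyankarTrinomial k q t) = 0 := by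
    apply (algebraMap (RatFunc k)⟮γ⟯ L).injective
    rw [← aeval_algebraMap_apply, AdjoinSimple.algebraMap_gen, hγ, map_zero]
  exact irreducible_ratioPolynomial hq ht hqt (transcendental_of_aeval_abhyankarTrinomial ht hgen)
    (adjoin_eq_top_of_aeval_abhyankarTrinomial ht hgen (adjoin_simple_gen_eq_top _ γ))

theorem exists_algEquiv_fixing_root [Normal (RatFunc k) L] (hq : q ≠ 0) (ht : t ≠ 0)
    (hqt : q.Coprime t) {γ x z : L} (hγ : aeval γ (abhyankarTrinomial k q t) = 0)
    (hx : aeval x (abhyankarTrinomial k q t) = 0) (hz : aeval z (abhyankarTrinomial k q t) = 0)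
    (hxγ : x ≠ γ) (hzγ : z ≠ γ) : ∃ σ : L ≃ₐ[RatFunc k] L, σ γ = γ ∧ σ x = z := by
  have hγ0 := ne_zero_of_aeval_abhyankarTrinomial ht hγ
  have hratio {w : L} (hw : aeval w (abhyankarTrinomial k q t) = 0) (hwγ : w ≠ γ) :
      aeval (w / γ) (ratioPolynomial q t (AdjoinSimple.gen (RatFunc k) γ)) = 0 := by
    have heval := eval_div_ratioPolynomial_eq_zero hγ0 hwγ
      (aeval_abhyankarTrinomial_eq_zero_iff.1 hγ) (aeval_abhyankarTrinomial_eq_zero_iff.1 hw)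
    simpa [ratioPolynomial] using heval
  obtain ⟨σ, hσ⟩ := exists_algEquiv_of_irreducible
    (irreducible_ratioPolynomial_adjoinSimple_gen hq ht hqt hγ) (hratio hx hxγ) (hratio hz hzγ)
  have hσγ : σ γ = γ := σ.commutes (AdjoinSimple.gen (RatFunc k) γ)
  refine ⟨σ.restrictScalars (RatFunc k), hσγ, ?_⟩
  rw [map_div₀, hσγ] at hσ
  exact (div_left_inj' hγ0).1 hσ

end Galois

end Abhyankar

open Abhyankar in
theorem stmt_10_general (k : Type*) [Field k] (q t : ℕ) (hq : 0 < q) (ht : 0 < t)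
    (hqt : q.Coprime t) (f : Polynomial (RatFunc k))
    (hf : f = X ^ (q + t) - C RatFunc.X * X ^ t + 1) :
    haveI : Fact (f.map (algebraMap (RatFunc k) f.SplittingField)).Splits :=
      ⟨SplittingField.splits f⟩
    Irreducible f ∧
      Fintype.card (f.rootSet f.SplittingField) = q + t ∧
      ∀ α β γ δ : f.rootSet f.SplittingField, α ≠ β → γ ≠ δ →
        ∃ σ : f.Gal, Polynomial.Gal.galActionHom f f.SplittingField σ α = γ ∧
          Polynomial.Gal.galActionHom f f.SplittingField σ β = δ := by
  have : Fact (f.map (algebraMap (RatFunc k) f.SplittingField)).Splits := ⟨SplittingField.splits f⟩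
  obtain rfl : f = abhyankarTrinomial k q t := hf
  have hirr := irreducible_abhyankarTrinomial (k := k) (t := t) hq.ne'
  refine ⟨hirr, ?_, fun α β γ δ hαβ hγδ ↦ ?_⟩
  · rw [card_rootSet_eq_natDegree (separable_abhyankarTrinomial hq.ne' ht.ne' hqt)
      (SplittingField.splits _), natDegree_abhyankarTrinomial hq.ne']
  obtain ⟨σ, hσα, hσβ⟩ := exists_algEquiv_pair_of_stabilizer hirr
    (exists_algEquiv_fixing_root hq.ne' ht.ne' hqt) (mem_rootSet.1 α.2).2 (mem_rootSet.1 β.2).2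
    (mem_rootSet.1 γ.2).2 (mem_rootSet.1 δ.2).2 (Subtype.coe_ne_coe.2 hαβ)
    (Subtype.coe_ne_coe.2 hγδ)
  refine ⟨Gal.restrict _ _ σ, Subtype.ext ?_, Subtype.ext ?_⟩
  · rw [Gal.galActionHom_restrict, hσα]
  · rw [Gal.galActionHom_restrict, hσβ]

/-- Abhyankar: for `q = p^e` and `n = q + t` with `p ∤ t`, the polynomial
`f = Y^n - X·Y^t + 1` over `k(X)` is irreducible, has `n` distinct roots in
its splitting field, and its Galois group acts `2`-transitively on the set of
those roots. -/
theorem stmt_10 (p : ℕ) (hp : p.Prime) (e : ℕ) (he : 0 < e)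
    (k : Type*) [Field k] [CharP k p]
    (q : ℕ) (hq : q = p ^ e)
    (t : ℕ) (ht : 0 < t) (hpt : ¬ p ∣ t)
    (n : ℕ) (hn : n = q + t)
    (f : Polynomial (RatFunc k))
    (hf : f = X ^ n - C RatFunc.X * X ^ t + 1) :
    haveI : Fact (f.map (algebraMap (RatFunc k) f.SplittingField)).Splits :=
      ⟨SplittingField.splits f⟩
    Irreducible f ∧
      Fintype.card (f.rootSet f.SplittingField) = n ∧
      ∀ α β γ δ : f.rootSet f.SplittingField, α ≠ β → γ ≠ δ →
        ∃ σ : f.Gal, Polynomial.Gal.galActionHom f f.SplittingField σ α = γ ∧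
          Polynomial.Gal.galActionHom f f.SplittingField σ β = δ := by
  subst hq hn
  exact stmt_10_general k (p ^ e) t (pow_pos hp.pos e) ht
    ((hp.coprime_iff_not_dvd.2 hpt).pow_left e) f hf
end

section
/- Let k be a field of characteristic p > 0, let t be a positive integer not divisible by p, and let n = p + t. Then the Galois group of the polynomial f = Y^n - X·Y^t + 1 over the rational function field k(X) contains an element whose induced permutation of the n roots of f (in a splitting field) is a cycle of length p. -/
open Polynomial

open scoped Classical

/-!
Let `A` be the ring of power series over an algebraic closure of `k` in a variable `s`, let `K` be
its fraction field, and embed `k(X)` in `K` by `X ↦ s⁻ᵗ`. Substituting `Y = s / U` turns the roots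
of `f` into those of `U ^ (p + t) - U ^ p + s ^ (p + t)`, which reduces to `U ^ p (U ^ t - 1)`
modulo `s`. By Hensel's lemma the simple roots of `U ^ t - 1` lift, so all but at most `p` roots
of `f` lie in `K`. At each of the remaining roots `U` reduces to `0`, so `1 - U ^ t` is a unit and
`U ^ p (1 - U ^ t) = s ^ (p + t)`. Taking norms, `p` divides `(p + t) [Ω : K]`, hence `[Ω : K]`,
where `Ω` is the splitting field of `f` over `K`. An element of order `p` of `Gal(Ω/K)` then moves
at most `p` roots, so it is a `p`-cycle.
-/

section Henselian

open IsLocalRing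

theorem henselianLocalRing_of_isAdicComplete (R : Type*) [CommRing R] [IsLocalRing R]
    [IsAdicComplete (maximalIdeal R) R] : HenselianLocalRing R :=
  have := IsAdicComplete.henselianRing R (maximalIdeal R)
  ⟨fun f hf a ha hsimple ↦
    HenselianRing.is_henselian f hf a ha (hsimple.map (Ideal.Quotient.mk (maximalIdeal R)))⟩

theorem henselianLocalRing_powerSeries (k : Type*) [Field k] :
    HenselianLocalRing (PowerSeries k) :=
  have : IsAdicComplete (maximalIdeal (PowerSeries k)) (PowerSeries k) := by
    rw [PowerSeries.maximalIdeal_eq_span_X]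
    infer_instance
  henselianLocalRing_of_isAdicComplete (PowerSeries k)

theorem exists_eq_mul_splits_of_map_residue_eq {R : Type*} [CommRing R] [HenselianLocalRing R]
    (Z : Finset (ResidueField R)) {g : (ResidueField R)[X]} (hg : ∀ ζ ∈ Z, g.eval ζ ≠ 0)
    {q : R[X]} (hq : q.Monic) (hqg : q.map (residue R) = g * ∏ ζ ∈ Z, (X - C ζ)) :
    ∃ r h : R[X], r.Monic ∧ r.map (residue R) = g ∧ h.Splits ∧ q = r * h := by
  induction Z using Finset.induction_on generalizing q with
  | empty => exact ⟨q, 1, hq, by simpa using hqg, Splits.one, (mul_one q).symm⟩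
  | insert ζ Z hζ ih =>
    have hqg' : q.map (residue R) = (X - C ζ) * (g * ∏ ξ ∈ Z, (X - C ξ)) := by
      rw [hqg, Finset.prod_insert hζ, mul_left_comm]
    have hroot : aeval ζ q = 0 := by
      rw [aeval_def, ResidueField.algebraMap_eq, ← eval_map, hqg', eval_mul]; simp
    have hsimple : aeval ζ (derivative q) ≠ 0 := by
      rw [aeval_def, ResidueField.algebraMap_eq, ← eval_map, ← derivative_map, hqg']
      simpa [derivative_mul, eval_prod, Finset.prod_eq_zero_iff, sub_eq_zero] using
        ⟨hg ζ (Finset.mem_insert_self ζ Z), hζ⟩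
    have lift_root := ((HenselianLocalRing.TFAE R).out 0 1 rfl rfl).mp ‹_›
    obtain ⟨a, ha, rfl⟩ := lift_root q hq ζ hroot hsimple
    obtain ⟨q', rfl⟩ := dvd_iff_isRoot.mpr ha
    have hq'g : q'.map (residue R) = g * ∏ ξ ∈ Z, (X - C ξ) := by
      refine mul_left_cancel₀ (X_sub_C_ne_zero (residue R a)) ?_
      simpa using hqg'
    obtain ⟨r, h, hr, hrg, hh, rfl⟩ := ih (fun ξ hξ ↦ hg ξ (Finset.mem_insert_of_mem hξ))
      ((monic_X_sub_C a).of_mul_monic_left hq) hq'g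
    exact ⟨r, (X - C a) * h, hr, hrg, (Splits.X_sub_C a).mul hh, mul_left_comm ..⟩

theorem isWeaklyEisensteinAt_maximalIdeal_of_map_residue_eq_X_pow {R : Type*} [CommRing R]
    [IsLocalRing R] {r : R[X]} (hr : r.Monic) {m : ℕ} (h : r.map (residue R) = X ^ m) :
    r.IsWeaklyEisensteinAt (maximalIdeal R) where
  mem {i} hi := by
    have hm : r.natDegree = m := by
      rw [← hr.natDegree_map (residue R), h, natDegree_X_pow]
    rw [← residue_eq_zero_iff, ← coeff_map, h, coeff_X_pow, if_neg (by lia)]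

theorem isUnit_one_sub_pow_of_aeval_eq_zero {R S : Type*} [CommRing R]
    [IsLocalRing R] [CommRing S] [Algebra R S] [Algebra.IsIntegral R S] {r : R[X]} (hr : r.Monic)
    (hrm : r.IsWeaklyEisensteinAt (maximalIdeal R)) {u : S} (hu : aeval u r = 0)
    {t : ℕ} (ht : t ≠ 0) : IsUnit (1 - u ^ t) := by
  by_contra hunit
  obtain ⟨M, hM, hmem⟩ := exists_max_ideal_of_mem_nonunits hunit
  have hmM : (maximalIdeal R).map (algebraMap R S) ≤ M := by
    have := Ideal.isMaximal_comap_of_isIntegral_of_isMaximal (R := R) M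
    rw [Ideal.map_le_iff_le_comap, ← eq_maximalIdeal this]
  have huM : u ∈ M := hM.isPrime.mem_of_pow_mem _ <|
    hmM (hrm.pow_natDegree_le_of_aeval_zero_of_monic_mem_map hu hr _ (natDegree_map_le))
  refine (Ideal.ne_top_iff_one M).mp hM.ne_top ?_
  simpa using M.add_mem hmem (M.pow_mem_of_mem huM t (Nat.pos_of_ne_zero ht))

end Henselian

theorem dvd_mul_finrank_of_pow_mul_eq {A K L : Type*} [CommRing A] [IsDomain A]
    [IsIntegrallyClosed A] [Field K] [Algebra A K] [IsFractionRing A K] [Field L] [Algebra K L]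
    [Algebra A L] [IsScalarTower A K L] {ϖ : A} (hϖ : Prime ϖ)
    {u v : integralClosure A L} (hv : IsUnit v) {m n : ℕ}
    (h : u ^ m * v = algebraMap A _ (ϖ ^ n)) : m ∣ n * Module.finrank K L := by
  let N : integralClosure A L →* A := Algebra.intNormAux A K L _
  have hN : N (algebraMap A _ (ϖ ^ n)) = ϖ ^ (n * Module.finrank K L) := by
    apply IsFractionRing.injective A K
    rw [Algebra.map_intNormAux, ← IsScalarTower.algebraMap_apply,
      IsScalarTower.algebraMap_apply A K L, Algebra.norm_algebraMap, ← map_pow, pow_mul]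
  have hassoc : Associated (N u ^ m) (ϖ ^ (n * Module.finrank K L)) := by
    obtain ⟨w, hw⟩ := hv.map N
    exact ⟨w, by rw [hw, ← hN, ← h, map_mul, map_pow]⟩
  have exponent_eq {i j : ℕ} (h : Associated (ϖ ^ i) (ϖ ^ j)) : i = j :=
    le_antisymm ((pow_dvd_pow_iff hϖ.ne_zero hϖ.not_isUnit).mp h.dvd)
      ((pow_dvd_pow_iff hϖ.ne_zero hϖ.not_isUnit).mp h.symm.dvd)
  rcases eq_or_ne m 0 with rfl | hm
  · rw [pow_zero, ← pow_zero ϖ] at hassoc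
    rw [← exponent_eq hassoc]
  · obtain ⟨j, -, hj⟩ := (dvd_prime_pow hϖ _).mp ((dvd_pow_self _ hm).trans hassoc.dvd)
    have := (hj.symm.pow_pow (n := m)).trans hassoc
    rw [← pow_mul] at this
    exact ⟨j, by rw [← exponent_eq this, mul_comm]⟩

section Galois

variable {F : Type*} [Field F] (f : F[X])

theorem card_support_galActionHom_eq (E E' : Type*) [Field E] [Algebra F E] [Field E']
    [Algebra F E'] [Fact (f.map (algebraMap F E)).Splits] [Fact (f.map (algebraMap F E')).Splits]
    (σ : f.Gal) :
    (Gal.galActionHom f E σ).support.card = (Gal.galActionHom f E' σ).support.card := by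
  refine Finset.card_equiv ((Gal.rootsEquivRoots f E).symm.trans (Gal.rootsEquivRoots f E')) ?_
  intro x
  obtain ⟨x, rfl⟩ := (Gal.rootsEquivRoots f E).surjective x
  simp [Equiv.Perm.mem_support, Gal.galActionHom, Gal.smul_def]

variable {K Ω : Type*} [Field K] [Field Ω] [Algebra F K] [Algebra F Ω] [Algebra K Ω]
  [IsScalarTower F K Ω]

theorem card_support_galActionHom_restrict_le [Fact (f.map (algebraMap F Ω)).Splits]
    (σ : Gal(Ω/K)) :
    (Gal.galActionHom f Ω (Gal.restrict f Ω (σ.restrictScalars F))).support.card ≤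
      (f.rootSet Ω \ Set.range (algebraMap K Ω)).ncard := by
  rw [← Set.ncard_coe_finset, ← Set.ncard_image_of_injective _ Subtype.val_injective]
  refine Set.ncard_le_ncard ?_ ((f.rootSet_finite Ω).sdiff)
  rintro _ ⟨x, hx, rfl⟩
  refine ⟨x.2, fun ⟨c, hc⟩ ↦ ?_⟩
  refine Equiv.Perm.mem_support.mp hx (Subtype.ext ?_)
  rw [Gal.galActionHom_restrict, ← hc]
  exact σ.commutes c

theorem injective_restrict_restrictScalars [Fact (f.map (algebraMap F Ω)).Splits]
    [IsSplittingField K Ω (f.map (algebraMap F K))] :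
    Function.Injective
      ((Gal.restrict f Ω).comp (AlgEquiv.restrictScalarsHom F : Gal(Ω/K) →* Gal(Ω/F))) := by
  rw [injective_iff_map_eq_one]
  intro σ hσ
  refine AlgEquiv.coe_toAlgHom_injective (AlgHom.ext_of_adjoin_eq_top
    (IsSplittingField.adjoin_rootSet Ω (f.map (algebraMap F K))) fun x hx ↦ ?_)
  have hx' : x ∈ f.rootSet Ω := by
    rwa [rootSet, aroots_map] at hx
  have hσ_one : Gal.restrict f Ω (σ.restrictScalars F) = 1 := hσ
  have hσx := Gal.galActionHom_restrict f Ω (σ.restrictScalars F) ⟨x, hx'⟩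
  rw [hσ_one, map_one] at hσx
  exact hσx.symm

theorem exists_isCycle_galActionHom (E : Type*) [Field E] [Algebra F E]
    [Fact (f.map (algebraMap F E)).Splits]
    [hΩ : IsSplittingField K Ω (f.map (algebraMap F K))] {p : ℕ} (hp : p.Prime)
    (hdvd : p ∣ Nat.card Gal(Ω/K))
    (hroots : (f.rootSet Ω \ Set.range (algebraMap K Ω)).ncard < 2 * p) :
    ∃ σ : f.Gal, (Gal.galActionHom f E σ).IsCycle ∧ (Gal.galActionHom f E σ).support.card = p := by
  have : Fact (f.map (algebraMap F Ω)).Splits := ⟨by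
    simpa only [Polynomial.map_map, ← IsScalarTower.algebraMap_eq] using hΩ.splits⟩
  have := IsSplittingField.finiteDimensional Ω (f.map (algebraMap F K))
  have := Fact.mk hp
  obtain ⟨σ, hσ⟩ := exists_prime_orderOf_dvd_card' p hdvd
  set τ := (Gal.restrict f Ω).comp (AlgEquiv.restrictScalarsHom F : Gal(Ω/K) →* Gal(Ω/F)) σ
  set π := Gal.galActionHom f E τ with hπ
  have hπo : orderOf π = p := by
    rw [hπ, orderOf_injective _ (Gal.galActionHom_injective f E),
      orderOf_injective _ (injective_restrict_restrictScalars f), hσ]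
  have hcard : π.support.card < 2 * orderOf π := by
    rw [hπo, hπ, card_support_galActionHom_eq f E Ω]
    exact (card_support_galActionHom_restrict_le f σ).trans_lt hroots
  have hcycle := Equiv.Perm.isCycle_of_prime_order (hπo ▸ hp) hcard
  exact ⟨τ, hcycle, hcycle.orderOf ▸ hπo⟩

end Galois

section Transcendental

variable {k : Type*} [Field k]

theorem exists_ratFunc_algHom_apply_X_eq {K : Type*} [Field K] [Algebra k K] {x : K}
    (hx : Transcendental k x) : ∃ φ : RatFunc k →ₐ[k] K, φ RatFunc.X = x := by
  have hφ : nonZeroDivisors k[X] ≤ (nonZeroDivisors K).comap (aeval (R := k) x) :=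
    nonZeroDivisors_le_comap_nonZeroDivisors_of_injective _ (transcendental_iff_injective.mp hx)
  exact ⟨RatFunc.liftAlgHom (aeval x) hφ, by simp [RatFunc.liftAlgHom_apply]⟩

theorem transcendental_powerSeries_X (A : Type*) [CommRing A] [Algebra k A] [FaithfulSMul k A] :
    Transcendental k (PowerSeries.X : PowerSeries A) := by
  have haeval : aeval (R := k) (PowerSeries.X : PowerSeries A) = coeToPowerSeries.algHom A := by
    ext; simp
  rw [transcendental_iff_injective, haeval]
  exact (PowerSeries.map_injective _ (FaithfulSMul.algebraMap_injective k A)).comp (coe_injective k)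

end Transcendental

section Trinomial

variable {R S : Type*} [CommRing R] [CommRing S] {p t : ℕ}

/-- The trinomial `Y ^ (p + t) - x * Y ^ t + 1` whose Galois group is studied, with its parameter
`x` in an arbitrary ring so that it can be moved along base changes. -/
noncomputable def abhyankarTrinomial (p t : ℕ) (x : R) : R[X] :=
  X ^ (p + t) - C x * X ^ t + 1

/-- The trinomial `U ^ (p + t) - U ^ p + s ^ (p + t)`, whose roots are the `s / y` for `y` a root of
`abhyankarTrinomial p t (s ^ t)⁻¹`. Unlike the latter it has coefficients in any ring containing
`s`, so it can be reduced modulo `s`. -/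
noncomputable def reciprocalTrinomial (p t : ℕ) (s : R) : R[X] :=
  X ^ (p + t) - X ^ p + C (s ^ (p + t))

theorem map_abhyankarTrinomial (φ : R →+* S) (p t : ℕ) (x : R) :
    (abhyankarTrinomial p t x).map φ = abhyankarTrinomial p t (φ x) := by
  simp [abhyankarTrinomial]

theorem map_reciprocalTrinomial (φ : R →+* S) (p t : ℕ) (s : R) :
    (reciprocalTrinomial p t s).map φ = reciprocalTrinomial p t (φ s) := by
  simp [reciprocalTrinomial]

theorem isRoot_abhyankarTrinomial_iff {x y : R} :
    (abhyankarTrinomial p t x).IsRoot y ↔ y ^ (p + t) - x * y ^ t + 1 = 0 := by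
  simp [abhyankarTrinomial]

theorem ne_zero_of_isRoot_abhyankarTrinomial [Nontrivial R] (ht : t ≠ 0) {x y : R}
    (hy : (abhyankarTrinomial p t x).IsRoot y) : y ≠ 0 := by
  rintro rfl
  rw [isRoot_abhyankarTrinomial_iff] at hy
  simp [ht] at hy

theorem monic_reciprocalTrinomial (ht : t ≠ 0) (s : R) : (reciprocalTrinomial p t s).Monic := by
  rw [reciprocalTrinomial, sub_add]
  have hdeg : (X ^ p - C (s ^ (p + t))).degree ≤ (p : WithBot ℕ) := by compute_degree!
  refine monic_X_pow_sub (hdeg.trans_lt ?_)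
  exact_mod_cast Nat.lt_add_of_pos_right (Nat.pos_of_ne_zero ht)

theorem natCast_mul_pow_eq_of_isRoot_derivative (ht : t ≠ 0) {x y : R}
    (hy : (abhyankarTrinomial p t x).IsRoot y)
    (hy' : (derivative (abhyankarTrinomial p t x)).IsRoot y) : (p : R) * y ^ (p + t) = t := by
  have hderiv : (p + t) * y ^ (p + t - 1) - x * (t * y ^ (t - 1)) = 0 := by
    simpa [abhyankarTrinomial, derivative_X_pow] using hy'
  have hpow_add : y * y ^ (p + t - 1) = y ^ (p + t) := mul_pow_sub_one (by lia) y
  have hpow : y * y ^ (t - 1) = y ^ t := mul_pow_sub_one ht y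
  linear_combination y * hderiv - t * isRoot_abhyankarTrinomial_iff.mp hy - (p + t) * hpow_add +
    x * t * hpow

theorem separable_abhyankarTrinomial_X {k : Type*} [Field k] (htk : (t : k) ≠ 0) :
    (abhyankarTrinomial p t (RatFunc.X : RatFunc k)).Separable := by
  have ht : t ≠ 0 := by rintro rfl; simp at htk
  rw [Separable, isCoprime_iff_aeval_ne_zero_of_isAlgClosed _ (AlgebraicClosure (RatFunc k))]
  intro y
  by_contra! ⟨hy, hy'⟩
  rw [← eval_map_algebraMap, map_abhyankarTrinomial] at hy
  rw [← eval_map_algebraMap, ← derivative_map, map_abhyankarTrinomial] at hy'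
  set x := algebraMap (RatFunc k) (AlgebraicClosure (RatFunc k)) RatFunc.X with hx
  have hypow : p * y ^ (p + t) = t := natCast_mul_pow_eq_of_isRoot_derivative ht hy hy'
  have hy0 : y ≠ 0 := ne_zero_of_isRoot_abhyankarTrinomial ht hy
  have hyalg : IsAlgebraic k y := by
    refine ⟨C (p : k) * X ^ (p + t) - C (t : k), fun h ↦ htk ?_, by simp [hypow]⟩
    simpa [ht] using congr_arg (eval 0) h
  have hxalg : IsAlgebraic k x := by
    have hxy : x = (y ^ (p + t) + 1) * (y ^ t)⁻¹ := by
      rw [eq_mul_inv_iff_mul_eq₀ (pow_ne_zero _ hy0)]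
      linear_combination -(isRoot_abhyankarTrinomial_iff.mp hy)
    rw [hxy]
    exact ((hyalg.pow _).add isAlgebraic_one).mul (hyalg.pow _).inv
  rw [hx, isAlgebraic_algebraMap_iff (FaithfulSMul.algebraMap_injective _ _)] at hxalg
  exact RatFunc.transcendental_X hxalg

theorem isRoot_reciprocalTrinomial_div_iff {K : Type*} [Field K] {s y : K} (hs : s ≠ 0)
    (hy : y ≠ 0) :
    (reciprocalTrinomial p t s).IsRoot (s / y) ↔ (abhyankarTrinomial p t (s ^ t)⁻¹).IsRoot y := by
  have heval : (reciprocalTrinomial p t s).eval (s / y) =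
      (s / y) ^ (p + t) * (abhyankarTrinomial p t (s ^ t)⁻¹).eval y := by
    simp only [reciprocalTrinomial, abhyankarTrinomial, eval_add, eval_sub, eval_mul, eval_pow,
      eval_X, eval_C, eval_one, pow_add, div_pow]
    field_simp
    ring
  rw [IsRoot, IsRoot, heval, mul_eq_zero, or_iff_right (pow_ne_zero _ (div_ne_zero hs hy))]

theorem splits_reciprocalTrinomial {K : Type*} [Field K] (ht : t ≠ 0) {s : K} (hs : s ≠ 0)
    (hsplits : (abhyankarTrinomial p t (s ^ t)⁻¹).Splits) : (reciprocalTrinomial p t s).Splits := by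
  let i := algebraMap K (AlgebraicClosure K)
  refine Splits.of_splits_map i (IsAlgClosed.splits _) fun u hu ↦ ?_
  rcases eq_or_ne u 0 with rfl | hu0
  · exact zero_mem i.range
  have his : i s ≠ 0 := (map_ne_zero_iff i i.injective).mpr hs
  have hroot : ((abhyankarTrinomial p t (s ^ t)⁻¹).map i).IsRoot (i s / u) := by
    rw [map_abhyankarTrinomial, map_inv₀, map_pow,
      ← isRoot_reciprocalTrinomial_div_iff his (div_ne_zero his hu0), div_div_cancel₀ his,
      ← map_reciprocalTrinomial]
    exact isRoot_of_mem_roots hu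
  have hne : abhyankarTrinomial p t (s ^ t)⁻¹ ≠ 0 := fun h ↦
    ne_zero_of_isRoot_abhyankarTrinomial ht (h ▸ eval_zero) rfl
  obtain ⟨y, hy⟩ := hsplits.mem_range_of_isRoot hne hroot
  exact ⟨s / y, by rw [map_div₀, hy, div_div_cancel₀ his]⟩

end Trinomial

section Local

open IsLocalRing

variable {R : Type*} [CommRing R] [HenselianLocalRing R] {p t : ℕ} {ζ : ResidueField R} {ϖ : R}

theorem exists_reciprocalTrinomial_eq_mul_splits (p : ℕ) (ht : t ≠ 0) (hζ : IsPrimitiveRoot ζ t)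
    (hϖ : ϖ ∈ maximalIdeal R) :
    ∃ r h : R[X], r.Monic ∧ r.map (residue R) = X ^ p ∧ h.Splits ∧
      reciprocalTrinomial p t ϖ = r * h := by
  refine exists_eq_mul_splits_of_map_residue_eq (nthRootsFinset t (1 : ResidueField R))
    (fun ξ hξ ↦ ?_) (monic_reciprocalTrinomial ht ϖ) ?_
  · have hξt := (mem_nthRootsFinset (Nat.pos_of_ne_zero ht) _).mp hξ
    rw [eval_pow, eval_X]
    exact pow_ne_zero _ fun h ↦ by simp [h, ht] at hξt
  · have hϖ0 : residue R ϖ = 0 := (residue_eq_zero_iff ϖ).mpr hϖ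
    rw [← X_pow_sub_one_eq_prod (Nat.pos_of_ne_zero ht) hζ, map_reciprocalTrinomial,
      reciprocalTrinomial, hϖ0, zero_pow (by lia), C_0]
    ring

variable {K Ω : Type*} [Field K] [Algebra R K] [IsFractionRing R K] [Field Ω] [Algebra K Ω]

theorem ncard_rootSet_abhyankarTrinomial_diff_range_le (ht : t ≠ 0) (hζ : IsPrimitiveRoot ζ t)
    (hϖ : ϖ ∈ maximalIdeal R) (hϖ0 : ϖ ≠ 0) :
    ((abhyankarTrinomial p t (algebraMap R K ϖ ^ t)⁻¹).rootSet Ω \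
      Set.range (algebraMap K Ω)).ncard ≤ p := by
  obtain ⟨r, h, hr, hrp, hh, hrh⟩ := exists_reciprocalTrinomial_eq_mul_splits p ht hζ hϖ
  have hrdeg : (r.map (algebraMap R K)).natDegree = p := by
    rw [hr.natDegree_map, ← hr.natDegree_map (residue R), hrp, natDegree_X_pow]
  have hh0 : h.map (algebraMap R K) ≠ 0 := by
    rw [Polynomial.map_ne_zero_iff (IsFractionRing.injective R K)]
    rintro rfl
    exact (monic_reciprocalTrinomial ht ϖ).ne_zero (by simpa using hrh)
  set s := algebraMap R K ϖ
  have hsΩ : algebraMap K Ω s ≠ 0 := by simpa [s] using hϖ0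
  have hmaps : Set.MapsTo (algebraMap K Ω s / ·)
      ((abhyankarTrinomial p t (s ^ t)⁻¹).rootSet Ω \ Set.range (algebraMap K Ω))
      ((r.map (algebraMap R K)).rootSet Ω) := by
    rintro y ⟨hy, hyK⟩
    have hyroot : (abhyankarTrinomial p t (algebraMap K Ω s ^ t)⁻¹).IsRoot y := by
      simpa [← eval_map_algebraMap, map_abhyankarTrinomial] using aeval_eq_zero_of_mem_rootSet hy
    have hu := (isRoot_reciprocalTrinomial_div_iff hsΩ
      (ne_zero_of_isRoot_abhyankarTrinomial ht hyroot)).mpr hyroot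
    rw [← map_reciprocalTrinomial, ← map_reciprocalTrinomial, hrh, Polynomial.map_mul,
      Polynomial.map_mul, root_mul] at hu
    refine mem_rootSet.mpr ⟨(hr.map _).ne_zero, ?_⟩
    rw [← eval_map_algebraMap]
    refine hu.resolve_right fun hroot ↦ hyK ?_
    obtain ⟨c, hc⟩ := (hh.map (algebraMap R K)).mem_range_of_isRoot hh0 hroot
    exact ⟨s / c, by rw [map_div₀, hc, div_div_cancel₀ hsΩ]⟩
  have hinj : Function.Injective (algebraMap K Ω s / ·) := fun y z hyz ↦
    inv_injective (mul_left_cancel₀ hsΩ (by simpa only [div_eq_mul_inv] using hyz))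
  exact (Set.ncard_le_ncard_of_injOn _ hmaps hinj.injOn (rootSet_finite _ Ω)).trans
    ((ncard_rootSet_le _ Ω).trans hrdeg.le)

variable [IsDomain R] [IsIntegrallyClosed R]

theorem dvd_finrank_of_dvd_reciprocalTrinomial [Algebra R Ω] [IsScalarTower R K Ω]
    (ht : t ≠ 0) (hpt : p.Coprime t) (hϖ : Prime ϖ) {r : R[X]} (hr : r.Monic)
    (hrp : r.map (residue R) = X ^ p) (hdvd : r ∣ reciprocalTrinomial p t ϖ) {u : Ω}
    (hu : aeval u r = 0) : p ∣ Module.finrank K Ω := by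
  let v : integralClosure R Ω := ⟨u, r, hr, hu⟩
  have hv : aeval v r = 0 := Subtype.ext ((Subalgebra.aeval_coe _ v r).symm.trans hu)
  have hunit : IsUnit (1 - v ^ t) := isUnit_one_sub_pow_of_aeval_eq_zero hr
    (isWeaklyEisensteinAt_maximalIdeal_of_map_residue_eq_X_pow hr hrp) hv ht
  have hv_eq : v ^ p * (1 - v ^ t) = algebraMap R _ (ϖ ^ (p + t)) := by
    have hq := aeval_eq_zero_of_dvd_aeval_eq_zero hdvd hv
    simp only [reciprocalTrinomial, map_add, map_sub, map_pow, aeval_X, aeval_C] at hq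
    rw [map_pow]
    linear_combination -hq
  exact (Nat.Coprime.dvd_mul_left (by simpa using hpt)).mp
    (dvd_mul_finrank_of_pow_mul_eq (K := K) hϖ hunit hv_eq)

theorem dvd_finrank_of_splits_abhyankarTrinomial (hp : p ≠ 0) (ht : t ≠ 0) (hpt : p.Coprime t)
    (hζ : IsPrimitiveRoot ζ t) (hϖ : Prime ϖ)
    (hsplits : ((abhyankarTrinomial p t (algebraMap R K ϖ ^ t)⁻¹).map (algebraMap K Ω)).Splits) :
    p ∣ Module.finrank K Ω := by
  let _ : Algebra R Ω := ((algebraMap K Ω).comp (algebraMap R K)).toAlgebra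
  have : IsScalarTower R K Ω := IsScalarTower.of_algebraMap_eq' rfl
  obtain ⟨r, h, hr, hrp, -, hrh⟩ := exists_reciprocalTrinomial_eq_mul_splits p ht hζ
    ((mem_maximalIdeal ϖ).mpr hϖ.not_isUnit)
  have hdvd : r ∣ reciprocalTrinomial p t ϖ := hrh ▸ dvd_mul_right r h
  have hϖΩ : algebraMap R Ω ϖ ≠ 0 := by
    rw [IsScalarTower.algebraMap_apply R K Ω]
    simpa using hϖ.ne_zero
  have hrsplits : (r.map (algebraMap R Ω)).Splits := by
    rw [map_abhyankarTrinomial, map_inv₀, map_pow, ← IsScalarTower.algebraMap_apply] at hsplits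
    exact (splits_reciprocalTrinomial ht hϖΩ hsplits).of_dvd
      (monic_reciprocalTrinomial ht _).ne_zero
      (map_reciprocalTrinomial (algebraMap R Ω) p t ϖ ▸ Polynomial.map_dvd _ hdvd)
  have hrdeg : (r.map (algebraMap R Ω)).degree ≠ 0 := by
    rw [hr.degree_map, ← hr.degree_map (residue R), hrp, degree_X_pow]
    exact_mod_cast hp
  obtain ⟨u, hu⟩ := hrsplits.exists_eval_eq_zero hrdeg
  rw [eval_map_algebraMap] at hu
  exact dvd_finrank_of_dvd_reciprocalTrinomial ht hpt hϖ hr hrp hdvd hu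

theorem exists_isCycle_galActionHom_abhyankarTrinomial {F E : Type*} [Field F] [Field E]
    [Algebra F E] (hp : p.Prime) (hpt : ¬ p ∣ t) (hζ : IsPrimitiveRoot ζ t) (hϖ : Prime ϖ)
    (φ : F →+* K) {x : F} (hx : φ x = (algebraMap R K ϖ ^ t)⁻¹)
    (hsep : (abhyankarTrinomial p t x).Separable)
    [Fact ((abhyankarTrinomial p t x).map (algebraMap F E)).Splits] :
    ∃ σ : (abhyankarTrinomial p t x).Gal,
      (Gal.galActionHom (abhyankarTrinomial p t x) E σ).IsCycle ∧
      (Gal.galActionHom (abhyankarTrinomial p t x) E σ).support.card = p := by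
  have ht : t ≠ 0 := by rintro rfl; exact hpt (dvd_zero p)
  let _ : Algebra F K := φ.toAlgebra
  set f := abhyankarTrinomial p t x
  let Ω := (f.map (algebraMap F K)).SplittingField
  have hfK : f.map (algebraMap F K) = abhyankarTrinomial p t (algebraMap R K ϖ ^ t)⁻¹ := by
    rw [map_abhyankarTrinomial, RingHom.algebraMap_toAlgebra, hx]
  have : IsGalois K Ω :=
    IsGalois.of_separable_splitting_field (p := f.map (algebraMap F K)) hsep.map
  have hdvd : p ∣ Nat.card Gal(Ω/K) := by
    rw [IsGalois.card_aut_eq_finrank]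
    exact dvd_finrank_of_splits_abhyankarTrinomial hp.ne_zero ht
      ((Nat.Prime.coprime_iff_not_dvd hp).mpr hpt) hζ hϖ (hfK ▸ SplittingField.splits _)
  have hroots : (f.rootSet Ω \ Set.range (algebraMap K Ω)).ncard ≤ p := by
    have hrootSet : f.rootSet Ω =
        (abhyankarTrinomial p t (algebraMap R K ϖ ^ t)⁻¹).rootSet Ω := by
      rw [rootSet, rootSet, ← hfK, aroots_map]
    rw [hrootSet]
    exact ncard_rootSet_abhyankarTrinomial_diff_range_le ht hζ
      ((mem_maximalIdeal ϖ).mpr hϖ.not_isUnit) hϖ.ne_zero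
  exact exists_isCycle_galActionHom f E hp hdvd (hroots.trans_lt (by linarith [hp.pos]))

end Local

theorem stmt_11_general (p : ℕ) (hp : p.Prime) (k : Type*) [Field k] (t : ℕ) (htk : (t : k) ≠ 0)
    (hpt : ¬ p ∣ t) (n : ℕ) (hn : n = p + t) (f : Polynomial (RatFunc k))
    (hf : f = X ^ n - C RatFunc.X * X ^ t + 1) :
    haveI : Fact ((f.map (algebraMap (RatFunc k) f.SplittingField)).Splits) :=
      ⟨SplittingField.splits f⟩
    ∃ σ : f.Gal,
      (Polynomial.Gal.galActionHom f f.SplittingField σ).IsCycle ∧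
      (Polynomial.Gal.galActionHom f f.SplittingField σ).support.card = p := by
  obtain rfl : f = abhyankarTrinomial p t RatFunc.X := by rw [hf, hn, abhyankarTrinomial]
  have : Fact (((abhyankarTrinomial p t (RatFunc.X : RatFunc k)).map (algebraMap _ _)).Splits) :=
    ⟨SplittingField.splits (abhyankarTrinomial p t RatFunc.X)⟩
  have ht : t ≠ 0 := by rintro rfl; exact hpt (dvd_zero p)
  let A := PowerSeries (AlgebraicClosure k)
  have : NeZero (t : AlgebraicClosure k) :=
    ⟨by rwa [← map_natCast (algebraMap k (AlgebraicClosure k)), _root_.map_ne_zero]⟩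
  have : HenselianLocalRing A := henselianLocalRing_powerSeries (AlgebraicClosure k)
  obtain ⟨ζ, hζ⟩ := HasEnoughRootsOfUnity.exists_primitiveRoot (AlgebraicClosure k) t
  have hζ' := hζ.map_of_injective (f := (PowerSeries.residueFieldOfPowerSeries (k := _)).symm)
    (RingEquiv.injective _)
  have hs : Transcendental k (algebraMap A (FractionRing A) PowerSeries.X) :=
    (transcendental_algebraMap_iff (IsFractionRing.injective A _)).mpr
      (transcendental_powerSeries_X (AlgebraicClosure k))
  obtain ⟨φ, hφ⟩ := exists_ratFunc_algHom_apply_X_eq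
    (mt IsAlgebraic.inv_iff.mp (hs.pow (Nat.pos_of_ne_zero ht)))
  exact exists_isCycle_galActionHom_abhyankarTrinomial (R := A) hp hpt hζ' PowerSeries.X_prime
    φ.toRingHom hφ (separable_abhyankarTrinomial_X htk)

/-- Abhyankar: for `n = p + t` with `p ∤ t`, the Galois group of
`f = Y^n - X·Y^t + 1` over `k(X)` contains an element acting on the roots of
`f` as a cycle of length `p`. -/
theorem stmt_11 (p : ℕ) (hp : p.Prime)
    (k : Type*) [Field k] [CharP k p]
    (t : ℕ) (ht : 0 < t) (hpt : ¬ p ∣ t)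
    (n : ℕ) (hn : n = p + t)
    (f : Polynomial (RatFunc k))
    (hf : f = X ^ n - C RatFunc.X * X ^ t + 1) :
    haveI : Fact ((f.map (algebraMap (RatFunc k) f.SplittingField)).Splits) :=
      ⟨SplittingField.splits f⟩
    ∃ σ : f.Gal,
      (Polynomial.Gal.galActionHom f f.SplittingField σ).IsCycle ∧
      (Polynomial.Gal.galActionHom f f.SplittingField σ).support.card = p :=
  stmt_11_general p hp k t (mt (CharP.cast_eq_zero_iff k p t).mp hpt) hpt n hn f hf
end

section
/- Let k be a field, let n > t > 1 be integers with gcd(n,t) = 1, and let a be a nonzero element of k. Let Y and Z be indeterminates and let P(Z) be the polynomial in Z with coefficients in the rational function field k(Y) determined by Z·P(Z) = ((Z+Y)^n - Y^n) - a·((Z+Y)^t - Y^t). Then P(Z) is irreducible in k(Y)[Z]. -/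
open Polynomial

/-!
Substituting `Z = Y(W - 1)` turns `P` into `Y^(t-1)` times `Y^(n-t) G_n(W) - a G_t(W)`, where
`G_m = 1 + W + ⋯ + W^(m-1)`. By Gauss's lemma it suffices that this second factor is irreducible
in `k[W][Y]`, where it is a binomial in `Y`. Its coefficients `G_n` and `a G_t` are coprime because
`n` and `t` are, and one of them has a simple prime factor: `n` and `t` are not both zero in `k`,
and `G_m` is squarefree when `m ≠ 0` in `k`. So Eisenstein's criterion applies either to the
binomial or to its reversal.
-/

open Finset (range)

section Binomial

/-- Reversal of the coefficients (Mathlib's `mirror`, which keeps the power of `X` dividing the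
polynomial) as a multiplicative automorphism; it transports irreducibility. -/
noncomputable def mirrorMulEquiv (R : Type*) [Semiring R] [NoZeroDivisors R] : R[X] ≃* R[X] where
  toFun := mirror
  invFun := mirror
  left_inv := mirror_mirror
  right_inv := mirror_mirror
  map_mul' p q := mirror_mul_of_domain p q

lemma irreducible_mirror_iff {R : Type*} [Semiring R] [NoZeroDivisors R] {p : R[X]} :
    Irreducible p.mirror ↔ Irreducible p :=
  MulEquiv.irreducible_iff (mirrorMulEquiv R)

lemma natDegree_C_mul_X_pow_add_C {R : Type*} [Semiring R] {b : R} (hb : b ≠ 0) (c : R) (d : ℕ) :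
    (C b * X ^ d + C c).natDegree = d := by
  rw [natDegree_add_C, natDegree_C_mul_X_pow _ _ hb]

lemma mirror_C_mul_X_pow_add_C {R : Type*} [Semiring R] {b c : R} {d : ℕ} (hb : b ≠ 0)
    (hc : c ≠ 0) (hd : d ≠ 0) : (C b * X ^ d + C c).mirror = C c * X ^ d + C b := by
  have hcoeff : (C b * X ^ d + C c).coeff 0 ≠ 0 := by simpa [coeff_X_pow, hd.symm] using hc
  rw [mirror, natTrailingDegree_eq_zero.2 (Or.inr hcoeff), pow_zero, mul_one, reverse,
    natDegree_C_mul_X_pow_add_C hb, reflect_add, reflect_C_mul_X_pow, reflect_C, revAt_le le_rfl,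
    Nat.sub_self, pow_zero, mul_one, add_comm]

variable {R : Type*} [CommRing R] [IsDomain R]

lemma irreducible_C_mul_X_pow_add_C_of_dvd_constantCoeff {b c q : R} {d : ℕ} (hd : d ≠ 0)
    (hbc : IsRelPrime b c) (hq : Prime q) (hqc : q ∣ c) (hqc2 : ¬ q ^ 2 ∣ c) :
    Irreducible (C b * X ^ d + C c) := by
  have hqb : ¬ q ∣ b := fun hqb => hq.not_isUnit (hbc hqb hqc)
  have hb : b ≠ 0 := by
    rintro rfl
    exact hqb (dvd_zero q)
  have hdeg := natDegree_C_mul_X_pow_add_C hb c d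
  set f := C b * X ^ d + C c with hf
  have hcoeff0 : f.coeff 0 = c := by simp [hf, coeff_X_pow, hd.symm]
  have hcoeffd : f.coeff d = b := by simp [hf, coeff_C, hd]
  have hprim : f.IsPrimitive := fun r hr => by
    rw [C_dvd_iff_dvd_coeff] at hr
    exact hbc (hcoeffd ▸ hr d) (hcoeff0 ▸ hr 0)
  refine irreducible_of_eisenstein_criterion (P := Ideal.span {q})
    ((Ideal.span_singleton_prime hq.ne_zero).2 hq) ?_ (fun m hm => ?_) ?_ ?_ hprim
  · rwa [leadingCoeff, hdeg, hcoeffd, Ideal.mem_span_singleton]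
  · have hmd : m < d := hdeg ▸ coe_lt_degree.1 hm
    rw [Ideal.mem_span_singleton]
    rcases eq_or_ne m 0 with rfl | hm0
    · rwa [hcoeff0]
    · simp [hf, coeff_X_pow, hmd.ne, coeff_C, hm0]
  · rw [← natDegree_pos_iff_degree_pos, hdeg]
    exact hd.pos
  · rwa [hcoeff0, Ideal.span_singleton_pow, Ideal.mem_span_singleton]

lemma irreducible_C_mul_X_pow_add_C_of_dvd_leadingCoeff {b c q : R} {d : ℕ} (hd : d ≠ 0)
    (hc : c ≠ 0) (hbc : IsRelPrime b c) (hq : Prime q) (hqb : q ∣ b) (hqb2 : ¬ q ^ 2 ∣ b) :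
    Irreducible (C b * X ^ d + C c) := by
  have hb : b ≠ 0 := by
    rintro rfl
    exact hqb2 (dvd_zero _)
  rw [← irreducible_mirror_iff, mirror_C_mul_X_pow_add_C hb hc hd]
  exact irreducible_C_mul_X_pow_add_C_of_dvd_constantCoeff hd hbc.symm hq hqb hqb2

end Binomial

section GeomSum

lemma isCoprime_geom_sum {R : Type*} [CommRing R] (x : R) {m n : ℕ} (h : m.Coprime n) :
    IsCoprime (∑ i ∈ range m, x ^ i) (∑ i ∈ range n, x ^ i) := by
  induction hs : m + n using Nat.strong_induction_on generalizing m n with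
  | _ s ih =>
    wlog hmn : m ≤ n generalizing m n
    · exact (this h.symm (by omega) (by omega)).symm
    rcases m.eq_zero_or_pos with rfl | hm
    · obtain rfl : n = 1 := by simpa using h
      simpa using isCoprime_one_right
    obtain ⟨d, rfl⟩ := Nat.exists_eq_add_of_le' hmn
    have euclid : ∑ i ∈ range (d + m), x ^ i =
        ∑ i ∈ range d, x ^ i + x ^ d * ∑ i ∈ range m, x ^ i := by
      simp only [Finset.sum_range_add, pow_add, Finset.mul_sum]
    rw [euclid]
    exact (ih (m + d) (by omega) (by simpa using h) rfl).add_mul_right_right _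

lemma geom_sum_X_ne_zero {R : Type*} [Semiring R] [Nontrivial R] {m : ℕ} (hm : m ≠ 0) :
    ∑ i ∈ range m, (X : R[X]) ^ i ≠ 0 := fun h => by
  simpa [coeff_X_pow, hm.pos] using congrArg (coeff · 0) h

lemma not_isUnit_geom_sum_X {R : Type*} [Semiring R] [NoZeroDivisors R] [Nontrivial R] {m : ℕ}
    (hm : 1 < m) : ¬ IsUnit (∑ i ∈ range m, (X : R[X]) ^ i) := fun h => by
  have hcoeff : (∑ i ∈ range m, (X : R[X]) ^ i).coeff 1 = 0 :=
    coeff_eq_zero_of_natDegree_lt (by simp [natDegree_eq_zero_of_isUnit h])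
  simp [coeff_X_pow, hm] at hcoeff

lemma squarefree_geom_sum_X {k : Type*} [Field k] {m : ℕ} (hm : (m : k) ≠ 0) :
    Squarefree (∑ i ∈ range m, (X : k[X]) ^ i) :=
  (X_pow_sub_one_separable_iff.2 hm).squarefree.squarefree_of_dvd
    (Dvd.intro_left _ (mul_geom_sum X m))

lemma exists_prime_dvd_geom_sum_X_not_sq_dvd {k : Type*} [Field k] {m : ℕ} (hm : 1 < m)
    (hmk : (m : k) ≠ 0) :
    ∃ q : k[X], Prime q ∧ q ∣ ∑ i ∈ range m, X ^ i ∧ ¬ q ^ 2 ∣ ∑ i ∈ range m, X ^ i := by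
  obtain ⟨q, hq, hqm⟩ := WfDvdMonoid.exists_irreducible_factor
    (not_isUnit_geom_sum_X (R := k) hm) (geom_sum_X_ne_zero (by omega))
  exact ⟨q, hq.prime, hqm, fun hqm2 =>
    hq.not_isUnit (squarefree_geom_sum_X hmk q (by rwa [← sq]))⟩

end GeomSum

section Substitution

variable {R : Type*} [CommRing R]

lemma irreducible_comp_C_mul_X_add_C_iff {y : R} (hy : IsUnit y) (b : R) {p : R[X]} :
    Irreducible (p.comp (C y * X + C b)) ↔ Irreducible p := by
  let := hy.invertible
  exact MulEquiv.irreducible_iff (algEquivCMulXAddC y b)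

lemma comp_C_mul_X_add_C_neg_of_X_mul_eq [IsDomain R] {y a : R} (hy : y ≠ 0) {n t : ℕ}
    (ht : t ≠ 0) (htn : t ≤ n) {P : R[X]}
    (hP : X * P = ((X + C y) ^ n - C (y ^ n)) - C a * ((X + C y) ^ t - C (y ^ t))) :
    P.comp (C y * X + C (-y)) = C (y ^ (t - 1)) *
      (C (y ^ (n - t)) * ∑ i ∈ range n, X ^ i - C a * ∑ i ∈ range t, X ^ i) := by
  have hcancel : C y * (X - 1) ≠ 0 := mul_ne_zero (C_ne_zero.2 hy) (X_sub_C_ne_zero 1)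
  refine mul_left_cancel₀ hcancel ?_
  have hyt : C y * C y ^ (t - 1) = C y ^ t := mul_pow_sub_one ht _
  have hyn : C y ^ (n - t) * C y ^ t = C y ^ n := pow_sub_mul_pow _ htn
  calc C y * (X - 1) * P.comp (C y * X + C (-y))
      = (X * P).comp (C y * X + C (-y)) := by
        simp only [mul_comp, X_comp, C_neg]
        ring
    _ = C y ^ n * (X ^ n - 1) - C a * C y ^ t * (X ^ t - 1) := by
        rw [hP]
        simp only [sub_comp, mul_comp, pow_comp, add_comp, X_comp, C_comp, C_neg, C_pow,
          neg_add_cancel_right, mul_pow]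
        ring
    _ = C y * C y ^ (t - 1) * (C y ^ (n - t) * ((X - 1) * ∑ i ∈ range n, X ^ i) -
          C a * ((X - 1) * ∑ i ∈ range t, X ^ i)) := by
        rw [mul_geom_sum, mul_geom_sum, hyt, ← hyn]
        ring
    _ = C y * (X - 1) * (C (y ^ (t - 1)) *
          (C (y ^ (n - t)) * ∑ i ∈ range n, X ^ i - C a * ∑ i ∈ range t, X ^ i)) := by
        simp only [C_pow]
        ring

end Substitution

section Trinomial

variable {k : Type*} [Field k] {n t d : ℕ} {a : k}

lemma irreducible_geom_sum_binomial (hn : 1 < n) (ht : 1 < t) (hco : n.Coprime t) (ha : a ≠ 0)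
    (hd : d ≠ 0) :
    Irreducible (C (∑ i ∈ range n, X ^ i) * X ^ d + C (C (-a) * ∑ i ∈ range t, X ^ i) :
      k[X][X]) := by
  have hu : IsUnit (C (-a)) := isUnit_C.2 (neg_ne_zero.2 ha).isUnit
  have hrel : IsRelPrime (∑ i ∈ range n, X ^ i) (C (-a) * ∑ i ∈ range t, X ^ i) :=
    ((isCoprime_mul_unit_left_right hu _ _).2 (isCoprime_geom_sum X hco)).isRelPrime
  rcases ne_zero_or_ne_zero_of_nat_coprime (A := k) hco with hnk | htk
  · obtain ⟨q, hq, hqn, hqn2⟩ := exists_prime_dvd_geom_sum_X_not_sq_dvd hn hnk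
    exact irreducible_C_mul_X_pow_add_C_of_dvd_leadingCoeff hd
      (mul_ne_zero hu.ne_zero (geom_sum_X_ne_zero (by omega))) hrel hq hqn hqn2
  · obtain ⟨q, hq, hqt, hqt2⟩ := exists_prime_dvd_geom_sum_X_not_sq_dvd ht htk
    exact irreducible_C_mul_X_pow_add_C_of_dvd_constantCoeff hd hrel hq
      (hqt.mul_left _) (by rwa [hu.dvd_mul_left])

lemma irreducible_C_X_pow_mul_geom_sum_sub (hn : 1 < n) (ht : 1 < t) (hco : n.Coprime t)
    (ha : a ≠ 0) (hd : d ≠ 0) :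
    Irreducible (C (X ^ d) * ∑ i ∈ range n, X ^ i - C (C a) * ∑ i ∈ range t, X ^ i :
      k[X][X]) := by
  rw [← MulEquiv.irreducible_iff (Bivariate.swap (R := k))]
  convert! irreducible_geom_sum_binomial hn ht hco ha hd using 1
  simp only [map_sub, map_mul, map_sum, map_pow, map_neg, Bivariate.swap_X, Bivariate.swap_Y,
    Bivariate.swap_C_C]
  ring

lemma irreducible_ratFunc_X_pow_mul_geom_sum_sub (hn : 1 < n) (ht : 1 < t) (hco : n.Coprime t)
    (ha : a ≠ 0) (hd : d ≠ 0) :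
    Irreducible (C (RatFunc.X ^ d) * ∑ i ∈ range n, X ^ i -
      C (algebraMap k (RatFunc k) a) * ∑ i ∈ range t, X ^ i) := by
  have hirr := irreducible_C_X_pow_mul_geom_sum_sub hn ht hco ha hd
  have hdeg : natDegree (C (X ^ d) * ∑ i ∈ range n, X ^ i - C (C a) * ∑ i ∈ range t, X ^ i :
      k[X][X]) ≠ 0 := by
    refine (zero_lt_one.trans_le (le_natDegree_of_ne_zero ?_)).ne'
    simpa [-map_pow, coeff_X_pow, hn, ht] using X_pow_sub_C_ne_zero hd.pos a
  have hmap := (hirr.isPrimitive hdeg).irreducible_iff_irreducible_map_fraction_map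
    (K := RatFunc k) |>.1 hirr
  simpa [Polynomial.map_sum, RatFunc.algebraMap_eq_C] using hmap

end Trinomial

/-- Third irreducibility lemma: for `n > t > 1` with `gcd(n,t) = 1` and
`a ≠ 0` in `k`, the polynomial `P(Z)` with
`Z·P(Z) = ((Z+Y)^n - Y^n) - a·((Z+Y)^t - Y^t)` is irreducible in `k(Y)[Z]`. -/
theorem stmt_16 (k : Type*) [Field k] (n t : ℕ) (h1 : 1 < t) (h2 : t < n)
    (hco : Nat.gcd n t = 1) (a : k) (ha : a ≠ 0)
    (P : Polynomial (RatFunc k))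
    (hP : (X : Polynomial (RatFunc k)) * P =
      ((X + C RatFunc.X) ^ n - C (RatFunc.X ^ n)) -
        C (algebraMap k (RatFunc k) a) * ((X + C RatFunc.X) ^ t - C (RatFunc.X ^ t))) :
    Irreducible P := by
  have hY : (RatFunc.X : RatFunc k) ≠ 0 := RatFunc.X_ne_zero
  have hunit : IsUnit (C ((RatFunc.X : RatFunc k) ^ (t - 1))) :=
    isUnit_C.2 (pow_ne_zero _ hY).isUnit
  rw [← irreducible_comp_C_mul_X_add_C_iff hY.isUnit (-RatFunc.X),
    comp_C_mul_X_add_C_neg_of_X_mul_eq hY (by omega) h2.le hP, irreducible_isUnit_mul hunit]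
  exact irreducible_ratFunc_X_pow_mul_geom_sum_sub (h1.trans h2) h1 hco ha (by omega)
end

section
/- Let p and π be prime numbers and let μ and u be positive integers such that p^μ + 1 = π^u. Then: (i) if p > 2, then μ = 1, π = 2, and u is a prime number (so that p is a Mersenne prime); (ii) if p = 2 and u > 1, then μ = 3, π = 3, and u = 2; (iii) if p = 2 and u = 1, then μ is a power of 2 (so that π is a Fermat prime). -/
/-!
For odd `x` and odd `n`, the cofactor in `x ^ n - 1 = (x - 1) * ∑ i < n, x ^ i` is a sum of an odd
number of odd terms. If `x ^ n - 1` divides a power of two, this odd cofactor is therefore `± 1`.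
Taking `x = a` and `x = -a`, neither `a ^ n - 1` nor `a ^ n + 1` is a power of two when `a > 1` and
`n > 1` are odd. For even exponents, a square plus one is not divisible by `4`, and a square minus
one is the product of two numbers differing by `2`, which are both powers of two only if they are
`2` and `4`.
-/

theorem odd_geom_sum_iff {x : ℤ} {n : ℕ} (hx : Odd x) :
    Odd (∑ i ∈ Finset.range n, x ^ i) ↔ Odd n := by
  rw [← ZMod.intCast_eq_one_iff_odd] at hx ⊢
  simp [hx, ZMod.natCast_eq_one_iff_odd]

theorem associated_pow_sub_one_of_dvd_two_pow {x : ℤ} {n k : ℕ} (hx : Odd x) (hn : Odd n)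
    (hdvd : x ^ n - 1 ∣ 2 ^ k) : Associated (x ^ n - 1) (x - 1) := by
  have factorization : (∑ i ∈ Finset.range n, x ^ i) * (x - 1) = x ^ n - 1 := geom_sum_mul x n
  have coprime_cofactor : IsCoprime (∑ i ∈ Finset.range n, x ^ i) (2 ^ k) :=
    (Int.isCoprime_two_right.mpr ((odd_geom_sum_iff hx).mpr hn)).pow_right
  have isUnit_cofactor : IsUnit (∑ i ∈ Finset.range n, x ^ i) :=
    coprime_cofactor.isUnit_of_dvd' dvd_rfl ((Dvd.intro _ factorization).trans hdvd)
  rw [← factorization]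
  exact associated_unit_mul_left _ _ isUnit_cofactor

theorem not_four_dvd_sq_add_one (x : ℕ) : ¬4 ∣ x ^ 2 + 1 := by
  rw [← ZMod.natCast_eq_zero_iff]
  push_cast
  generalize (x : ZMod 4) = y
  revert y
  decide

theorem le_one_of_sq_add_one_eq_two_pow {x n : ℕ} (h : x ^ 2 + 1 = 2 ^ n) : n ≤ 1 := by
  by_contra! hn
  exact not_four_dvd_sq_add_one x (h ▸ pow_dvd_pow 2 hn)

theorem eq_one_of_pow_add_one_eq_two_pow {a m n : ℕ} (ha : 1 < a) (hm : m ≠ 0)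
    (h : a ^ m + 1 = 2 ^ n) : m = 1 := by
  have one_lt_pow : 1 < a ^ m := Nat.one_lt_pow hm ha
  have one_lt_n : 1 < n := (Nat.pow_lt_pow_iff_right one_lt_two).mp (by omega)
  rcases Nat.even_or_odd' m with ⟨j, rfl | hj⟩
  · rw [mul_comm, pow_mul] at h
    have := le_one_of_sq_add_one_eq_two_pow h
    omega
  · have odd_m : Odd m := ⟨j, hj⟩
    have odd_a : Odd a := by
      have : Even (a ^ m + 1) := h ▸ even_two.pow_of_ne_zero (by omega)
      simpa [Nat.even_add_one, Nat.even_pow, hm] using this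
    have neg_pow_sub_one : (-a : ℤ) ^ m - 1 = -(a ^ m + 1 : ℕ) := by
      rw [odd_m.neg_pow]
      push_cast
      ring
    have associated : Associated ((-a : ℤ) ^ m - 1) (-a - 1) :=
      associated_pow_sub_one_of_dvd_two_pow (k := n) (by simpa using odd_a) odd_m
        (by simp [neg_pow_sub_one, h])
    have pow_eq_self : a ^ m = a := by
      have := Int.natAbs_eq_iff_associated.mpr associated
      omega
    exact (Nat.pow_eq_self_iff ha).mp pow_eq_self

theorem eq_one_of_two_pow_add_one_eq_odd_pow {a m n : ℕ} (hn : Odd n)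
    (h : 2 ^ m + 1 = a ^ n) : n = 1 := by
  rcases eq_or_ne m 0 with rfl | hm
  · exact (Nat.prime_two.pow_eq_iff.mp (by simpa using h.symm)).2
  · have odd_a : Odd a :=
      (Nat.odd_pow_iff hn.pos.ne').mp (h ▸ (even_two.pow_of_ne_zero hm).add_one)
    have pow_sub_one : (a : ℤ) ^ n - 1 = 2 ^ m := by
      rw [sub_eq_iff_eq_add]
      exact_mod_cast h.symm
    have associated : Associated ((a : ℤ) ^ n - 1) (a - 1) :=
      associated_pow_sub_one_of_dvd_two_pow (mod_cast odd_a) hn pow_sub_one.dvd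
    have pow_eq_self : a ^ n = a := by
      have one_le_a : (1 : ℤ) ≤ a := mod_cast odd_a.pos
      have sub_one_eq : (a : ℤ) ^ n - 1 = a - 1 :=
        Int.eq_of_associated_of_nonneg associated
          (sub_nonneg.mpr (one_le_pow₀ one_le_a)) (sub_nonneg.mpr one_le_a)
      exact_mod_cast sub_left_inj.mp sub_one_eq
    have one_lt_a : 1 < a := by
      have : 1 < 2 ^ m := Nat.one_lt_two_pow hm
      omega
    exact (Nat.pow_eq_self_iff one_lt_a).mp pow_eq_self

theorem two_pow_add_one_eq_two_pow_iff {a b : ℕ} : 2 ^ a + 1 = 2 ^ b ↔ a = 0 ∧ b = 1 := by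
  refine ⟨fun h => ?_, by rintro ⟨rfl, rfl⟩; rfl⟩
  rcases a with _ | a
  · exact ⟨rfl, (Nat.pow_right_injective le_rfl h).symm⟩
  · have : 0 < 2 ^ a := Nat.two_pow_pos a
    rcases b with _ | b <;> omega

theorem two_pow_add_two_eq_two_pow_iff {a b : ℕ} : 2 ^ a + 2 = 2 ^ b ↔ a = 1 ∧ b = 2 := by
  rcases a with _ | a
  · rcases b with _ | b <;> omega
  · rcases b with _ | b
    · omega
    · have : 2 ^ (a + 1) + 2 = 2 ^ (b + 1) ↔ 2 ^ a + 1 = 2 ^ b := by omega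
      rw [this, two_pow_add_one_eq_two_pow_iff]
      omega

theorem two_pow_add_one_eq_sq_iff {m x : ℕ} : 2 ^ m + 1 = x ^ 2 ↔ m = 3 ∧ x = 3 := by
  refine ⟨fun h => ?_, by rintro ⟨rfl, rfl⟩; rfl⟩
  obtain ⟨y, rfl⟩ : ∃ y, x = y + 1 :=
    Nat.exists_eq_add_one_of_ne_zero (by rintro rfl; simp at h)
  have factorization : y * (y + 2) = 2 ^ m := by linarith
  obtain ⟨a, -, rfl⟩ := (Nat.dvd_prime_pow Nat.prime_two).mp (Dvd.intro _ factorization)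
  obtain ⟨b, -, add_two_eq⟩ := (Nat.dvd_prime_pow Nat.prime_two).mp (Dvd.intro_left _ factorization)
  obtain ⟨rfl, rfl⟩ := two_pow_add_two_eq_two_pow_iff.mp add_two_eq
  exact ⟨Nat.pow_right_injective le_rfl factorization.symm, rfl⟩

theorem two_pow_add_one_eq_pow_iff {a m n : ℕ} (hn : 1 < n) :
    2 ^ m + 1 = a ^ n ↔ m = 3 ∧ a = 3 ∧ n = 2 := by
  refine ⟨fun h => ?_, by rintro ⟨rfl, rfl, rfl⟩; rfl⟩
  rcases Nat.even_or_odd n with ⟨v, rfl⟩ | odd_n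
  · rw [← mul_two, pow_mul] at h
    obtain ⟨rfl, pow_eq_three⟩ := two_pow_add_one_eq_sq_iff.mp h
    obtain ⟨rfl, rfl⟩ := Nat.prime_three.pow_eq_iff.mp pow_eq_three
    exact ⟨rfl, rfl, rfl⟩
  · exact absurd (eq_one_of_two_pow_add_one_eq_odd_pow odd_n h) hn.ne'

theorem eq_two_of_odd_pow_add_one_eq_prime_pow {a q m n : ℕ} (ha : Odd a) (hq : q.Prime)
    (h : a ^ m + 1 = q ^ n) : q = 2 := by
  have even_pow : Even (q ^ n) := h ▸ ha.pow.add_one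
  exact hq.even_iff.mp (Nat.even_pow.mp even_pow).1

theorem prime_of_prime_add_one_eq_two_pow {p n : ℕ} (hp : p.Prime) (h : p + 1 = 2 ^ n) :
    n.Prime := by
  have prime_mersenne : (mersenne n).Prime := by
    rwa [mersenne, ← h, Nat.add_sub_cancel]
  exact prime_mersenne.of_mersenne

/-- Abhyankar's simple numerical lemma: if `p, π` are primes and `μ, u`
positive integers with `p^μ + 1 = π^u`, then: if `p > 2` then `μ = 1`,
`π = 2` and `u` is prime (so `p` is a Mersenne prime); if `p = 2` and `u > 1`
then `μ = 3`, `π = 3` and `u = 2`; and if `p = 2` and `u = 1` then `μ` is a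
power of `2` (so `π` is a Fermat prime). -/
theorem stmt_17 (p q μ u : ℕ) (hp : p.Prime) (hq : q.Prime)
    (hμ : 0 < μ) (hu : 0 < u) (h : p ^ μ + 1 = q ^ u) :
    (2 < p → μ = 1 ∧ q = 2 ∧ u.Prime) ∧
    (p = 2 → 1 < u → μ = 3 ∧ q = 3 ∧ u = 2) ∧
    (p = 2 → u = 1 → ∃ m : ℕ, μ = 2 ^ m) := by
  refine ⟨fun two_lt_p => ?_, ?_, ?_⟩
  · have odd_p : Odd p := hp.odd_of_ne_two two_lt_p.ne'
    obtain rfl : q = 2 := eq_two_of_odd_pow_add_one_eq_prime_pow odd_p hq h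
    obtain rfl : μ = 1 := eq_one_of_pow_add_one_eq_two_pow hp.one_lt hμ.ne' h
    exact ⟨rfl, rfl, prime_of_prime_add_one_eq_two_pow hp (by simpa using h)⟩
  · rintro rfl one_lt_u
    exact (two_pow_add_one_eq_pow_iff one_lt_u).mp h
  · rintro rfl rfl
    exact Nat.pow_of_pow_add_prime one_lt_two hμ.ne' (by rwa [h, pow_one])
end
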